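/- arXiv:2310.14517 — 5 statements merged into one kernel-verified Lean document; each statement's English description precedes it below -/
import Mathlib

section
/- Let d ≥ 5. There exists a constant C > 0 such that for every measurable function f : ℝ^d → [0, ∞], ( ∫_{ℝ^d} ( ∫_{ℝ^d} |x − y|^{-(3d+4)/4} f(y) dy )⁴ dx )^{1/2} ≤ C ( ∫_{ℝ^d} ( ∫_{ℝ^d} |x − y|^{-(d+4)/2} f(y)² dy )² dx )^{1/2}; that is, the squared L⁴ norm of the Riesz potential of order (d−4)/4 of f is bounded by a constant times the L² norm of the Riesz potential of order (d−4)/2 of f². -/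
/-!
Write `α = (d - 4) / 4`, so that the two kernels are `|x|^(α - d)` and `|x|^(2α - d)`, and let
`I_β g = |·|^(β - d) ∗ g`. The proof has two ingredients.

* A pointwise inequality of Carlson type (`carlson`):
  `(I_α f)⁴ ≤ c · I_α(f²) · I_{3α}(f²)`. The integral defining `I_α f` is split at distance `T`
  from `x`; Cauchy–Schwarz bounds the two pieces by `(T^α I_α(f²))^(1/2)` and
  `(T^(-α) I_{3α}(f²))^(1/2)` up to constants, and optimizing in `T` gives the claim.

* By Tonelli, `∫ I_α(f²) I_{3α}(f²)` and `∫ (I_{2α}(f²))²` are double integrals of `f(y)² f(z)²`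
  against the composed kernels `∫ |x-y|^(α-d) |x-z|^(3α-d) dx` and
  `∫ |x-y|^(2α-d) |x-z|^(2α-d) dx`. Both are comparable to `|y-z|^(4α-d)`; the upper bound for the
  first (`kernel_upper`) and the lower bound for the second (`kernel_lower`) are what is needed.
  Here `4α = d - 4 < d` gives convergence of the first kernel at infinity.

Both use only the scaling in `r` of the integrals of `|x|^p` over `|x| < r` and over `|x| ≥ r`.
-/

open MeasureTheory ENNReal

/-! ### Truncated powers and their integrals -/

/-- The power `s ^ p` truncated to `s < r`. -/
noncomputable def near (p r s : ℝ) : ℝ≥0∞ :=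
  (Set.Iio r).indicator (fun s => ENNReal.ofReal (s ^ p)) s

/-- The power `s ^ p` truncated to `s ≥ r`. -/
noncomputable def far (p r s : ℝ) : ℝ≥0∞ :=
  (Set.Ici r).indicator (fun s => ENNReal.ofReal (s ^ p)) s

@[fun_prop]
lemma measurable_near (p r : ℝ) : Measurable (near p r) :=
  Measurable.indicator (by fun_prop) measurableSet_Iio

@[fun_prop]
lemma measurable_far (p r : ℝ) : Measurable (far p r) :=
  Measurable.indicator (by fun_prop) measurableSet_Ici

lemma near_scale (p : ℝ) {r s : ℝ} (hr : 0 < r) (hs : 0 ≤ s) :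
    near p r (r * s) = ENNReal.ofReal (r ^ p) * near p 1 s := by
  have h : r * s < r ↔ s < 1 := by rw [mul_lt_iff_lt_one_right hr]
  by_cases h1 : s < 1
  · simp [near, h, h1, Real.mul_rpow hr.le hs, ENNReal.ofReal_mul (Real.rpow_nonneg hr.le p)]
  · simp [near, h, h1]

lemma far_scale (p : ℝ) {r s : ℝ} (hr : 0 < r) (hs : 0 ≤ s) :
    far p r (r * s) = ENNReal.ofReal (r ^ p) * far p 1 s := by
  have h : r ≤ r * s ↔ 1 ≤ s := by rw [le_mul_iff_one_le_right hr]
  by_cases h1 : 1 ≤ s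
  · simp [far, h, h1, Real.mul_rpow hr.le hs, ENNReal.ofReal_mul (Real.rpow_nonneg hr.le p)]
  · simp [far, h, h1]

lemma lintegral_norm_scale {d : ℕ} (g : ℝ → ℝ≥0∞) (hg : Measurable g) {r : ℝ} (hr : 0 < r) :
    ∫⁻ x : EuclideanSpace ℝ (Fin d), g ‖x‖ =
      ENNReal.ofReal (r ^ (d : ℝ)) * ∫⁻ x : EuclideanSpace ℝ (Fin d), g (r * ‖x‖) := by
  have h := Measure.map_addHaar_smul (volume : Measure (EuclideanSpace ℝ (Fin d))) hr.ne'
  have h2 : ∫⁻ x : EuclideanSpace ℝ (Fin d), g (r * ‖x‖) =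
      ∫⁻ x, g ‖x‖ ∂(Measure.map (r • ·) (volume : Measure (EuclideanSpace ℝ (Fin d)))) := by
    rw [lintegral_map (by fun_prop) (by fun_prop)]
    simp [norm_smul, abs_of_pos hr]
  rw [h2, h, lintegral_smul_measure, smul_eq_mul, ← mul_assoc, finrank_euclideanSpace_fin,
    ← ENNReal.ofReal_mul (by positivity), abs_of_pos (by positivity), Real.rpow_natCast,
    mul_inv_cancel₀ (by positivity)]
  simp

lemma lintegral_near {d : ℕ} (p : ℝ) {r : ℝ} (hr : 0 < r) (a : EuclideanSpace ℝ (Fin d)) :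
    ∫⁻ x, near p r ‖x - a‖ =
      (∫⁻ x : EuclideanSpace ℝ (Fin d), near p 1 ‖x‖) * ENNReal.ofReal (r ^ (p + d)) := by
  rw [lintegral_sub_right_eq_self (fun x => near p r ‖x‖) a,
    lintegral_norm_scale _ (by fun_prop) hr]
  simp_rw [near_scale p hr (norm_nonneg _)]
  rw [lintegral_const_mul _ (by fun_prop), Real.rpow_add hr, ENNReal.ofReal_mul (by positivity)]
  ring

lemma lintegral_far {d : ℕ} (p : ℝ) {r : ℝ} (hr : 0 < r) (a : EuclideanSpace ℝ (Fin d)) :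
    ∫⁻ x, far p r ‖x - a‖ =
      (∫⁻ x : EuclideanSpace ℝ (Fin d), far p 1 ‖x‖) * ENNReal.ofReal (r ^ (p + d)) := by
  rw [lintegral_sub_right_eq_self (fun x => far p r ‖x‖) a,
    lintegral_norm_scale _ (by fun_prop) hr]
  simp_rw [far_scale p hr (norm_nonneg _)]
  rw [lintegral_const_mul _ (by fun_prop), Real.rpow_add hr, ENNReal.ofReal_mul (by positivity)]
  ring

lemma lintegral_near_ne_top {d : ℕ} (hd : 0 < d) {p : ℝ} (hp : -(d : ℝ) < p) :
    ∫⁻ x : EuclideanSpace ℝ (Fin d), near p 1 ‖x‖ ≠ ⊤ := by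
  have : Nonempty (Fin d) := ⟨⟨0, hd⟩⟩
  have hint : Integrable (fun x : EuclideanSpace ℝ (Fin d) =>
      (Set.Iio (1 : ℝ)).indicator (fun s => s ^ p) ‖x‖) := by
    rw [integrable_fun_norm_addHaar volume, finrank_euclideanSpace_fin]
    have h0 : IntegrableOn (fun s : ℝ => s ^ ((d : ℝ) - 1 + p)) (Set.Ioo 0 1) :=
      (intervalIntegral.integrableOn_Ioo_rpow_iff one_pos).2 (by linarith)
    have h1 := (integrable_indicator_iff measurableSet_Ioo).2 h0
    refine h1.integrableOn.congr_fun (fun s (hs : 0 < s) => ?_) measurableSet_Ioi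
    by_cases h : s < 1
    · simp [h, hs, Real.rpow_add hs, ← Nat.cast_pred hd]
    · simp [h]
  refine ne_of_eq_of_ne (lintegral_congr fun x => ?_) hint.lintegral_lt_top.ne
  by_cases h : ‖x‖ < 1 <;> simp [near, h]

lemma lintegral_far_ne_top {d : ℕ} (hd : 0 < d) {p : ℝ} (hp : p < -(d : ℝ)) :
    ∫⁻ x : EuclideanSpace ℝ (Fin d), far p 1 ‖x‖ ≠ ⊤ := by
  have : Nonempty (Fin d) := ⟨⟨0, hd⟩⟩
  have hint : Integrable (fun x : EuclideanSpace ℝ (Fin d) =>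
      (Set.Ici (1 : ℝ)).indicator (fun s => s ^ p) ‖x‖) := by
    rw [integrable_fun_norm_addHaar volume, finrank_euclideanSpace_fin]
    have h0 : IntegrableOn (fun s : ℝ => s ^ ((d : ℝ) - 1 + p)) (Set.Ici 1) :=
      (integrableOn_Ici_iff_integrableOn_Ioi (by simp)).2
        (integrableOn_Ioi_rpow_of_lt (by linarith) one_pos)
    have h1 := (integrable_indicator_iff measurableSet_Ici).2 h0
    refine h1.integrableOn.congr_fun (fun s (hs : 0 < s) => ?_) measurableSet_Ioi
    by_cases h : 1 ≤ s
    · simp [h, Real.rpow_add hs, ← Nat.cast_pred hd]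
    · simp [h]
  refine ne_of_eq_of_ne (lintegral_congr fun x => ?_) hint.lintegral_lt_top.ne
  by_cases h : 1 ≤ ‖x‖ <;> simp [far, h]

lemma lintegral_near_ne_zero {d : ℕ} (hd : 0 < d) (p : ℝ) :
    ∫⁻ x : EuclideanSpace ℝ (Fin d), near p 1 ‖x‖ ≠ 0 := by
  have : Nonempty (Fin d) := ⟨⟨0, hd⟩⟩
  intro h
  rw [lintegral_eq_zero_iff (by fun_prop)] at h
  have h2 : ∀ᵐ x : EuclideanSpace ℝ (Fin d), x ∉ Metric.ball 0 1 := by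
    filter_upwards [h, Measure.ae_ne volume 0] with x hx hx0 hb
    have hb' : ‖x‖ < 1 := by simpa using hb
    have : 0 < ‖x‖ ^ p := Real.rpow_pos_of_pos (norm_pos_iff.2 hx0) p
    simp [near, hb'] at hx
    linarith
  exact (Metric.measure_ball_pos volume (0 : EuclideanSpace ℝ (Fin d)) one_pos).ne'
    (measure_eq_zero_iff_ae_notMem.2 h2)

/-- Optimization over the parameter `l`, with minimizer `l = √(Q / P)`. The degenerate cases
`P = 0` and `Q = 0` have to be handled separately because the other factor may be infinite. -/
lemma sq_le_of_forall {c P Q u : ℝ≥0∞} (h : ∀ l : ℝ, 0 < l →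
    u ^ 2 ≤ c * (ENNReal.ofReal l * P + ENNReal.ofReal l⁻¹ * Q))
    (hP : P = 0 → u = 0) (hQ : Q = 0 → u = 0) : u ^ 4 ≤ (2 * c) ^ 2 * (P * Q) := by
  by_cases hP0 : P = 0
  · simp [hP hP0]
  by_cases hQ0 : Q = 0
  · simp [hQ hQ0]
  by_cases hc : c = 0
  · have := h 1 one_pos
    simp only [hc, zero_mul, nonpos_iff_eq_zero, ne_eq, OfNat.ofNat_ne_zero, not_false_eq_true,
      pow_eq_zero_iff] at this
    simp [this]
  by_cases hPt : P = ⊤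
  · simp [hPt, hQ0, hc, ENNReal.mul_top]
  by_cases hQt : Q = ⊤
  · simp [hQt, hP0, hc, ENNReal.mul_top]
  lift P to NNReal using hPt
  lift Q to NNReal using hQt
  have hp : 0 < (P : ℝ) := by
    exact_mod_cast pos_iff_ne_zero.2 (by simpa using hP0)
  have hq : 0 < (Q : ℝ) := by
    exact_mod_cast pos_iff_ne_zero.2 (by simpa using hQ0)
  have hsp := Real.sqrt_pos.2 hp
  have hsq := Real.sqrt_pos.2 hq
  have h1 := h (√Q / √P) (by positivity)
  have e1 : √(Q : ℝ) / √P * P = √P * √Q := by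
    field_simp; rw [Real.sq_sqrt hp.le]
  have e2 : (√(Q : ℝ) / √P)⁻¹ * Q = √P * √Q := by
    field_simp; rw [Real.sq_sqrt hq.le]
  rw [← ENNReal.ofReal_coe_nnreal, ← ENNReal.ofReal_coe_nnreal,
    ← ENNReal.ofReal_mul (by positivity), ← ENNReal.ofReal_mul (by positivity), e1, e2] at h1
  have e3 : (P : ℝ≥0∞) * Q = ENNReal.ofReal (√P * √Q) ^ 2 := by
    rw [← ENNReal.ofReal_pow (by positivity), mul_pow, Real.sq_sqrt hp.le, Real.sq_sqrt hq.le,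
      ENNReal.ofReal_mul hp.le, ENNReal.ofReal_coe_nnreal, ENNReal.ofReal_coe_nnreal]
  calc u ^ 4 = (u ^ 2) ^ 2 := by ring
    _ ≤ (c * (ENNReal.ofReal (√P * √Q) + ENNReal.ofReal (√P * √Q))) ^ 2 := by gcongr
    _ = _ := by rw [e3]; ring

/-- The Cauchy–Schwarz inequality in `[0, ∞]`. -/
lemma lintegral_mul_sq_le {X : Type*} [MeasurableSpace X] {μ : Measure X} {F G : X → ℝ≥0∞}
    (hF : AEMeasurable F μ) (hG : AEMeasurable G μ) :
    (∫⁻ x, F x * G x ∂μ) ^ 2 ≤ (∫⁻ x, F x ^ 2 ∂μ) * ∫⁻ x, G x ^ 2 ∂μ := by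
  have h := ENNReal.lintegral_mul_le_Lp_mul_Lq μ Real.HolderConjugate.two_two hF hG
  simp only [Pi.mul_apply, ENNReal.rpow_ofNat] at h
  calc _ ≤ ((∫⁻ x, F x ^ 2 ∂μ) ^ (1 / (2:ℝ)) * (∫⁻ x, G x ^ 2 ∂μ) ^ (1 / (2:ℝ))) ^ 2 := by
        gcongr
    _ = _ := by
        rw [mul_pow, ← ENNReal.rpow_natCast, ← ENNReal.rpow_natCast, ← ENNReal.rpow_mul,
          ← ENNReal.rpow_mul]
        norm_num

lemma lintegral_near' {d : ℕ} (p : ℝ) {r : ℝ} (hr : 0 < r) (a : EuclideanSpace ℝ (Fin d)) :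
    ∫⁻ x, near p r ‖a - x‖ =
      (∫⁻ x : EuclideanSpace ℝ (Fin d), near p 1 ‖x‖) * ENNReal.ofReal (r ^ (p + d)) := by
  simp_rw [norm_sub_rev a, lintegral_near p hr]

lemma lintegral_far' {d : ℕ} (p : ℝ) {r : ℝ} (hr : 0 < r) (a : EuclideanSpace ℝ (Fin d)) :
    ∫⁻ x, far p r ‖a - x‖ =
      (∫⁻ x : EuclideanSpace ℝ (Fin d), far p 1 ‖x‖) * ENNReal.ofReal (r ^ (p + d)) := by
  simp_rw [norm_sub_rev a, lintegral_far p hr]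

lemma ofReal_rpow_half_sq (p : ℝ) {s : ℝ} (hs : 0 ≤ s) :
    ENNReal.ofReal (s ^ (p / 2)) ^ 2 = ENNReal.ofReal (s ^ p) := by
  rw [← ENNReal.ofReal_pow (by positivity), ← Real.rpow_mul_natCast hs]
  norm_num

lemma near_half_sq (p r : ℝ) {s : ℝ} (hs : 0 ≤ s) : near (p / 2) r s ^ 2 = near p r s := by
  by_cases h : s < r
  · simp [near, h, ofReal_rpow_half_sq p hs]
  · simp [near, h]

lemma far_half_sq (p r : ℝ) {s : ℝ} (hs : 0 ≤ s) : far (p / 2) r s ^ 2 = far p r s := by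
  by_cases h : r ≤ s
  · simp [far, h, ofReal_rpow_half_sq p hs]
  · simp [far, h]

lemma near_add {p q : ℝ} (h0 : p + q ≠ 0) (r : ℝ) {s : ℝ} (hs : 0 ≤ s) :
    near (p + q) r s = ENNReal.ofReal (s ^ p) * near q r s := by
  by_cases h : s < r
  · simp [near, h, Real.rpow_add' hs h0, ENNReal.ofReal_mul (Real.rpow_nonneg hs p)]
  · simp [near, h]

lemma far_add {p q : ℝ} (h0 : p + q ≠ 0) (r : ℝ) {s : ℝ} (hs : 0 ≤ s) :
    far (p + q) r s = ENNReal.ofReal (s ^ p) * far q r s := by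
  by_cases h : r ≤ s
  · simp [far, h, Real.rpow_add' hs h0, ENNReal.ofReal_mul (Real.rpow_nonneg hs p)]
  · simp [far, h]

lemma near_add_far (p r s : ℝ) : near p r s + far p r s = ENNReal.ofReal (s ^ p) := by
  by_cases h : s < r
  · simp [near, far, h]
  · simp [near, far, h, not_lt.1 h]

/-! ### The pointwise Carlson-type inequality -/

/-- If some potential of `f ^ 2` vanishes at one point then `f = 0` almost everywhere, so every
potential of `f` vanishes there. -/
lemma potential_eq_zero {d : ℕ} (hd : 0 < d) (p q : ℝ) {f : EuclideanSpace ℝ (Fin d) → ℝ≥0∞}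
    (hf : Measurable f) (x : EuclideanSpace ℝ (Fin d))
    (h : ∫⁻ y, ENNReal.ofReal (‖x - y‖ ^ p) * f y ^ 2 = 0) :
    ∫⁻ y, ENNReal.ofReal (‖x - y‖ ^ q) * f y = 0 := by
  have : Nonempty (Fin d) := ⟨⟨0, hd⟩⟩
  rw [lintegral_eq_zero_iff (by fun_prop)] at h ⊢
  filter_upwards [h, Measure.ae_ne volume x] with y hy hyx
  have : 0 < ‖x - y‖ ^ p := Real.rpow_pos_of_pos (norm_pos_iff.2 (sub_ne_zero.2 hyx.symm)) p
  simp only [Pi.zero_apply, mul_eq_zero, ENNReal.ofReal_eq_zero, not_le.2 this, false_or,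
    pow_eq_zero_iff two_ne_zero] at hy
  simp [hy]

/-- The pointwise bound `(I_α f)⁴ ≤ c · I_α(f²) · I_{3α}(f²)`. -/
lemma carlson {d : ℕ} (hd : 0 < d) {α : ℝ} (hα : 0 < α) (hαd : α < d) :
    ∃ c : ℝ≥0∞, c ≠ ⊤ ∧ ∀ f : EuclideanSpace ℝ (Fin d) → ℝ≥0∞, Measurable f → ∀ x,
      (∫⁻ y, ENNReal.ofReal (‖x - y‖ ^ (α - d)) * f y) ^ 4 ≤
        c * ((∫⁻ y, ENNReal.ofReal (‖x - y‖ ^ (α - d)) * f y ^ 2) *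
          ∫⁻ y, ENNReal.ofReal (‖x - y‖ ^ (3 * α - d)) * f y ^ 2) := by
  set A := ∫⁻ x : EuclideanSpace ℝ (Fin d), near (α - d) 1 ‖x‖ with hA
  set B := ∫⁻ x : EuclideanSpace ℝ (Fin d), far (-α - d) 1 ‖x‖ with hB
  have hAt : A ≠ ⊤ := lintegral_near_ne_top hd (by linarith)
  have hBt : B ≠ ⊤ := lintegral_far_ne_top hd (by linarith)
  refine ⟨(2 * (2 * (A + B))) ^ 2, by finiteness, fun f hf x => ?_⟩
  refine sq_le_of_forall (fun l hl => ?_) (potential_eq_zero hd _ _ hf x)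
    (potential_eq_zero hd _ _ hf x)
  set P := ∫⁻ y, ENNReal.ofReal (‖x - y‖ ^ (α - d)) * f y ^ 2
  set Q := ∫⁻ y, ENNReal.ofReal (‖x - y‖ ^ (3 * α - d)) * f y ^ 2
  -- The splitting radius is chosen so that the near part scales like `T ^ α = l`.
  set T : ℝ := l ^ α⁻¹ with hT
  have hT0 : 0 < T := by positivity
  have hTα : T ^ α = l := Real.rpow_inv_rpow hl.le hα.ne'
  have h1 : (∫⁻ y, near (α - d) T ‖x - y‖ * f y) ^ 2 ≤ P * (A * ENNReal.ofReal l) := by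
    calc _ = (∫⁻ y, (ENNReal.ofReal (‖x - y‖ ^ ((α - d) / 2)) * f y) *
          near ((α - d) / 2) T ‖x - y‖) ^ 2 := by
          congr 1
          refine lintegral_congr fun y => ?_
          rw [← add_halves (α - d), near_add (by linarith) T (norm_nonneg _), add_halves]
          ring
      _ ≤ _ := lintegral_mul_sq_le (by fun_prop) (by fun_prop)
      _ = _ := by
          simp_rw [mul_pow, near_half_sq _ _ (norm_nonneg _),
            ofReal_rpow_half_sq _ (norm_nonneg _), lintegral_near' _ hT0, sub_add_cancel, hTα]
          rfl
  have h2 : (∫⁻ y, far (α - d) T ‖x - y‖ * f y) ^ 2 ≤ Q * (B * ENNReal.ofReal l⁻¹) := by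
    calc _ = (∫⁻ y, (ENNReal.ofReal (‖x - y‖ ^ ((3 * α - d) / 2)) * f y) *
          far ((-α - d) / 2) T ‖x - y‖) ^ 2 := by
          congr 1
          refine lintegral_congr fun y => ?_
          have e : α - d = (3 * α - d) / 2 + (-α - d) / 2 := by ring
          rw [e, far_add (by linarith) T (norm_nonneg _)]
          ring
      _ ≤ _ := lintegral_mul_sq_le (by fun_prop) (by fun_prop)
      _ = _ := by
          simp_rw [mul_pow, far_half_sq _ _ (norm_nonneg _),
            ofReal_rpow_half_sq _ (norm_nonneg _), lintegral_far' _ hT0, sub_add_cancel,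
            Real.rpow_neg hT0.le, hTα]
          rfl
  have h3 : ∫⁻ y, ENNReal.ofReal (‖x - y‖ ^ (α - d)) * f y =
      (∫⁻ y, near (α - d) T ‖x - y‖ * f y) + ∫⁻ y, far (α - d) T ‖x - y‖ * f y := by
    rw [← lintegral_add_left (by fun_prop)]
    simp_rw [← add_mul, near_add_far]
  rw [h3]
  calc _ ≤ 2 * ((∫⁻ y, near (α - d) T ‖x - y‖ * f y) ^ 2 +
        (∫⁻ y, far (α - d) T ‖x - y‖ * f y) ^ 2) := by
        have := ENNReal.rpow_add_le_mul_rpow_add_rpow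
          (∫⁻ y, near (α - d) T ‖x - y‖ * f y) (∫⁻ y, far (α - d) T ‖x - y‖ * f y) one_le_two
        norm_num at this
        exact this
    _ ≤ 2 * (P * (A * ENNReal.ofReal l) + Q * (B * ENNReal.ofReal l⁻¹)) := by gcongr
    _ ≤ 2 * (P * ((A + B) * ENNReal.ofReal l) + Q * ((A + B) * ENNReal.ofReal l⁻¹)) := by
        gcongr
        · exact le_self_add
        · exact le_add_self
    _ = _ := by ring

/-! ### Composition of two Riesz kernels -/

/-- Upper bound for the composed kernel. With `h = |y - z| / 2`, every `x` lies within `h` of `y`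
and at least `h` from `z`, or vice versa, or at least `h` from both; in the last case the integrand
is at most the power `p + q` of the smaller of the two distances. -/
lemma kernel_upper {d : ℕ} (hd : 0 < d) {p q : ℝ} (hp : -(d : ℝ) < p) (hp0 : p < 0)
    (hq : -(d : ℝ) < q) (hq0 : q < 0) (hpq : p + q < -(d : ℝ)) :
    ∃ c : ℝ≥0∞, c ≠ ⊤ ∧ ∀ y z : EuclideanSpace ℝ (Fin d), y ≠ z →
      ∫⁻ x, ENNReal.ofReal (‖x - y‖ ^ p) * ENNReal.ofReal (‖x - z‖ ^ q) ≤
        c * ENNReal.ofReal (‖y - z‖ ^ (p + q + d)) := by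
  set A := ∫⁻ x : EuclideanSpace ℝ (Fin d), near p 1 ‖x‖ with hA
  set B := ∫⁻ x : EuclideanSpace ℝ (Fin d), near q 1 ‖x‖ with hB
  set D := ∫⁻ x : EuclideanSpace ℝ (Fin d), far (p + q) 1 ‖x‖ with hD
  have hAt : A ≠ ⊤ := lintegral_near_ne_top hd hp
  have hBt : B ≠ ⊤ := lintegral_near_ne_top hd hq
  have hDt : D ≠ ⊤ := lintegral_far_ne_top hd hpq
  refine ⟨(A + B + D + D) * ENNReal.ofReal ((1 / 2) ^ (p + q + d)), by finiteness,
    fun y z hyz => ?_⟩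
  have hR : 0 < ‖y - z‖ := norm_pos_iff.2 (sub_ne_zero.2 hyz)
  set h : ℝ := 1 / 2 * ‖y - z‖ with hh
  have hh0 : 0 < h := by positivity
  have key : ∀ x : EuclideanSpace ℝ (Fin d),
      ENNReal.ofReal (‖x - y‖ ^ p) * ENNReal.ofReal (‖x - z‖ ^ q) ≤
      near p h ‖x - y‖ * ENNReal.ofReal (h ^ q) + near q h ‖x - z‖ * ENNReal.ofReal (h ^ p)
        + far (p + q) h ‖x - y‖ + far (p + q) h ‖x - z‖ := by
    intro x
    have htri : ‖y - z‖ ≤ ‖x - y‖ + ‖x - z‖ := by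
      have := norm_sub_le_norm_sub_add_norm_sub y x z
      rwa [norm_sub_rev y x] at this
    by_cases h1 : ‖x - y‖ < h
    · have h2 : h ≤ ‖x - z‖ := by linarith
      have e : near p h ‖x - y‖ = ENNReal.ofReal (‖x - y‖ ^ p) := by simp [near, h1]
      rw [e, add_assoc, add_assoc]
      refine le_trans ?_ le_self_add
      refine mul_le_mul' le_rfl (ENNReal.ofReal_le_ofReal ?_)
      exact Real.rpow_le_rpow_of_nonpos hh0 h2 hq0.le
    by_cases h2 : ‖x - z‖ < h
    · have e : near q h ‖x - z‖ = ENNReal.ofReal (‖x - z‖ ^ q) := by simp [near, h2]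
      rw [e, add_assoc, add_comm (near p h ‖x - y‖ * _), add_assoc,
        mul_comm (ENNReal.ofReal (‖x - y‖ ^ p))]
      refine le_trans ?_ le_self_add
      refine mul_le_mul' le_rfl (ENNReal.ofReal_le_ofReal ?_)
      exact Real.rpow_le_rpow_of_nonpos hh0 (not_lt.1 h1) hp0.le
    rw [not_lt] at h1 h2
    rw [← ENNReal.ofReal_mul (by positivity)]
    rcases le_total ‖x - y‖ ‖x - z‖ with h3 | h3
    · have e : far (p + q) h ‖x - y‖ = ENNReal.ofReal (‖x - y‖ ^ (p + q)) := by simp [far, h1]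
      rw [e, add_right_comm]
      refine le_trans (ENNReal.ofReal_le_ofReal ?_) le_add_self
      rw [Real.rpow_add (by linarith)]
      gcongr ?_ * ?_
      exact Real.rpow_le_rpow_of_nonpos (by linarith) h3 hq0.le
    · have e : far (p + q) h ‖x - z‖ = ENNReal.ofReal (‖x - z‖ ^ (p + q)) := by simp [far, h2]
      rw [e]
      refine le_trans (ENNReal.ofReal_le_ofReal ?_) le_add_self
      rw [Real.rpow_add (by linarith)]
      gcongr ?_ * ?_
      exact Real.rpow_le_rpow_of_nonpos (by linarith) h3 hp0.le
  refine (lintegral_mono key).trans (le_of_eq ?_)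
  rw [lintegral_add_right _ (by fun_prop), lintegral_add_right _ (by fun_prop),
    lintegral_add_right _ (by fun_prop), lintegral_mul_const _ (by fun_prop),
    lintegral_mul_const _ (by fun_prop), lintegral_near _ hh0, lintegral_near _ hh0,
    lintegral_far _ hh0, lintegral_far _ hh0, mul_assoc, mul_assoc, mul_assoc,
    ← ENNReal.ofReal_mul (by positivity), ← ENNReal.ofReal_mul (by positivity),
    ← ENNReal.ofReal_mul (by positivity), ← Real.rpow_add hh0, ← Real.rpow_add hh0,
    ← Real.mul_rpow (by norm_num) hR.le, ← hh]
  rw [show p + d + q = p + q + d by ring, show q + d + p = p + q + d by ring]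
  ring

/-- Lower bound for the composed kernel, obtained by keeping only the points `x` of the ball
centred at `y` of radius `|y - z|`, where `|x - z| ≤ 2 |y - z|`. -/
lemma kernel_lower {d : ℕ} (hd : 0 < d) {p : ℝ} (hp : -(d : ℝ) < p) (hp0 : p < 0) :
    ∃ c : ℝ≥0∞, c ≠ ⊤ ∧ ∀ y z : EuclideanSpace ℝ (Fin d), y ≠ z →
      ENNReal.ofReal (‖y - z‖ ^ (p + p + d)) ≤
      c * ∫⁻ x, ENNReal.ofReal (‖x - y‖ ^ p) * ENNReal.ofReal (‖x - z‖ ^ p) := by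
  set A := ∫⁻ x : EuclideanSpace ℝ (Fin d), near p 1 ‖x‖ with hA
  have hAt : A ≠ ⊤ := lintegral_near_ne_top hd hp
  have hA0 : A ≠ 0 := lintegral_near_ne_zero hd p
  have h2p : (0 : ℝ) < 2 ^ p := by positivity
  refine ⟨(A * ENNReal.ofReal (2 ^ p))⁻¹, by simp [hA0, h2p], fun y z hyz => ?_⟩
  have hR : 0 < ‖y - z‖ := norm_pos_iff.2 (sub_ne_zero.2 hyz)
  rw [mul_comm, ← div_eq_mul_inv, ENNReal.le_div_iff_mul_le (by simp [hA0, h2p])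
    (Or.inl (by finiteness))]
  have key : ∀ x : EuclideanSpace ℝ (Fin d),
      near p ‖y - z‖ ‖x - y‖ * ENNReal.ofReal ((2 * ‖y - z‖) ^ p) ≤
      ENNReal.ofReal (‖x - y‖ ^ p) * ENNReal.ofReal (‖x - z‖ ^ p) := by
    intro x
    by_cases h1 : ‖x - y‖ < ‖y - z‖
    · have e : near p ‖y - z‖ ‖x - y‖ = ENNReal.ofReal (‖x - y‖ ^ p) := by simp [near, h1]
      rw [e]
      refine mul_le_mul' le_rfl (ENNReal.ofReal_le_ofReal ?_)
      have h2 := norm_sub_le_norm_sub_add_norm_sub x y z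
      have h3 := norm_sub_le_norm_sub_add_norm_sub y x z
      rw [norm_sub_rev y x] at h3
      exact Real.rpow_le_rpow_of_nonpos (by linarith) (by linarith) hp0.le
    · simp [near, h1]
  refine le_trans (le_of_eq ?_) (lintegral_mono key)
  rw [lintegral_mul_const _ (by fun_prop), lintegral_near _ hR, Real.mul_rpow zero_le_two hR.le,
    show p + p + (d : ℝ) = p + d + p by ring, Real.rpow_add hR (p + d),
    ENNReal.ofReal_mul (by positivity), ENNReal.ofReal_mul (by positivity)]
  ring

/-- Tonelli: the integral of a product of two potentials in terms of the composed kernel. -/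
lemma lintegral_potential_mul {d : ℕ} (p q : ℝ) {g : EuclideanSpace ℝ (Fin d) → ℝ≥0∞}
    (hg : Measurable g) :
    ∫⁻ x, (∫⁻ y, ENNReal.ofReal (‖x - y‖ ^ p) * g y) * ∫⁻ z, ENNReal.ofReal (‖x - z‖ ^ q) * g z =
      ∫⁻ y, ∫⁻ z, (∫⁻ x, ENNReal.ofReal (‖x - y‖ ^ p) * ENNReal.ofReal (‖x - z‖ ^ q)) *
        (g y * g z) := by
  calc _ = ∫⁻ x, ∫⁻ y, ∫⁻ z, ENNReal.ofReal (‖x - y‖ ^ p) * g y *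
        (ENNReal.ofReal (‖x - z‖ ^ q) * g z) := by
        refine lintegral_congr fun x => ?_
        rw [← lintegral_mul_const _ (by fun_prop)]
        refine lintegral_congr fun y => ?_
        rw [← lintegral_const_mul _ (by fun_prop)]
    _ = ∫⁻ y, ∫⁻ x, ∫⁻ z, ENNReal.ofReal (‖x - y‖ ^ p) * g y *
        (ENNReal.ofReal (‖x - z‖ ^ q) * g z) := by
        apply lintegral_lintegral_swap
        apply Measurable.aemeasurable
        apply Measurable.lintegral_prod_right
        fun_prop
    _ = _ := by
        refine lintegral_congr fun y => ?_
        rw [lintegral_lintegral_swap (by fun_prop)]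
        refine lintegral_congr fun z => ?_
        rw [← lintegral_mul_const _ (by fun_prop)]
        refine lintegral_congr fun x => ?_
        ring

/-! ### The norm inequality -/

/-- For `d ≥ 5`, the squared `L⁴` norm of the Riesz potential of order `(d-4)/4`
of a nonnegative `f` is bounded by a constant times the `L²` norm of the Riesz
potential of order `(d-4)/2` of `f²`, as an inequality in `[0,∞]`. -/
theorem riesz_potential_L4_sq_le (d : ℕ) (hd : 5 ≤ d) :
    ∃ C : ℝ, 0 < C ∧
      ∀ f : EuclideanSpace ℝ (Fin d) → ℝ≥0∞, Measurable f →
        (∫⁻ x, (∫⁻ y, ENNReal.ofReal (‖x - y‖ ^ (-((3 * (d : ℝ) + 4) / 4))) * f y) ^ 4)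
            ^ ((1 : ℝ) / 2)
          ≤ ENNReal.ofReal C *
            (∫⁻ x, (∫⁻ y, ENNReal.ofReal (‖x - y‖ ^ (-(((d : ℝ) + 4) / 2))) * (f y) ^ 2) ^ 2)
              ^ ((1 : ℝ) / 2) := by
  have hd5 : (5 : ℝ) ≤ d := by exact_mod_cast hd
  have hd0 : 0 < d := by omega
  have : Nonempty (Fin d) := ⟨⟨0, hd0⟩⟩
  obtain ⟨α, hα⟩ : ∃ α : ℝ, α = ((d : ℝ) - 4) / 4 := ⟨_, rfl⟩
  rw [show -((3 * (d : ℝ) + 4) / 4) = α - d by rw [hα]; ring,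
    show -(((d : ℝ) + 4) / 2) = 2 * α - d by rw [hα]; ring]
  obtain ⟨c₁, hc₁, h₁⟩ := carlson hd0 (α := α) (by linarith) (by linarith)
  obtain ⟨c₂, hc₂, h₂⟩ := kernel_upper hd0 (p := α - d) (q := 3 * α - d) (by linarith)
    (by linarith) (by linarith) (by linarith) (by linarith)
  obtain ⟨c₃, hc₃, h₃⟩ := kernel_lower hd0 (p := 2 * α - d) (by linarith) (by linarith)
  have hexp : α - d + (3 * α - d) + d = 2 * α - d + (2 * α - d) + (d : ℝ) := by ring
  have hct : (c₁ * (c₂ * c₃)) ^ ((1 : ℝ) / 2) ≠ ⊤ := by finiteness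
  refine ⟨((c₁ * (c₂ * c₃)) ^ ((1 : ℝ) / 2)).toReal + 1, by positivity, fun f hf => ?_⟩
  have main : ∫⁻ x, (∫⁻ y, ENNReal.ofReal (‖x - y‖ ^ (α - d)) * f y) ^ 4 ≤
      c₁ * (c₂ * c₃) * ∫⁻ x, (∫⁻ y, ENNReal.ofReal (‖x - y‖ ^ (2 * α - d)) * f y ^ 2) ^ 2 := by
    refine (lintegral_mono (h₁ f hf)).trans ?_
    rw [lintegral_const_mul' _ _ hc₁, mul_assoc]
    gcongr
    simp_rw [sq (∫⁻ y, _)]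
    rw [lintegral_potential_mul _ _ (hf.pow_const 2), lintegral_potential_mul _ _ (hf.pow_const 2),
      ← lintegral_const_mul' _ _ (by finiteness)]
    refine lintegral_mono fun y => ?_
    rw [← lintegral_const_mul' _ _ (by finiteness)]
    refine lintegral_mono_ae ?_
    filter_upwards [Measure.ae_ne volume y] with z hz
    rw [← mul_assoc (c₂ * c₃)]
    refine mul_le_mul' ?_ le_rfl
    refine (h₂ y z hz.symm).trans ?_
    rw [mul_assoc, hexp]
    gcongr
    exact h₃ y z hz.symm
  refine (ENNReal.rpow_le_rpow main (by norm_num)).trans ?_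
  rw [ENNReal.mul_rpow_of_nonneg _ _ (by norm_num)]
  gcongr
  rw [← ENNReal.ofReal_toReal hct]
  exact ENNReal.ofReal_le_ofReal (by simp)
end

section
/- Let d ≥ 5. There exists a constant C > 0 such that for every measurable function f : ℝ^d → [0, ∞], ∫_{ℝ^d} ( ∫_{ℝ^d} |x − y|^{-(3d+4)/4} f(y) dy )⁴ dx ≤ C ∬_{ℝ^d×ℝ^d} f(x)² f(y)² |x − y|^{-4} dx dy; that is, the fourth power of the L⁴ norm of the Riesz potential of order (d−4)/4 of f is controlled by the Hartree potential energy of f. -/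
open MeasureTheory ENNReal

/-!
Write `a = (3d+4)/4`, `F = |·|^{-a} ∗ f` and `J = |·|^{-(2a-d)} ∗ f²`; then `d/2 < a < d`. The
inequality follows from the two estimates

* `∫ F⁴ ≤ C ∫ J F²` (`lintegral_rpot_pow_four_le`),
* `∫ J² ≤ C ∬ f(y)² f(z)² |y - z|^{-4}` (`lintegral_rpot_sq_le`).

By Young's inequality the first one gives `∫ F⁴ ≤ 4 C² ∫ J²` whenever the left-hand side is finite
(`absorb_pow_four`). This is the case for `f` bounded with bounded support, and the general case
follows by monotone convergence. The second estimate is the bound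
`|·|^{-α} ∗ |·|^{-α} ≲ |·|^{-(2α-d)}` with `α = 2a - d = (d+4)/2`, for which `2α - d = 4`.

For the first estimate, expand `F(x)⁴` as an integral over four points. Up to a constant, `y` may be
taken as the point nearest to `x` and `z` as the second nearest (`pow_four_lintegral_le`). If
`|x - y|` is much smaller than `|x - z|`, the three other kernels are nearly constant in `x` on a
ball about `y` of radius comparable to `|y - z|`. Since `a < d`, the mean of `|x - y|^{-a}` over this
ball is comparable to `|y - z|^{-a}`, that is, to `|x - z|^{-a}`. Hence, after integration in `x`, the
kernel `|x - y|^{-a} |x - z|^{-a}` may be replaced by `|x - z|^{-2a}` (`lintegral_pair_le`), while the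
other two points contribute at most `F(x)²`. What is left is
`∬ f(y) f(z) |x - z|^{-2a} dy dz` over `|x - y| ≤ |x - z|`, and this is `≲ J(x)` because `2a > d`
(`square_function_le`).
-/

/-! ### Power kernels and their radial integrals -/

/-- Euclidean space `ℝ^d`. -/
abbrev Sp (d : ℕ) : Type := EuclideanSpace ℝ (Fin d)

/-- The kernel `|u|^{-γ}` as an extended nonnegative number. For `γ ≠ 0` its value at the origin is
`0`, by the convention `0 ^ (-γ) = 0` for real powers, so comparisons between kernels need the
smaller vector to be nonzero. -/
noncomputable def rk {d : ℕ} (γ : ℝ) (u : Sp d) : ℝ≥0∞ := ENNReal.ofReal (‖u‖ ^ (-γ))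

@[fun_prop]
lemma measurable_rk {d : ℕ} (γ : ℝ) : Measurable (rk γ : Sp d → ℝ≥0∞) := by
  unfold rk; fun_prop

lemma rk_neg {d : ℕ} (γ : ℝ) (u : Sp d) : rk γ (-u) = rk γ u := by simp [rk]

lemma rk_sub_comm {d : ℕ} (γ : ℝ) (u v : Sp d) : rk γ (u - v) = rk γ (v - u) := by
  simp [rk, norm_sub_rev]

lemma rk_mul {d : ℕ} {α β : ℝ} (u : Sp d) (h : α + β ≠ 0) (hα : α ≠ 0) :
    rk α u * rk β u = rk (α + β) u := by
  unfold rk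
  rw [← ENNReal.ofReal_mul (by positivity)]
  rcases eq_or_ne u 0 with rfl | hu
  · have : -(α + β) ≠ 0 := neg_ne_zero.2 h
    rw [norm_zero, Real.zero_rpow this, Real.zero_rpow (neg_ne_zero.2 hα)]; simp
  · rw [← Real.rpow_add (norm_pos_iff.2 hu)]; ring_nf

/-- `|u|^{-γ}` is at most `c^γ |v|^{-γ}` when `|v| ≤ c |u|`; the hypothesis `v ≠ 0` excludes the
conventional value at the origin. -/
lemma rk_le {d : ℕ} {γ c : ℝ} (hγ : 0 ≤ γ) (hc : 0 < c) {u v : Sp d} (hv : v ≠ 0)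
    (h : ‖v‖ ≤ c * ‖u‖) : rk γ u ≤ ENNReal.ofReal (c ^ γ) * rk γ v := by
  unfold rk
  rw [← ENNReal.ofReal_mul (by positivity)]
  apply ENNReal.ofReal_le_ofReal
  have hv' := norm_pos_iff.2 hv
  have hu : 0 < ‖u‖ := by
    by_contra hu
    have : ‖u‖ = 0 := le_antisymm (not_lt.1 hu) (norm_nonneg _)
    rw [this] at h; linarith
  calc ‖u‖ ^ (-γ) = c ^ γ * (c * ‖u‖) ^ (-γ) := by
        rw [Real.mul_rpow hc.le hu.le, ← mul_assoc, ← Real.rpow_add hc]; simp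
    _ ≤ c ^ γ * ‖v‖ ^ (-γ) := by
        gcongr ?_ * ?_
        exact Real.rpow_le_rpow_of_nonpos hv' h (by linarith)

lemma lintegral_radial {d : ℕ} [NeZero d] {g : ℝ → ℝ} (hg0 : ∀ y, 0 ≤ y → 0 ≤ g y)
    (hg : IntegrableOn (fun y : ℝ ↦ y ^ (d - 1) * g y) (Set.Ioi 0)) :
    ∫⁻ x : Sp d, ENNReal.ofReal (g ‖x‖) = ENNReal.ofReal (d *
      (volume.real (Metric.ball (0 : Sp d) 1) * ∫ y in Set.Ioi (0 : ℝ), y ^ (d - 1) * g y)) := by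
  have h1 := integrable_fun_norm_addHaar (volume : Measure (Sp d)) (f := g)
  have h2 := integral_fun_norm_addHaar (volume : Measure (Sp d)) g
  simp only [finrank_euclideanSpace, Fintype.card_fin, smul_eq_mul, nsmul_eq_mul] at h1 h2
  rw [← h2, ofReal_integral_eq_lintegral_ofReal (h1.2 hg)]
  exact Filter.Eventually.of_forall fun x => hg0 _ (norm_nonneg _)

/-- Below the critical exponent the kernel is integrable near the origin, with exact scaling. -/
lemma setLIntegral_rk_ball {d : ℕ} [NeZero d] {γ : ℝ} (h : γ < d) : ∃ C : ℝ, 0 ≤ C ∧ ∀ R : ℝ, 0 < R →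
    ∫⁻ u in Metric.ball (0 : Sp d) R, rk γ u = ENNReal.ofReal (C * R ^ (d - γ)) := by
  have hd : 1 ≤ d := NeZero.one_le
  refine ⟨d * (volume.real (Metric.ball (0 : Sp d) 1) * (1 / (d - γ))), ?_, fun R hR => ?_⟩
  · have : 0 < d - γ := by linarith
    positivity
  have hpow : ∀ y ∈ Set.Ioo (0 : ℝ) R, y ^ (d - 1) * y ^ (-γ) = y ^ (d - 1 - γ) := fun y hy => by
    rw [← Real.rpow_natCast, ← Real.rpow_add hy.1]; push_cast [hd]; ring_nf
  have hi : IntegrableOn (fun y : ℝ ↦ y ^ (d - 1 - γ)) (Set.Ioo (0 : ℝ) R) := by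
    rw [intervalIntegral.integrableOn_Ioo_rpow_iff hR]; linarith
  have hi' : IntegrableOn (fun y : ℝ ↦ y ^ (d - 1) * y ^ (-γ)) (Set.Ioo (0 : ℝ) R) :=
    hi.congr_fun (fun y hy => (hpow y hy).symm) measurableSet_Ioo
  have e : (fun y : ℝ ↦ y ^ (d - 1) * (Set.Iio R).indicator (fun y => y ^ (-γ)) y) =
      (Set.Iio R).indicator (fun y : ℝ ↦ y ^ (d - 1) * y ^ (-γ)) := by
    ext y; by_cases hy : y ∈ Set.Iio R <;> simp [hy]
  have es : Set.Iio R ∩ Set.Ioi 0 = Set.Ioo 0 R := by ext; simp [and_comm]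
  have key := lintegral_radial (d := d) (g := (Set.Iio R).indicator (fun y => y ^ (-γ)))
    (fun y hy => Set.indicator_apply_nonneg fun _ => by positivity) (by
      rw [e, IntegrableOn, integrable_indicator_iff measurableSet_Iio, IntegrableOn,
        Measure.restrict_restrict measurableSet_Iio, es]; exact hi')
  rw [e, integral_indicator measurableSet_Iio, Measure.restrict_restrict measurableSet_Iio, es,
    setIntegral_congr_fun measurableSet_Ioo hpow, ← integral_Ioc_eq_integral_Ioo,
    ← intervalIntegral.integral_of_le hR.le, integral_rpow (Or.inl (by linarith)),
    Real.zero_rpow (by linarith)] at key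
  rw [← lintegral_indicator Metric.isOpen_ball.measurableSet]
  convert! key using 2
  · ext u
    by_cases hu : ‖u‖ < R <;> simp [hu, rk]
  · have : (d : ℝ) - 1 - γ + 1 = d - γ := by ring
    rw [this]; ring

/-- Above the critical exponent the kernel is integrable at infinity, with exact scaling. -/
lemma setLIntegral_rk_compl_ball {d : ℕ} [NeZero d] {γ : ℝ} (h : d < γ) : ∃ C : ℝ, 0 ≤ C ∧ ∀ R : ℝ, 0 < R →
    ∫⁻ u in {u : Sp d | R ≤ ‖u‖}, rk γ u = ENNReal.ofReal (C * R ^ (d - γ)) := by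
  have hd : 1 ≤ d := NeZero.one_le
  refine ⟨d * (volume.real (Metric.ball (0 : Sp d) 1) * (1 / (γ - d))), ?_, fun R hR => ?_⟩
  · have : 0 < γ - d := by linarith
    positivity
  have hpow : ∀ y ∈ Set.Ioi R, y ^ (d - 1) * y ^ (-γ) = y ^ (d - 1 - γ) := fun y hy => by
    rw [← Real.rpow_natCast, ← Real.rpow_add (hR.trans hy)]; push_cast [hd]; ring_nf
  have hi : IntegrableOn (fun y : ℝ ↦ y ^ (d - 1 - γ)) (Set.Ioi R) :=
    integrableOn_Ioi_rpow_of_lt (by linarith) hR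
  have hi' : IntegrableOn (fun y : ℝ ↦ y ^ (d - 1) * y ^ (-γ)) (Set.Ici R) := by
    rw [integrableOn_Ici_iff_integrableOn_Ioi]
    exact hi.congr_fun (fun y hy => (hpow y hy).symm) measurableSet_Ioi
  have e : (fun y : ℝ ↦ y ^ (d - 1) * (Set.Ici R).indicator (fun y => y ^ (-γ)) y) =
      (Set.Ici R).indicator (fun y : ℝ ↦ y ^ (d - 1) * y ^ (-γ)) := by
    ext y; by_cases hy : y ∈ Set.Ici R <;> simp [hy]
  have es : Set.Ici R ∩ Set.Ioi 0 = Set.Ici R := by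
    ext y; simp only [Set.mem_inter_iff, Set.mem_Ici, Set.mem_Ioi, and_iff_left_iff_imp]
    intro; linarith
  have key := lintegral_radial (d := d) (g := (Set.Ici R).indicator (fun y => y ^ (-γ)))
    (fun y hy => Set.indicator_apply_nonneg fun _ => by positivity) (by
      rw [e, IntegrableOn, integrable_indicator_iff measurableSet_Ici, IntegrableOn,
        Measure.restrict_restrict measurableSet_Ici, es]; exact hi')
  rw [e, integral_indicator measurableSet_Ici, Measure.restrict_restrict measurableSet_Ici, es,
    integral_Ici_eq_integral_Ioi,
    setIntegral_congr_fun measurableSet_Ioi hpow, integral_Ioi_rpow_of_lt (by linarith) hR] at key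
  rw [← lintegral_indicator (measurableSet_le measurable_const measurable_norm)]
  convert! key using 2
  · ext u
    by_cases hu : R ≤ ‖u‖ <;> simp [hu, rk]
  · have : (d : ℝ) - 1 - γ + 1 = d - γ := by ring
    have h1 : (d : ℝ) - γ ≠ 0 := by linarith
    have h2 : γ - (d : ℝ) ≠ 0 := by linarith
    have h3 : (d : ℝ) - γ = - (γ - d) := by ring
    rw [this, h3]; field_simp

/-! ### Ordering the factors of a power of an integral -/

/-- The indicator of `s ≤ t`. -/
noncomputable def lei (s t : ℝ) : ℝ≥0∞ := if s ≤ t then 1 else 0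

lemma measurable_lei : Measurable (Function.uncurry lei) :=
  Measurable.ite (measurableSet_le measurable_fst measurable_snd) measurable_const measurable_const

@[fun_prop]
lemma measurable_lei_comp {α : Type*} [MeasurableSpace α] {g h : α → ℝ} (hg : Measurable g)
    (hh : Measurable h) : Measurable fun x => lei (g x) (h x) :=
  measurable_lei.comp (hg.prodMk hh)

lemma lei_le_one (s t : ℝ) : lei s t ≤ 1 := by unfold lei; split_ifs <;> simp

lemma one_le_lei_add (s t : ℝ) : 1 ≤ lei s t + lei t s := by
  unfold lei; rcases le_total s t with h | h <;> simp [h]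

/-- Transitivity of `≤`, in terms of indicators. -/
lemma lei_mul_lei_le (s t u : ℝ) : lei s t * lei t u ≤ lei s t * lei s u := by
  unfold lei; split_ifs <;> simp; linarith

lemma lintegral_swap3 {α : Type*} [MeasurableSpace α] {μ : Measure α} [SFinite μ]
    {Φ : α → α → α → ℝ≥0∞} (h : Measurable fun p : α × α × α => Φ p.1 p.2.1 p.2.2) :
    ∫⁻ x, ∫⁻ y, ∫⁻ z, Φ x y z ∂μ ∂μ ∂μ = ∫⁻ y, ∫⁻ z, ∫⁻ x, Φ x y z ∂μ ∂μ ∂μ := by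
  rw [lintegral_lintegral_swap]
  · refine lintegral_congr fun y => ?_
    rw [lintegral_lintegral_swap]
    exact (h.comp (by fun_prop : Measurable fun p : α × α => (p.1, y, p.2))).aemeasurable
  · have : Measurable fun q : (α × α) × α => Φ q.1.1 q.1.2 q.2 :=
      h.comp (by fun_prop : Measurable fun q : (α × α) × α => (q.1.1, q.1.2, q.2))
    exact (this.lintegral_prod_right').aemeasurable

/-- Expanding the power into an integral over `n + 1` variables, up to a constant only the region
where the first variable has the smallest value of `r` matters. -/
lemma pow_lintegral_le {α : Type*} [MeasurableSpace α] {μ : Measure α} [SFinite μ]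
    {w : α → ℝ≥0∞} (hw : Measurable w) {r : α → ℝ} (hr : Measurable r) (n : ℕ) :
    (∫⁻ y, w y ∂μ) ^ (n + 1) ≤
      2 ^ n * ∫⁻ y, w y * (∫⁻ z, w z * lei (r y) (r z) ∂μ) ^ n ∂μ := by
  have hG : Measurable fun y => ∫⁻ z, w z * lei (r y) (r z) ∂μ := by
    have : Measurable fun p : α × α => w p.2 * lei (r p.1) (r p.2) := by fun_prop
    exact this.lintegral_prod_right'
  set G : α → ℝ≥0∞ := fun y => ∫⁻ z, w z * lei (r y) (r z) ∂μ with hGdef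
  have hmono : ∀ y z, lei (r z) (r y) * G y ≤ lei (r z) (r y) * G z := fun y z => by
    simp only [hGdef]
    rw [← lintegral_const_mul _ (by fun_prop), ← lintegral_const_mul _ (by fun_prop)]
    refine lintegral_mono fun t => ?_
    calc lei (r z) (r y) * (w t * lei (r y) (r t))
        = w t * (lei (r z) (r y) * lei (r y) (r t)) := by ring
      _ ≤ w t * (lei (r z) (r y) * lei (r z) (r t)) := 
        mul_le_mul_right (lei_mul_lei_le _ _ _) _
      _ = _ := by ring
  have hmonon : ∀ (n : ℕ) y z, lei (r z) (r y) * G y ^ n ≤ lei (r z) (r y) * G z ^ n := by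
    intro n y z
    have := hmono y z
    unfold lei at this ⊢
    split_ifs at this ⊢
    · simp only [one_mul] at this ⊢; gcongr
    · simp
  induction n with
  | zero => simp
  | succ n ih =>
    -- Multiply the inductive bound by one more factor `∫ w z`. Where `r y ≤ r z` the new factor
    -- contributes to `G y`; where `r z ≤ r y`, `G y ≤ G z` and `z` takes over the role of `y`.
    change _ ≤ 2 ^ (n + 1) * ∫⁻ y, w y * G y ^ (n + 1) ∂μ
    change _ ≤ 2 ^ n * ∫⁻ y, w y * G y ^ n ∂μ at ih
    have h1 : (∫⁻ y, w y * G y ^ n ∂μ) * (∫⁻ y, w y ∂μ) ≤ 2 * ∫⁻ y, w y * G y ^ (n + 1) ∂μ := by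
      calc (∫⁻ y, w y * G y ^ n ∂μ) * (∫⁻ y, w y ∂μ)
          = ∫⁻ y, ∫⁻ z, w y * G y ^ n * w z ∂μ ∂μ := by
            rw [← lintegral_mul_const _ (by fun_prop)]
            refine lintegral_congr fun y => ?_
            rw [lintegral_const_mul _ hw]
        _ ≤ ∫⁻ y, ∫⁻ z, (w y * G y ^ n * (w z * lei (r y) (r z)) +
              w y * w z * (lei (r z) (r y) * G z ^ n)) ∂μ ∂μ := by
            refine lintegral_mono fun y => lintegral_mono fun z => ?_
            calc w y * G y ^ n * w z = w y * G y ^ n * w z * 1 := by ring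
              _ ≤ w y * G y ^ n * w z * (lei (r y) (r z) + lei (r z) (r y)) := by
                gcongr; exact one_le_lei_add _ _
              _ = w y * G y ^ n * (w z * lei (r y) (r z)) +
                  w y * w z * (lei (r z) (r y) * G y ^ n) := by ring
              _ ≤ _ := add_le_add le_rfl (mul_le_mul_right (hmonon _ _ _) _)
        _ = (∫⁻ y, ∫⁻ z, w y * G y ^ n * (w z * lei (r y) (r z)) ∂μ ∂μ) +
              ∫⁻ y, ∫⁻ z, w y * w z * (lei (r z) (r y) * G z ^ n) ∂μ ∂μ := by
            rw [← lintegral_add_left]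
            · refine lintegral_congr fun y => ?_
              rw [lintegral_add_left (by fun_prop)]
            · have : Measurable fun p : α × α => w p.1 * G p.1 ^ n * (w p.2 * lei (r p.1) (r p.2)) := by
                fun_prop
              exact this.lintegral_prod_right'
        _ = (∫⁻ y, ∫⁻ z, w y * G y ^ n * (w z * lei (r y) (r z)) ∂μ ∂μ) +
              ∫⁻ z, ∫⁻ y, w y * w z * (lei (r z) (r y) * G z ^ n) ∂μ ∂μ := by
            rw [lintegral_lintegral_swap (f := fun y z => w y * w z * (lei (r z) (r y) * G z ^ n))]
            have : Measurable fun p : α × α =>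
              w p.1 * w p.2 * (lei (r p.2) (r p.1) * G p.2 ^ n) := by fun_prop
            exact this.aemeasurable
        _ = 2 * ∫⁻ y, w y * G y ^ (n + 1) ∂μ := by
            rw [two_mul]
            congr 1
            · refine lintegral_congr fun y => ?_
              rw [lintegral_const_mul _ (by fun_prop), pow_succ, mul_assoc]
            · refine lintegral_congr fun y => ?_
              rw [pow_succ, ← mul_assoc, ← lintegral_const_mul _ (by fun_prop)]
              refine lintegral_congr fun z => ?_
              ring
    calc (∫⁻ y, w y ∂μ) ^ (n + 1 + 1) = (∫⁻ y, w y ∂μ) ^ (n + 1) * (∫⁻ y, w y ∂μ) := pow_succ _ _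
      _ ≤ (2 ^ n * ∫⁻ y, w y * G y ^ n ∂μ) * (∫⁻ y, w y ∂μ) := by gcongr
      _ ≤ 2 ^ n * (2 * ∫⁻ y, w y * G y ^ (n + 1) ∂μ) := by rw [mul_assoc]; gcongr
      _ = _ := by rw [pow_succ, mul_assoc]

/-- Of the four variables in the expansion of the fourth power, `y` may be taken to have the
smallest and `z` the second smallest value of `r`. -/
lemma pow_four_lintegral_le {α : Type*} [MeasurableSpace α] {μ : Measure α} [SFinite μ]
    {w : α → ℝ≥0∞} (hw : Measurable w) {r : α → ℝ} (hr : Measurable r) :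
    (∫⁻ y, w y ∂μ) ^ 4 ≤ 32 * ∫⁻ y, ∫⁻ z, w y * w z * lei (r y) (r z) *
      (∫⁻ t, w t * lei (r z) (r t) ∂μ) ^ 2 ∂μ ∂μ := by
  have hG : Measurable fun y => ∫⁻ z, w z * lei (r y) (r z) ∂μ := by
    have : Measurable fun p : α × α => w p.2 * lei (r p.1) (r p.2) := by fun_prop
    exact this.lintegral_prod_right'
  refine (pow_lintegral_le hw hr 3).trans ?_
  have h2 : ∀ y, w y * (∫⁻ z, w z * lei (r y) (r z) ∂μ) ^ 3 ≤
      4 * ∫⁻ z, w y * w z * lei (r y) (r z) * (∫⁻ t, w t * lei (r z) (r t) ∂μ) ^ 2 ∂μ := by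
    intro y
    have h3 := pow_lintegral_le (μ := μ) (w := fun z => w z * lei (r y) (r z))
      (by fun_prop) hr 2
    calc _ ≤ _ := mul_le_mul_right h3 (w y)
      _ = 4 * ∫⁻ z, w y * (w z * lei (r y) (r z) *
          (∫⁻ t, w t * lei (r y) (r t) * lei (r z) (r t) ∂μ) ^ 2) ∂μ := by
        rw [lintegral_const_mul]
        · ring
        · have : Measurable fun p : α × α =>
              w p.2 * lei (r y) (r p.2) * lei (r p.1) (r p.2) := by fun_prop
          have h5 := this.lintegral_prod_right' (ν := μ)
          dsimp only at h5
          fun_prop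
      _ ≤ _ := by
        refine mul_le_mul_right (lintegral_mono fun z => ?_) _
        dsimp only
        rw [← mul_assoc, ← mul_assoc]
        gcongr with t
        exact mul_le_of_le_one_right' (lei_le_one _ _)
  calc _ ≤ 2 ^ 3 * ∫⁻ y, 4 * ∫⁻ z, w y * w z * lei (r y) (r z) *
      (∫⁻ t, w t * lei (r z) (r t) ∂μ) ^ 2 ∂μ ∂μ := 
      mul_le_mul_right (lintegral_mono h2) _
    _ = _ := by
      rw [lintegral_const_mul, ← mul_assoc]
      · norm_num
      · have : Measurable fun p : α × α => w p.1 * w p.2 * lei (r p.1) (r p.2) *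
          (∫⁻ t, w t * lei (r p.2) (r t) ∂μ) ^ 2 := by fun_prop
        exact this.lintegral_prod_right'

/-! ### Convolution of two kernels, and the energy as an `L²` norm -/

lemma ae_ne_point {d : ℕ} [NeZero d] (x : Sp d) : ∀ᵐ y : Sp d, y ≠ x :=
  compl_mem_ae_iff.2 (measure_singleton x)

lemma ofReal_mul_rpow_norm {d : ℕ} {C c e : ℝ} (hC : 0 ≤ C) (hc : 0 ≤ c) (u : Sp d) :
    ENNReal.ofReal (C * (c * ‖u‖) ^ (-e)) = ENNReal.ofReal (C * c ^ (-e)) * rk e u := by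
  rw [Real.mul_rpow hc (norm_nonneg _), ← mul_assoc, ENNReal.ofReal_mul (by positivity), rk]

/-- The convolution of `|·|^{-α}` with itself is bounded by a multiple of `|·|^{-(2α-d)}`. -/
lemma lintegral_rk_mul_rk_le {d : ℕ} [NeZero d] {α : ℝ} (h1 : α < d) (h2 : d < 2 * α) :
    ∃ C : ℝ≥0∞, C ≠ ∞ ∧ ∀ y z : Sp d, y ≠ z →
      ∫⁻ x, rk α (x - y) * rk α (x - z) ≤ C * rk (2 * α - d) (y - z) := by
  obtain ⟨C1, hC1, H1⟩ := setLIntegral_rk_ball h1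
  obtain ⟨C2, hC2, H2⟩ := setLIntegral_rk_compl_ball h2
  have hα : 0 < α := by have : (0 : ℝ) ≤ d := Nat.cast_nonneg d; linarith
  set D1 := ENNReal.ofReal (2 ^ α) * ENNReal.ofReal (C1 * (1 / 2) ^ (-(α - d)))
  set D2 := ENNReal.ofReal (C2 * (1 / 2) ^ (-(2 * α - d)))
  refine ⟨2 * (D1 + D2), by finiteness, fun y z hyz => ?_⟩
  set R := 1 / 2 * ‖y - z‖ with hR
  have hyz' : y - z ≠ 0 := sub_ne_zero.2 hyz
  have hyzp : 0 < ‖y - z‖ := norm_pos_iff.2 hyz'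
  have hRp : 0 < R := by positivity
  -- `φ` dominates the integrand in the two half-size balls around `y` and `z`, where the other
  -- factor is at most `c`, and outside both balls, where the larger factor is squared.
  set c := ENNReal.ofReal (2 ^ α) * rk α (y - z) with hc
  set φ : Sp d → ℝ≥0∞ := fun u => (Metric.ball 0 R).indicator (fun u => c * rk α u) u +
    {u : Sp d | R ≤ ‖u‖}.indicator (rk (2 * α)) u with hφ
  have mball : MeasurableSet (Metric.ball (0 : Sp d) R) := Metric.isOpen_ball.measurableSet
  have mfar : MeasurableSet {u : Sp d | R ≤ ‖u‖} := measurableSet_le measurable_const measurable_norm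
  have mφ : Measurable φ :=
    ((measurable_rk α).const_mul c |>.indicator mball).add ((measurable_rk _).indicator mfar)
  have hφi : ∫⁻ u, φ u = (D1 + D2) * rk (2 * α - d) (y - z) := by
    rw [hφ, lintegral_add_left ((measurable_rk α).const_mul c |>.indicator mball),
      lintegral_indicator mball, lintegral_indicator mfar, lintegral_const_mul _ (measurable_rk α),
      H1 R hRp, H2 R hRp, add_mul]
    congr 1
    · have e : (d : ℝ) - α = -(α - d) := by ring
      rw [e, hR, ofReal_mul_rpow_norm hC1 (by norm_num), hc]
      have := rk_mul (α := α) (β := α - d) (y - z) (by linarith) hα.ne'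
      rw [show α + (α - d) = 2 * α - d by ring] at this
      rw [← this]; ring
    · have e : (d : ℝ) - 2 * α = -(2 * α - d) := by ring
      rw [e, hR, ofReal_mul_rpow_norm hC2 (by norm_num)]
  have hpt : ∀ x, rk α (x - y) * rk α (x - z) ≤ φ (x - y) + φ (x - z) := by
    intro x
    have tri : ‖y - z‖ ≤ ‖x - y‖ + ‖x - z‖ := by
      have := norm_sub_le (x - z) (x - y)
      rw [show x - z - (x - y) = y - z by abel] at this; linarith
    by_cases hy : ‖x - y‖ < R
    · have hz : rk α (x - z) ≤ c := rk_le hα.le (by norm_num) hyz' (by linarith)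
      refine le_trans ?_ le_self_add
      simp only [hφ]
      refine le_trans ?_ le_self_add
      rw [Set.indicator_of_mem (by simpa using hy), mul_comm]
      gcongr
    by_cases hz : ‖x - z‖ < R
    · have hz' : rk α (x - y) ≤ c := rk_le hα.le (by norm_num) hyz' (by linarith)
      refine le_trans ?_ le_add_self
      simp only [hφ]
      refine le_trans ?_ le_self_add
      rw [Set.indicator_of_mem (by simpa using hz)]
      gcongr
    · push Not at hy hz
      have e : ∀ u : Sp d, R ≤ ‖u‖ → rk α u * rk α u ≤ φ u := by
        intro u hu
        simp only [hφ]
        rw [Set.indicator_of_mem (s := {u : Sp d | R ≤ ‖u‖}) hu,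
          rk_mul u (by linarith) hα.ne', two_mul]
        exact le_add_self
      rcases le_total (rk α (x - y)) (rk α (x - z)) with h | h
      · refine le_trans (le_trans ?_ (e _ hz)) le_add_self
        gcongr
      · refine le_trans (le_trans ?_ (e _ hy)) le_self_add
        gcongr
  calc _ ≤ ∫⁻ x, (φ (x - y) + φ (x - z)) := lintegral_mono hpt
    _ = _ := by
      rw [lintegral_add_left (by fun_prop), lintegral_sub_right_eq_self φ,
        lintegral_sub_right_eq_self φ, hφi]; ring

/-- The Riesz-type potential `|·|^{-γ} ∗ f`. -/
noncomputable def rpot {d : ℕ} (γ : ℝ) (f : Sp d → ℝ≥0∞) (x : Sp d) : ℝ≥0∞ :=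
  ∫⁻ y, rk γ (x - y) * f y

@[fun_prop]
lemma measurable_rpot {d : ℕ} (γ : ℝ) {f : Sp d → ℝ≥0∞} (hf : Measurable f) :
    Measurable (rpot γ f) := by
  have : Measurable fun p : Sp d × Sp d => rk γ (p.1 - p.2) * f p.2 := by fun_prop
  exact this.lintegral_prod_right'

/-- The squared `L²` norm of a potential is bounded by an energy. -/
lemma lintegral_rpot_sq_le {d : ℕ} [NeZero d] {α : ℝ} (h1 : α < d) (h2 : d < 2 * α) :
    ∃ C : ℝ≥0∞, C ≠ ∞ ∧ ∀ g : Sp d → ℝ≥0∞, Measurable g →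
      ∫⁻ x, rpot α g x ^ 2 ≤ C * ∫⁻ y, ∫⁻ z, g y * g z * rk (2 * α - d) (y - z) := by
  obtain ⟨C, hC, H⟩ := lintegral_rk_mul_rk_le h1 h2
  refine ⟨C, hC, fun g hg => ?_⟩
  calc ∫⁻ x, rpot α g x ^ 2
      = ∫⁻ x, ∫⁻ y, ∫⁻ z, g y * g z * (rk α (x - y) * rk α (x - z)) := by
        refine lintegral_congr fun x => ?_
        rw [sq]
        conv_lhs => enter [1]; rw [rpot]
        rw [← lintegral_mul_const _ (by fun_prop)]
        refine lintegral_congr fun y => ?_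
        rw [rpot, ← lintegral_const_mul _ (by fun_prop)]
        refine lintegral_congr fun z => ?_
        ring
    _ = ∫⁻ y, ∫⁻ z, ∫⁻ x, g y * g z * (rk α (x - y) * rk α (x - z)) :=
        lintegral_swap3 (by fun_prop)
    _ ≤ ∫⁻ y, ∫⁻ z, C * (g y * g z * rk (2 * α - d) (y - z)) := by
        refine lintegral_mono fun y => lintegral_mono_ae ?_
        filter_upwards [ae_ne_point y] with z hz
        rw [lintegral_const_mul _ (by fun_prop)]
        calc _ ≤ g y * g z * (C * rk (2 * α - d) (y - z)) := mul_le_mul_right (H y z hz.symm) _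
          _ = _ := by ring
    _ = _ := by
        rw [← lintegral_const_mul' _ _ hC]
        refine lintegral_congr fun y => ?_
        rw [lintegral_const_mul' _ _ hC]

lemma mul_le_sq_add_sq (a b : ℝ≥0∞) : a * b ≤ a ^ 2 + b ^ 2 := by
  rcases le_total a b with h | h
  · exact le_trans (by rw [sq]; gcongr) le_add_self
  · exact le_trans (by rw [sq]; gcongr) le_self_add

/-! ### Replacing the nearest point by an average -/

/-- The bilinear expression on the left plays the role of the square function of the potential. It
is bounded by a potential of `f²`, using `f y * f z ≤ f y ^ 2 + f z ^ 2` and integrating out the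
variable that does not carry the square. -/
lemma square_function_le {d : ℕ} [NeZero d] {a : ℝ} (h2 : d < 2 * a) :
    ∃ C : ℝ≥0∞, C ≠ ∞ ∧ ∀ f : Sp d → ℝ≥0∞, Measurable f → ∀ x,
      ∫⁻ y, ∫⁻ z, f y * f z * (lei ‖x - y‖ ‖x - z‖ * rk (2 * a) (x - z)) ≤
        C * rpot (2 * a - d) (fun y => f y ^ 2) x := by
  obtain ⟨C2, hC2, H2⟩ := setLIntegral_rk_compl_ball h2
  set V := volume (Metric.ball (0 : Sp d) 1)
  refine ⟨ENNReal.ofReal C2 + V, by finiteness, fun f hf x => ?_⟩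
  have hfar : ∀ y, y ≠ x → ∫⁻ z, lei ‖x - y‖ ‖x - z‖ * rk (2 * a) (x - z) =
      ENNReal.ofReal C2 * rk (2 * a - d) (x - y) := by
    intro y hy
    have hxy : 0 < ‖x - y‖ := norm_pos_iff.2 (sub_ne_zero.2 hy.symm)
    have := H2 _ hxy
    rw [show (d : ℝ) - 2 * a = -(2 * a - d) by ring, ENNReal.ofReal_mul hC2,
      ← lintegral_indicator (measurableSet_le measurable_const measurable_norm)] at this
    rw [rk, ← this, ← lintegral_sub_left_eq_self _ x]
    refine lintegral_congr fun z => ?_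
    by_cases h : ‖x - y‖ ≤ ‖z‖ <;> simp [lei, h]
  have hnear : ∀ z, ∫⁻ y, lei ‖x - y‖ ‖x - z‖ * rk (2 * a) (x - z) =
      V * rk (2 * a - d) (x - z) := by
    intro z
    have e : ∀ y, lei ‖x - y‖ ‖x - z‖ = (Metric.closedBall x ‖x - z‖).indicator 1 y := by
      intro y
      by_cases h : ‖x - y‖ ≤ ‖x - z‖ <;> simp [lei, h, dist_eq_norm, norm_sub_rev y x]
    rw [lintegral_mul_const _ (by fun_prop)]
    simp_rw [e]
    rw [lintegral_indicator_one Metric.isClosed_closedBall.measurableSet,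
      Measure.addHaar_closedBall _ _ (norm_nonneg _)]
    have : ENNReal.ofReal (‖x - z‖ ^ Module.finrank ℝ (Sp d)) = rk (-d : ℝ) (x - z) := by
      simp [rk]
    have h3 := rk_mul (α := -d) (β := 2 * a) (x - z) (by linarith) (by simp [NeZero.ne d])
    rw [show -d + 2 * a = 2 * a - d by ring] at h3
    rw [this, ← h3]; ring
  calc ∫⁻ y, ∫⁻ z, f y * f z * (lei ‖x - y‖ ‖x - z‖ * rk (2 * a) (x - z))
      ≤ ∫⁻ y, ∫⁻ z, (f y ^ 2 * (lei ‖x - y‖ ‖x - z‖ * rk (2 * a) (x - z)) +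
          f z ^ 2 * (lei ‖x - y‖ ‖x - z‖ * rk (2 * a) (x - z))) := by
        gcongr with y z
        rw [← add_mul]
        gcongr
        exact mul_le_sq_add_sq _ _
    _ = (∫⁻ y, ∫⁻ z, f y ^ 2 * (lei ‖x - y‖ ‖x - z‖ * rk (2 * a) (x - z))) +
          ∫⁻ y, ∫⁻ z, f z ^ 2 * (lei ‖x - y‖ ‖x - z‖ * rk (2 * a) (x - z)) := by
        rw [← lintegral_add_left]
        · refine lintegral_congr fun y => ?_
          rw [lintegral_add_left (by fun_prop)]
        · have : Measurable fun p : Sp d × Sp d =>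
            f p.1 ^ 2 * (lei ‖x - p.1‖ ‖x - p.2‖ * rk (2 * a) (x - p.2)) := by fun_prop
          exact this.lintegral_prod_right'
    _ = (∫⁻ y, ∫⁻ z, f y ^ 2 * (lei ‖x - y‖ ‖x - z‖ * rk (2 * a) (x - z))) +
          ∫⁻ z, ∫⁻ y, f z ^ 2 * (lei ‖x - y‖ ‖x - z‖ * rk (2 * a) (x - z)) := by
        rw [lintegral_lintegral_swap
          (f := fun y z => f z ^ 2 * (lei ‖x - y‖ ‖x - z‖ * rk (2 * a) (x - z)))]
        have : Measurable fun p : Sp d × Sp d =>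
            f p.2 ^ 2 * (lei ‖x - p.1‖ ‖x - p.2‖ * rk (2 * a) (x - p.2)) := by fun_prop
        exact this.aemeasurable
    _ = _ := by
        rw [add_mul, rpot, ← lintegral_const_mul _ (by fun_prop),
          ← lintegral_const_mul _ (by fun_prop)]
        congr 1
        · refine lintegral_congr_ae ?_
          filter_upwards [ae_ne_point x] with y hy
          rw [lintegral_const_mul _ (by fun_prop), hfar y hy]; ring
        · refine lintegral_congr fun z => ?_
          rw [lintegral_const_mul _ (by fun_prop), hnear z]; ring

/-- The mean of the kernel over a ball about its singularity is a constant multiple of its value on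
the boundary. -/
lemma setLIntegral_rk_ball_eq_average {d : ℕ} [NeZero d] {a : ℝ} (h1 : a < d) :
    ∃ C : ℝ≥0∞, C ≠ ∞ ∧ ∀ y u : Sp d, u ≠ 0 →
      ∫⁻ x in Metric.ball y ‖u‖, rk a (x - y) = C * (rk a u * volume (Metric.ball y ‖u‖)) := by
  obtain ⟨C1, hC1, H1⟩ := setLIntegral_rk_ball h1
  set V := volume (Metric.ball (0 : Sp d) 1) with hV
  have hV0 : V ≠ 0 := (Metric.measure_ball_pos _ _ one_pos).ne'
  have hVt : V ≠ ∞ := measure_ball_lt_top.ne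
  refine ⟨ENNReal.ofReal C1 / V, ENNReal.div_ne_top ofReal_ne_top hV0, fun y u hu => ?_⟩
  have hup := norm_pos_iff.2 hu
  have e1 : ∫⁻ x in Metric.ball y ‖u‖, rk a (x - y) = ∫⁻ x in Metric.ball (0 : Sp d) ‖u‖, rk a x := by
    rw [← lintegral_indicator Metric.isOpen_ball.measurableSet,
      ← lintegral_indicator Metric.isOpen_ball.measurableSet,
      ← lintegral_sub_right_eq_self ((Metric.ball 0 ‖u‖).indicator fun x => rk a x) y]
    refine lintegral_congr fun x => ?_
    by_cases h : ‖x - y‖ < ‖u‖ <;> simp [h, dist_eq_norm]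
  rw [e1, H1 _ hup, Measure.addHaar_ball_of_pos _ _ hup, finrank_euclideanSpace, Fintype.card_fin,
    ← hV, ENNReal.ofReal_mul hC1]
  have e2 : ENNReal.ofReal (‖u‖ ^ (d - a)) = rk a u * ENNReal.ofReal (‖u‖ ^ d) := by
    rw [rk, ← ENNReal.ofReal_mul (by positivity), ← Real.rpow_natCast, ← Real.rpow_add hup]
    ring_nf
  rw [e2]
  calc _ = (ENNReal.ofReal C1 / V * V) * (rk a u * ENNReal.ofReal (‖u‖ ^ d)) := by
        rw [ENNReal.div_mul_cancel hV0 hVt]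
    _ = _ := by ring

/-- The part of the potential `|·|^{-γ} ∗ f` at `x` that comes from points at distance at least `t`
from `x`. -/
noncomputable def tpot {d : ℕ} (γ : ℝ) (f : Sp d → ℝ≥0∞) (x : Sp d) (t : ℝ) : ℝ≥0∞ :=
  ∫⁻ y, rk γ (x - y) * f y * lei t ‖x - y‖

lemma tpot_le_rpot {d : ℕ} (γ : ℝ) (f : Sp d → ℝ≥0∞) (x : Sp d) (t : ℝ) :
    tpot γ f x t ≤ rpot γ f x :=
  lintegral_mono fun _ => mul_le_of_le_one_right' (lei_le_one _ _)

@[fun_prop]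
lemma measurable_tpot {d : ℕ} (γ : ℝ) {f : Sp d → ℝ≥0∞} (hf : Measurable f) :
    Measurable fun p : Sp d × ℝ => tpot γ f p.1 p.2 := by
  have : Measurable fun p : (Sp d × ℝ) × Sp d =>
    rk γ (p.1.1 - p.2) * f p.2 * lei p.1.2 ‖p.1.1 - p.2‖ := by fun_prop
  exact this.lintegral_prod_right'

/-- If `x` is much closer to `y` than to `z`, then moving `x` to any point `x'` of the ball about `y`
of radius `|y - z| / 7` changes the distance to `z`, and to every point at least as far from `x` as
`z`, by at most a factor `2`. The factor `(|y - z| / 7)^{-a}` on the left is comparable to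
`|x' - z|^{-a}` and becomes a second power of the kernel. -/
lemma slowly_varying {d : ℕ} {a : ℝ} (ha : 0 < a) (f : Sp d → ℝ≥0∞) {y z x x' : Sp d}
    (hx : 8 * ‖x - y‖ < ‖x - z‖) (hx' : 7 * ‖x' - y‖ < ‖y - z‖) :
    rk a ((1 / 7 : ℝ) • (y - z)) * (rk a (x - z) * tpot a f x ‖x - z‖ ^ 2) ≤
      ENNReal.ofReal (8 ^ a) * ENNReal.ofReal (2 ^ a) ^ 3 *
        (lei ‖x' - y‖ ‖x' - z‖ * rk (2 * a) (x' - z) * rpot a f x' ^ 2) := by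
  have t1 : ‖x - z‖ ≤ ‖x - y‖ + ‖y - z‖ := norm_sub_le_norm_sub_add_norm_sub _ _ _
  have t2 : ‖y - z‖ ≤ ‖x - y‖ + ‖x - z‖ := by
    rw [norm_sub_rev x y]; exact norm_sub_le_norm_sub_add_norm_sub _ _ _
  have t3 : ‖x' - z‖ ≤ ‖x' - y‖ + ‖y - z‖ := norm_sub_le_norm_sub_add_norm_sub _ _ _
  have t4 : ‖y - z‖ ≤ ‖x' - y‖ + ‖x' - z‖ := by
    rw [norm_sub_rev x' y]; exact norm_sub_le_norm_sub_add_norm_sub _ _ _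
  have n1 := norm_nonneg (x' - y)
  have n2 := norm_nonneg (x - y)
  have hz0 : x' - z ≠ 0 := norm_pos_iff.1 (by linarith)
  have hl : lei ‖x' - y‖ ‖x' - z‖ = 1 := by
    rw [lei, if_pos]; linarith
  have k1 : rk a ((1 / 7 : ℝ) • (y - z)) ≤ ENNReal.ofReal (8 ^ a) * rk a (x' - z) := by
    refine rk_le ha.le (by norm_num) hz0 ?_
    rw [norm_smul]; norm_num; linarith
  have k2 : rk a (x - z) ≤ ENNReal.ofReal (2 ^ a) * rk a (x' - z) :=
    rk_le ha.le (by norm_num) hz0 (by linarith)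
  have k3 : tpot a f x ‖x - z‖ ≤ ENNReal.ofReal (2 ^ a) * rpot a f x' := by
    rw [rpot, ← lintegral_const_mul' _ _ ofReal_ne_top]
    refine lintegral_mono fun t => ?_
    by_cases h : ‖x - z‖ ≤ ‖x - t‖
    · have s1 : ‖x' - t‖ ≤ ‖x' - x‖ + ‖x - t‖ := norm_sub_le_norm_sub_add_norm_sub _ _ _
      have s2 : ‖x - t‖ ≤ ‖x' - x‖ + ‖x' - t‖ := by
        rw [norm_sub_rev x' x]; exact norm_sub_le_norm_sub_add_norm_sub _ _ _
      have s3 : ‖x' - x‖ ≤ ‖x' - y‖ + ‖x - y‖ := by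
        rw [norm_sub_rev x y]; exact norm_sub_le_norm_sub_add_norm_sub _ _ _
      have ht0 : x' - t ≠ 0 := norm_pos_iff.1 (by linarith)
      have := rk_le (γ := a) (c := 2) ha.le (by norm_num) (u := x - t) ht0 (by linarith)
      simp only [lei, if_pos h, mul_one]
      rw [← mul_assoc]
      gcongr
    · simp [lei, if_neg h]
  have k4 := rk_mul (α := a) (β := a) (x' - z) (by linarith) ha.ne'
  rw [← two_mul] at k4
  rw [hl, one_mul, ← k4]
  calc _ ≤ (ENNReal.ofReal (8 ^ a) * rk a (x' - z)) * ((ENNReal.ofReal (2 ^ a) * rk a (x' - z)) *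
        (ENNReal.ofReal (2 ^ a) * rpot a f x') ^ 2) := by gcongr
    _ = _ := by ring

/-- After integration in `x`, the kernel attached to the nearest point `y` may be replaced by the
smaller kernel attached to the second nearest point `z`. -/
lemma lintegral_pair_le {d : ℕ} [NeZero d] {a : ℝ} (h1 : a < d) (ha : 0 < a) :
    ∃ C : ℝ≥0∞, C ≠ ∞ ∧ ∀ f : Sp d → ℝ≥0∞, Measurable f → ∀ y z : Sp d,
      ∫⁻ x, lei ‖x - y‖ ‖x - z‖ * rk a (x - y) * rk a (x - z) * tpot a f x ‖x - z‖ ^ 2 ≤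
        C * ∫⁻ x, lei ‖x - y‖ ‖x - z‖ * rk (2 * a) (x - z) * rpot a f x ^ 2 := by
  obtain ⟨C3, hC3, H3⟩ := setLIntegral_rk_ball_eq_average (d := d) h1
  set c := ENNReal.ofReal (8 ^ a) * ENNReal.ofReal (2 ^ a) ^ 3 with hc
  refine ⟨ENNReal.ofReal (8 ^ a) + C3 * c, by finiteness, fun f hf y z => ?_⟩
  set T : Sp d → ℝ≥0∞ := fun x => lei ‖x - y‖ ‖x - z‖ * rk (2 * a) (x - z) * rpot a f x ^ 2 with hT
  have mT : Measurable T := by fun_prop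
  -- Off `B` the distances from `x` to `y` and to `z` are comparable and the bound is pointwise; on
  -- `B` the remaining factor `H` is almost constant, and only the singularity at `y` is averaged.
  set B : Set (Sp d) := {x | 8 * ‖x - y‖ < ‖x - z‖} with hB
  have mB : MeasurableSet B := measurableSet_lt (by fun_prop) (by fun_prop)
  set H : Sp d → ℝ≥0∞ := fun x => rk a (x - z) * tpot a f x ‖x - z‖ ^ 2 with hH
  have hsplit : ∀ x, lei ‖x - y‖ ‖x - z‖ * rk a (x - y) * rk a (x - z) * tpot a f x ‖x - z‖ ^ 2 ≤
      ENNReal.ofReal (8 ^ a) * T x + B.indicator (fun x => rk a (x - y) * H x) x := by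
    intro x
    by_cases hx : x ∈ B
    · rw [Set.indicator_of_mem hx]
      refine le_trans ?_ le_add_self
      calc _ = lei ‖x - y‖ ‖x - z‖ * (rk a (x - y) * H x) := by simp only [hH]; ring
        _ ≤ _ := mul_le_of_le_one_left' (lei_le_one _ _)
    · rw [Set.indicator_of_notMem hx, add_zero]
      simp only [hB, Set.mem_ofPred_eq, not_lt] at hx
      have k4 := rk_mul (α := a) (β := a) (x - z) (by linarith) ha.ne'
      rw [← two_mul] at k4
      simp only [hT]
      rcases eq_or_ne (x - z) 0 with h0 | h0
      · have : rk a (x - z) = 0 := by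
          rw [h0, rk, norm_zero, Real.zero_rpow (by linarith)]; simp
        simp [this]
      · have := rk_le ha.le (by norm_num) h0 hx
        calc _ ≤ lei ‖x - y‖ ‖x - z‖ * (ENNReal.ofReal (8 ^ a) * rk a (x - z)) * rk a (x - z) *
              rpot a f x ^ 2 := by
              gcongr
              exact tpot_le_rpot _ _ _ _
          _ = _ := by rw [← k4]; ring
  have hBint : ∫⁻ x in B, rk a (x - y) * H x ≤ C3 * c * ∫⁻ x, T x := by
    rcases eq_or_ne y z with rfl | hyz
    · have : B = ∅ := by
        ext x
        simp only [hB, Set.mem_ofPred_eq, Set.mem_empty_iff_false, iff_false, not_lt]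
        have := norm_nonneg (x - y)
        linarith
      simp [this]
    set u : Sp d := (1 / 7 : ℝ) • (y - z) with hu
    have hun : 7 * ‖u‖ = ‖y - z‖ := by rw [hu, norm_smul]; norm_num; ring
    have hyzp : 0 < ‖y - z‖ := norm_pos_iff.2 (sub_ne_zero.2 hyz)
    have hup : 0 < ‖u‖ := by linarith
    have hu0 : u ≠ 0 := norm_pos_iff.1 hup
    set q := rk a u * volume (Metric.ball y ‖u‖) with hq
    have hq0 : q ≠ 0 := by
      refine mul_ne_zero ?_ (Metric.measure_ball_pos _ _ hup).ne'
      rw [rk]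
      simpa using Real.rpow_pos_of_pos hup _
    have hqt : q ≠ ∞ := ENNReal.mul_ne_top ofReal_ne_top measure_ball_lt_top.ne
    have hHle : ∀ x ∈ B, H x ≤ c * (∫⁻ x, T x) / q := by
      intro x hx
      rw [ENNReal.le_div_iff_mul_le (Or.inl hq0) (Or.inl hqt)]
      calc H x * q = ∫⁻ x' in Metric.ball y ‖u‖, rk a u * H x := by
            rw [setLIntegral_const]; ring
        _ ≤ ∫⁻ x' in Metric.ball y ‖u‖, c * T x' := by
            refine setLIntegral_mono (mT.const_mul c) fun x' hx' => ?_
            refine slowly_varying ha f hx ?_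
            rw [Metric.mem_ball, dist_eq_norm] at hx'
            linarith
        _ ≤ ∫⁻ x', c * T x' := setLIntegral_le_lintegral _ _
        _ = _ := lintegral_const_mul _ mT
    have hBsub : B ⊆ Metric.ball y ‖u‖ := by
      intro x hx
      simp only [hB, Set.mem_ofPred_eq] at hx
      have t1 : ‖x - z‖ ≤ ‖x - y‖ + ‖y - z‖ := norm_sub_le_norm_sub_add_norm_sub _ _ _
      rw [Metric.mem_ball, dist_eq_norm]
      linarith
    calc ∫⁻ x in B, rk a (x - y) * H x
        ≤ ∫⁻ x in B, rk a (x - y) * (c * (∫⁻ x, T x) / q) :=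
          setLIntegral_mono (by fun_prop) fun x hx => mul_le_mul_right (hHle x hx) _
      _ ≤ ∫⁻ x in Metric.ball y ‖u‖, rk a (x - y) * (c * (∫⁻ x, T x) / q) :=
          lintegral_mono_set hBsub
      _ = C3 * (q * (c * (∫⁻ x, T x) / q)) := by
          rw [lintegral_mul_const _ (by fun_prop), H3 y u hu0]; ring
      _ = _ := by rw [ENNReal.mul_div_cancel hq0 hqt]; ring
  calc _ ≤ ∫⁻ x, (ENNReal.ofReal (8 ^ a) * T x + B.indicator (fun x => rk a (x - y) * H x) x) :=
        lintegral_mono hsplit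
    _ = ENNReal.ofReal (8 ^ a) * (∫⁻ x, T x) + ∫⁻ x in B, rk a (x - y) * H x := by
        rw [lintegral_add_left (by fun_prop), lintegral_const_mul _ mT, lintegral_indicator mB]
    _ ≤ _ := by rw [add_mul]; gcongr

/-! ### The fourth power estimate for a finite left-hand side -/

lemma lintegral_rpot_pow_four_le {d : ℕ} [NeZero d] {a : ℝ} (h1 : a < d) (h2 : d < 2 * a) :
    ∃ C : ℝ≥0∞, C ≠ ∞ ∧ ∀ f : Sp d → ℝ≥0∞, Measurable f →
      ∫⁻ x, rpot a f x ^ 4 ≤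
        C * ∫⁻ x, rpot (2 * a - d) (fun y => f y ^ 2) x * rpot a f x ^ 2 := by
  have ha : 0 < a := by have : (0 : ℝ) ≤ d := Nat.cast_nonneg d; linarith
  obtain ⟨C1, hC1, H1⟩ := lintegral_pair_le h1 ha
  obtain ⟨C2, hC2, H2⟩ := square_function_le h2
  refine ⟨32 * (C1 * C2), by finiteness, fun f hf => ?_⟩
  calc ∫⁻ x, rpot a f x ^ 4
      ≤ ∫⁻ x, 32 * ∫⁻ y, ∫⁻ z, f y * f z * (lei ‖x - y‖ ‖x - z‖ * rk a (x - y) * rk a (x - z) *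
          tpot a f x ‖x - z‖ ^ 2) := by
        refine lintegral_mono fun x => ?_
        refine (pow_four_lintegral_le (w := fun y => rk a (x - y) * f y) (by fun_prop)
          (r := fun y => ‖x - y‖) (by fun_prop)).trans (le_of_eq ?_)
        congr 1
        refine lintegral_congr fun y => lintegral_congr fun z => ?_
        simp only [tpot]; ring
    _ = 32 * ∫⁻ x, ∫⁻ y, ∫⁻ z, f y * f z * (lei ‖x - y‖ ‖x - z‖ * rk a (x - y) * rk a (x - z) *
          tpot a f x ‖x - z‖ ^ 2) := lintegral_const_mul' _ _ (by simp)
    _ = 32 * ∫⁻ y, ∫⁻ z, ∫⁻ x, f y * f z * (lei ‖x - y‖ ‖x - z‖ * rk a (x - y) * rk a (x - z) *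
          tpot a f x ‖x - z‖ ^ 2) := by
        congr 1
        exact lintegral_swap3 (by fun_prop)
    _ ≤ 32 * ∫⁻ y, ∫⁻ z, C1 * ∫⁻ x, f y * f z * (lei ‖x - y‖ ‖x - z‖ * rk (2 * a) (x - z) *
          rpot a f x ^ 2) := by
        refine mul_le_mul_right (lintegral_mono fun y => lintegral_mono fun z => ?_) _
        dsimp only
        rw [lintegral_const_mul _ (by fun_prop), lintegral_const_mul _ (by fun_prop)]
        calc _ ≤ _ := mul_le_mul_right (H1 f hf y z) _
          _ = _ := by ring
    _ = 32 * (C1 * ∫⁻ y, ∫⁻ z, ∫⁻ x, f y * f z * (lei ‖x - y‖ ‖x - z‖ * rk (2 * a) (x - z) *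
          rpot a f x ^ 2)) := by
        rw [← lintegral_const_mul' _ _ hC1]
        congr 1
        refine lintegral_congr fun y => ?_
        rw [lintegral_const_mul' _ _ hC1]
    _ = 32 * (C1 * ∫⁻ x, ∫⁻ y, ∫⁻ z, f y * f z * (lei ‖x - y‖ ‖x - z‖ * rk (2 * a) (x - z) *
          rpot a f x ^ 2)) := by
        congr 2
        exact (lintegral_swap3 (Φ := fun x y z => f y * f z * (lei ‖x - y‖ ‖x - z‖ *
          rk (2 * a) (x - z) * rpot a f x ^ 2)) (by fun_prop)).symm
    _ ≤ 32 * (C1 * ∫⁻ x, C2 * (rpot (2 * a - d) (fun y => f y ^ 2) x * rpot a f x ^ 2)) := by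
        refine mul_le_mul_right (mul_le_mul_right (lintegral_mono fun x => ?_) _) _
        calc _ = (∫⁻ y, ∫⁻ z, f y * f z * (lei ‖x - y‖ ‖x - z‖ * rk (2 * a) (x - z))) *
              rpot a f x ^ 2 := by
              rw [← lintegral_mul_const]
              · refine lintegral_congr fun y => ?_
                rw [← lintegral_mul_const _ (by fun_prop)]
                refine lintegral_congr fun z => ?_
                ring
              · have : Measurable fun p : Sp d × Sp d =>
                  f p.1 * f p.2 * (lei ‖x - p.1‖ ‖x - p.2‖ * rk (2 * a) (x - p.2)) := by fun_prop
                exact this.lintegral_prod_right'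
          _ ≤ _ := mul_le_mul_left (H2 f hf x) _
          _ = _ := mul_assoc _ _ _
    _ = _ := by
        rw [lintegral_const_mul' _ _ hC2]; ring

/-- The weighted inequality `∫ F⁴ ≤ C ∫ J F²` gives `∫ F⁴ ≲ ∫ J²`, absorbing half of the finite
quantity `∫ F⁴` into the left-hand side. -/
lemma absorb_pow_four {α : Type*} [MeasurableSpace α] {μ : Measure α} {F J : α → ℝ≥0∞}
    (hJ : Measurable J) (hF : Measurable F) {C : ℝ≥0∞} (hC : C ≠ ∞)
    (hfin : ∫⁻ x, F x ^ 4 ∂μ ≠ ∞)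
    (h : ∫⁻ x, F x ^ 4 ∂μ ≤ C * ∫⁻ x, J x * F x ^ 2 ∂μ) :
    ∫⁻ x, F x ^ 4 ∂μ ≤ 4 * C ^ 2 * ∫⁻ x, J x ^ 2 ∂μ := by
  have hpt : ∀ x, C * (J x * F x ^ 2) ≤ 2⁻¹ * F x ^ 4 + 2 * C ^ 2 * J x ^ 2 := by
    intro x
    rcases le_total (2 * C * J x) (F x ^ 2) with hle | hle
    · refine le_trans ?_ le_self_add
      calc C * (J x * F x ^ 2) = 2⁻¹ * ((2 * C * J x) * F x ^ 2) := by
            rw [show 2⁻¹ * ((2 * C * J x) * F x ^ 2) = (2⁻¹ * 2) * (C * (J x * F x ^ 2)) by ring,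
              ENNReal.inv_mul_cancel (by simp) (by simp), one_mul]
        _ ≤ 2⁻¹ * (F x ^ 2 * F x ^ 2) := by gcongr
        _ = _ := by ring
    · refine le_trans ?_ le_add_self
      calc C * (J x * F x ^ 2) ≤ C * (J x * (2 * C * J x)) := by gcongr
        _ = _ := by ring
  set A := ∫⁻ x, F x ^ 4 ∂μ
  set S := ∫⁻ x, J x ^ 2 ∂μ
  have h2 : A ≤ 2⁻¹ * A + 2 * C ^ 2 * S := by
    refine h.trans ?_
    rw [← lintegral_const_mul' _ _ hC]
    refine (lintegral_mono hpt).trans (le_of_eq ?_)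
    rw [lintegral_add_left (by fun_prop), lintegral_const_mul _ (by fun_prop),
      lintegral_const_mul _ (by fun_prop)]
  have h3 : 2⁻¹ * A ≤ 2 * C ^ 2 * S := by
    have h4 : 2⁻¹ * A + 2⁻¹ * A ≤ 2⁻¹ * A + 2 * C ^ 2 * S := by
      rwa [← add_mul, ENNReal.inv_two_add_inv_two, one_mul]
    exact (ENNReal.add_le_add_iff_left (ENNReal.mul_ne_top (by simp) hfin)).1 h4
  calc A = 2 * (2⁻¹ * A) := by
        rw [← mul_assoc, ENNReal.mul_inv_cancel (by simp) (by simp), one_mul]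
    _ ≤ 2 * (2 * C ^ 2 * S) := by gcongr
    _ = _ := by ring

/-! ### Truncation -/

lemma rpot_mono {d : ℕ} (γ : ℝ) {f g : Sp d → ℝ≥0∞} (h : ∀ y, f y ≤ g y) (x : Sp d) :
    rpot γ f x ≤ rpot γ g x :=
  lintegral_mono fun y => mul_le_mul_right (h y) _

lemma rpot_bounded {d : ℕ} [NeZero d] {γ : ℝ} (h0 : 0 ≤ γ) (h1 : γ < d) (N : ℕ)
    {g : Sp d → ℝ≥0∞} (hg : ∀ y, g y ≤ (Metric.ball 0 (N : ℝ)).indicator (fun _ => (N : ℝ≥0∞)) y) :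
    ∃ M : ℝ≥0∞, M ≠ ∞ ∧ ∀ x, rpot γ g x ≤ M := by
  obtain ⟨C, hC, H⟩ := setLIntegral_rk_ball h1
  have mb : ∀ R : ℝ, MeasurableSet (Metric.ball (0 : Sp d) R) :=
    fun R => Metric.isOpen_ball.measurableSet
  have hvt : volume (Metric.ball (0 : Sp d) N) ≠ ∞ := measure_ball_lt_top.ne
  refine ⟨N * (ENNReal.ofReal C + volume (Metric.ball (0 : Sp d) N)), by finiteness, fun x => ?_⟩
  have hpt : ∀ y, rk γ (x - y) * g y ≤ N * ((Metric.ball 0 1).indicator (rk γ) (x - y) +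
      (Metric.ball 0 (N : ℝ)).indicator 1 y) := by
    intro y
    refine (mul_le_mul_right (hg y) _).trans ?_
    by_cases hy : y ∈ Metric.ball (0 : Sp d) N
    · rw [Set.indicator_of_mem hy, Set.indicator_of_mem hy, mul_comm]
      gcongr
      by_cases hxy : ‖x - y‖ < 1
      · rw [Set.indicator_of_mem (by simpa using hxy)]; exact le_self_add
      · refine le_trans ?_ le_add_self
        push Not at hxy
        rw [rk, Pi.one_apply, ENNReal.ofReal_le_one]
        exact Real.rpow_le_one_of_one_le_of_nonpos hxy (by linarith)
    · simp [Set.indicator_of_notMem hy]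
  have m1 : Measurable fun y => (Metric.ball 0 1).indicator (rk γ) (x - y) :=
    ((measurable_rk γ).indicator (mb 1)).comp (by fun_prop : Measurable fun y : Sp d => x - y)
  calc rpot γ g x ≤ _ := lintegral_mono hpt
    _ = _ := by
      rw [lintegral_const_mul' _ _ (by simp), lintegral_add_left m1,
        lintegral_sub_left_eq_self ((Metric.ball 0 1).indicator (rk γ)) x,
        lintegral_indicator (mb 1), lintegral_indicator_one (mb N), H 1 one_pos]
      simp

/-- For bounded `g` of bounded support the potential is bounded, and it is square integrable by
`lintegral_rpot_sq_le`, so it lies in `L⁴`. -/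
lemma lintegral_rpot_pow_four_ne_top {d : ℕ} [NeZero d] {a : ℝ} (h1 : a < d) (h2 : d < 2 * a)
    (N : ℕ) {g : Sp d → ℝ≥0∞} (hgm : Measurable g)
    (hg : ∀ y, g y ≤ (Metric.ball 0 (N : ℝ)).indicator (fun _ => (N : ℝ≥0∞)) y) :
    ∫⁻ x, rpot a g x ^ 4 ≠ ∞ := by
  have ha : 0 < a := by have : (0 : ℝ) ≤ d := Nat.cast_nonneg d; linarith
  obtain ⟨M, hM, HM⟩ := rpot_bounded ha.le h1 N hg
  obtain ⟨M', hM', HM'⟩ := rpot_bounded (γ := 2 * a - d) (by linarith) (by linarith) N hg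
  obtain ⟨C, hC, H⟩ := lintegral_rpot_sq_le h1 h2
  have hvt : volume (Metric.ball (0 : Sp d) N) ≠ ∞ := measure_ball_lt_top.ne
  have hg1 : ∫⁻ y, g y ≤ N * volume (Metric.ball (0 : Sp d) N) := by
    refine (lintegral_mono hg).trans (le_of_eq ?_)
    rw [lintegral_indicator Metric.isOpen_ball.measurableSet, setLIntegral_const]
  have hb : ∫⁻ y, ∫⁻ z, g y * g z * rk (2 * a - d) (y - z) ≤
      N * volume (Metric.ball (0 : Sp d) N) * M' := by
    calc _ = ∫⁻ y, g y * rpot (2 * a - d) g y := by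
          refine lintegral_congr fun y => ?_
          rw [rpot, ← lintegral_const_mul _ (by fun_prop)]
          refine lintegral_congr fun z => ?_
          ring
      _ ≤ ∫⁻ y, g y * M' := lintegral_mono fun y => mul_le_mul_right (HM' y) _
      _ = (∫⁻ y, g y) * M' := lintegral_mul_const _ hgm
      _ ≤ _ := by gcongr
  have h4 : ∫⁻ x, rpot a g x ^ 4 ≤ M ^ 2 * (C * (N * volume (Metric.ball (0 : Sp d) N) * M')) := by
    calc _ ≤ ∫⁻ x, M ^ 2 * rpot a g x ^ 2 := by
          refine lintegral_mono fun x => ?_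
          dsimp only
          rw [show rpot a g x ^ 4 = rpot a g x ^ 2 * rpot a g x ^ 2 by ring]
          gcongr
          exact HM x
      _ = M ^ 2 * ∫⁻ x, rpot a g x ^ 2 := lintegral_const_mul _ (by fun_prop)
      _ ≤ _ := by gcongr; exact (H g hgm).trans (by gcongr)
  exact ne_top_of_le_ne_top (by finiteness) h4

/-- By monotone convergence it is enough to bound the potentials of truncations of `f`. -/
lemma lintegral_rpot_pow_four_le_of_truncations {d : ℕ} {a : ℝ} {f : Sp d → ℝ≥0∞}
    (hf : Measurable f) {K : ℝ≥0∞}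
    (h : ∀ (N : ℕ) (g : Sp d → ℝ≥0∞), Measurable g → (∀ y, g y ≤ f y) →
      (∀ y, g y ≤ (Metric.ball 0 (N : ℝ)).indicator (fun _ => (N : ℝ≥0∞)) y) →
      ∫⁻ x, rpot a g x ^ 4 ≤ K) :
    ∫⁻ x, rpot a f x ^ 4 ≤ K := by
  set g : ℕ → Sp d → ℝ≥0∞ := fun N =>
    (Metric.ball 0 (N : ℝ)).indicator (fun y => min (f y) N) with hg
  have gm : ∀ N, Measurable (g N) := fun N =>
    (hf.min measurable_const).indicator Metric.isOpen_ball.measurableSet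
  have gle : ∀ N y, g N y ≤ f y := fun N y =>
    (Set.indicator_le_self _ _ y).trans (min_le_left _ _)
  have gmono : ∀ y, Monotone fun N => g N y := by
    intro y m n hmn
    simp only [hg]
    have hmn' : (m : ℝ) ≤ n := by exact_mod_cast hmn
    by_cases hy : y ∈ Metric.ball (0 : Sp d) m
    · rw [Set.indicator_of_mem hy, Set.indicator_of_mem (Metric.ball_subset_ball hmn' hy)]
      gcongr
    · simp [Set.indicator_of_notMem hy]
  have glim : ∀ y, Filter.Tendsto (fun N => g N y) Filter.atTop (nhds (f y)) := by
    intro y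
    have h1 : Filter.Tendsto (fun N : ℕ => min (f y) (N : ℝ≥0∞)) Filter.atTop (nhds (f y)) := by
      simpa using (tendsto_const_nhds (x := f y)).min ENNReal.tendsto_nat_nhds_top
    refine h1.congr' ?_
    obtain ⟨n, hn⟩ := exists_nat_gt ‖y‖
    filter_upwards [Filter.eventually_ge_atTop n] with N hN
    have : (n : ℝ) ≤ N := by exact_mod_cast hN
    simp only [hg]
    rw [Set.indicator_of_mem]
    simpa using hn.trans_le this
  have hpl : ∀ x, Filter.Tendsto (fun N => rpot a (g N) x) Filter.atTop (nhds (rpot a f x)) := by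
    intro x
    refine lintegral_tendsto_of_tendsto_of_monotone (fun N => ?_) ?_ ?_
    · have := gm N
      exact Measurable.aemeasurable (by fun_prop)
    · exact Filter.Eventually.of_forall fun y m n hmn => mul_le_mul_right (gmono y hmn) _
    · exact Filter.Eventually.of_forall fun y =>
        ENNReal.Tendsto.const_mul (glim y) (Or.inr ofReal_ne_top)
  have hL : Filter.Tendsto (fun N => ∫⁻ x, rpot a (g N) x ^ 4) Filter.atTop
      (nhds (∫⁻ x, rpot a f x ^ 4)) := by
    refine lintegral_tendsto_of_tendsto_of_monotone (fun N => ?_) ?_ ?_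
    · have := gm N
      exact Measurable.aemeasurable (by fun_prop)
    · exact Filter.Eventually.of_forall fun x m n hmn =>
        pow_le_pow_left₀ zero_le (rpot_mono a (fun y => gmono y hmn) x) 4
    · exact Filter.Eventually.of_forall fun x => ((ENNReal.continuous_pow 4).tendsto _).comp (hpl x)
  refine le_of_tendsto' hL fun N => h N (g N) (gm N) (gle N) fun y => ?_
  exact Set.indicator_le_indicator (min_le_right _ _)

/-- For `d ≥ 5`, the fourth power of the `L⁴` norm of the Riesz potential of order
`(d-4)/4` of a nonnegative `f` is controlled by the Hartree potential energy
`∬ f(x)² f(y)² |x-y|^{-4} dx dy`, as an inequality in `[0,∞]`. -/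
theorem riesz_potential_L4_le_hartree (d : ℕ) (hd : 5 ≤ d) :
    ∃ C : ℝ, 0 < C ∧
      ∀ f : EuclideanSpace ℝ (Fin d) → ℝ≥0∞, Measurable f →
        (∫⁻ x, (∫⁻ y, ENNReal.ofReal (‖x - y‖ ^ (-((3 * (d : ℝ) + 4) / 4))) * f y) ^ 4)
          ≤ ENNReal.ofReal C *
            ∫⁻ x, ∫⁻ y, (f x) ^ 2 * (f y) ^ 2 * ENNReal.ofReal (‖x - y‖ ^ (-4 : ℝ)) := by
  have : NeZero d := ⟨by omega⟩
  have hd' : (5 : ℝ) ≤ d := by exact_mod_cast hd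
  set a : ℝ := (3 * (d : ℝ) + 4) / 4 with ha
  have h1 : a < d := by linarith
  have h2 : d < 2 * a := by linarith
  obtain ⟨C1, hC1, H1⟩ := lintegral_rpot_pow_four_le h1 h2
  obtain ⟨C2, hC2, H2⟩ := lintegral_rpot_sq_le (d := d) (α := 2 * a - d)
    (by linarith) (by linarith)
  have e4 : 2 * (2 * a - d) - d = 4 := by rw [ha]; ring
  rw [e4] at H2
  set K : ℝ≥0∞ := 4 * C1 ^ 2 * C2 with hK
  have hKt : K ≠ ∞ := by finiteness
  refine ⟨K.toReal + 1, by positivity, fun f hf => ?_⟩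
  have hKle : K ≤ ENNReal.ofReal (K.toReal + 1) := by
    rw [ENNReal.le_ofReal_iff_toReal_le hKt (by positivity)]; linarith
  change ∫⁻ x, rpot a f x ^ 4 ≤ ENNReal.ofReal (K.toReal + 1) *
    ∫⁻ x, ∫⁻ y, f x ^ 2 * f y ^ 2 * rk 4 (x - y)
  refine lintegral_rpot_pow_four_le_of_truncations hf fun N g hg hgf hgN => ?_
  calc ∫⁻ x, rpot a g x ^ 4
      ≤ 4 * C1 ^ 2 * ∫⁻ x, rpot (2 * a - d) (fun y => g y ^ 2) x ^ 2 :=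
        absorb_pow_four (by fun_prop) (by fun_prop) hC1 (lintegral_rpot_pow_four_ne_top h1 h2 N hg hgN)
          (H1 g hg)
    _ ≤ 4 * C1 ^ 2 * (C2 * ∫⁻ x, ∫⁻ y, g x ^ 2 * g y ^ 2 * rk 4 (x - y)) :=
        mul_le_mul_right (H2 _ (by fun_prop)) _
    _ = K * ∫⁻ x, ∫⁻ y, g x ^ 2 * g y ^ 2 * rk 4 (x - y) := by rw [hK]; ring
    _ ≤ _ := by
        gcongr with x y
        · exact hgf x
        · exact hgf y
end

section
/- Let d ≥ 1 and γ ∈ (0, d). For all measurable functions f, g : ℝ^d → [0, ∞], the bilinear Riesz form satisfies the Cauchy–Schwarz inequality ∬_{ℝ^d×ℝ^d} f(x) g(y) |x − y|^{-γ} dx dy ≤ ( ∬_{ℝ^d×ℝ^d} f(x) f(y) |x − y|^{-γ} dx dy )^{1/2} ( ∬_{ℝ^d×ℝ^d} g(x) g(y) |x − y|^{-γ} dx dy )^{1/2}, as an inequality in [0, ∞]. -/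
/-!
The Riesz kernel is, off the diagonal, a superposition of products `k x p * k y p`. Indeed

* `r ^ (-γ) = Γ(γ/2)⁻¹ ∫₀^∞ t ^ (γ/2 - 1) exp (-t r²) dt`, and
* `∫ exp (-2t‖x - z‖²) exp (-2t‖y - z‖²) dz = (π/(4t)) ^ (d/2) exp (-t‖x - y‖²)`, because the
  parallelogram law gives `2‖x - z‖² + 2‖y - z‖² = ‖x - y‖² + 4‖z - (x + y)/2‖²`.

So `‖x - y‖ ^ (-γ) = ∫ k x p * k y p dp` for `x ≠ y`, where `p = (t, z)` ranges over
`(0, ∞) × ℝ^d` and `k x (t, z)` is a Gaussian in `x - z` times the square root of a weight in `t`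
(`riesz_eq_lintegral`). By Tonelli the bilinear form becomes `∫ F p * G p dp` with
`F p = ∫ f x * k x p dx` and `G p = ∫ g x * k x p dx`, and the claim is the Cauchy–Schwarz
inequality in `L²(dp)` (`lintegral_kernel_cauchy_schwarz`). The diagonal is negligible since `d ≥ 1`.
-/

open MeasureTheory ENNReal

section Factorization

variable {X Z : Type*} [MeasurableSpace X] [MeasurableSpace Z] {μ : Measure X} {ν : Measure Z}
  [SFinite μ] [SFinite ν] {K : X → X → ℝ≥0∞} {k : X → Z → ℝ≥0∞}

/-- Tonelli: a bilinear form with kernel `K x y = ∫ k x z * k y z dz` is an `L²` pairing. -/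
lemma lintegral_kernel_eq (hk : Measurable (Function.uncurry k))
    (hK : ∀ x, ∀ᵐ y ∂μ, K x y = ∫⁻ z, k x z * k y z ∂ν)
    {f g : X → ℝ≥0∞} (hf : Measurable f) (hg : Measurable g) :
    ∫⁻ x, ∫⁻ y, f x * g y * K x y ∂μ ∂μ
      = ∫⁻ z, (∫⁻ x, f x * k x z ∂μ) * (∫⁻ y, g y * k y z ∂μ) ∂ν := by
  have hkx : ∀ x, Measurable (k x) := fun x => hk.of_uncurry_left
  have hkz : ∀ z, Measurable (fun x => k x z) := fun z => hk.of_uncurry_right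
  have hgk : Measurable (fun p : X × Z => g p.1 * k p.1 p.2) := (hg.comp measurable_fst).mul hk
  have hfk : Measurable (fun p : X × Z => f p.1 * k p.1 p.2) := (hf.comp measurable_fst).mul hk
  have hG : Measurable (fun z => ∫⁻ y, g y * k y z ∂μ) := hgk.lintegral_prod_left'
  have h1 : ∀ x, ∫⁻ y, f x * g y * K x y ∂μ
      = ∫⁻ z, f x * k x z * ∫⁻ y, g y * k y z ∂μ ∂ν := by
    intro x
    have h2 : ∫⁻ y, f x * g y * K x y ∂μ
        = ∫⁻ y, ∫⁻ z, f x * k x z * (g y * k y z) ∂ν ∂μ := by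
      refine lintegral_congr_ae ?_
      filter_upwards [hK x] with y hy
      rw [hy, ← lintegral_const_mul _ ((hkx x).fun_mul (hkx y))]
      refine lintegral_congr fun z => ?_
      ring
    rw [h2, lintegral_lintegral_swap]
    · refine lintegral_congr fun z => ?_
      rw [lintegral_const_mul _ (hg.fun_mul (hkz z))]
    · exact ((((hkx x).comp measurable_snd).const_mul (f x)).mul hgk).aemeasurable
  simp_rw [h1]
  rw [lintegral_lintegral_swap]
  · refine lintegral_congr fun z => ?_
    rw [lintegral_mul_const _ (hf.fun_mul (hkz z))]
  · exact (hfk.mul (hG.comp measurable_snd)).aemeasurable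

lemma lintegral_kernel_cauchy_schwarz (hk : Measurable (Function.uncurry k))
    (hK : ∀ x, ∀ᵐ y ∂μ, K x y = ∫⁻ z, k x z * k y z ∂ν)
    {f g : X → ℝ≥0∞} (hf : Measurable f) (hg : Measurable g) :
    ∫⁻ x, ∫⁻ y, f x * g y * K x y ∂μ ∂μ
      ≤ (∫⁻ x, ∫⁻ y, f x * f y * K x y ∂μ ∂μ) ^ ((1 : ℝ) / 2) *
        (∫⁻ x, ∫⁻ y, g x * g y * K x y ∂μ ∂μ) ^ ((1 : ℝ) / 2) := by
  rw [lintegral_kernel_eq hk hK hf hg, lintegral_kernel_eq hk hK hf hf,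
    lintegral_kernel_eq hk hK hg hg]
  have hF : ∀ {h : X → ℝ≥0∞}, Measurable h → Measurable (fun z => ∫⁻ y, h y * k y z ∂μ) :=
    fun {h} hh => Measurable.lintegral_prod_left'
      (f := fun p : X × Z => h p.1 * k p.1 p.2) ((hh.comp measurable_fst).mul hk)
  have := ENNReal.lintegral_mul_le_Lp_mul_Lq ν Real.HolderConjugate.two_two
    (hF hf).aemeasurable (hF hg).aemeasurable
  simpa only [Pi.mul_apply, ENNReal.rpow_two, sq] using this

end Factorization

section Riesz

/-- The weight in `t` making the Gaussian superposition equal to the Riesz kernel: the Gamma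
density `t ^ (γ/2 - 1) / Γ(γ/2)` divided by the Gaussian mass `(π / (4t)) ^ (d/2)`. -/
noncomputable def rieszWeight (d : ℕ) (γ t : ℝ) : ℝ :=
  t ^ (γ / 2 - 1) / Real.Gamma (γ / 2) / (Real.pi / (4 * t)) ^ ((d : ℝ) / 2)

/-- The square-root factor `k x (t, z)` of the Riesz kernel. -/
noncomputable def rieszRoot (d : ℕ) (γ : ℝ) (x : EuclideanSpace ℝ (Fin d))
    (p : ℝ × EuclideanSpace ℝ (Fin d)) : ℝ≥0∞ :=
  ENNReal.ofReal (√(rieszWeight d γ p.1) * Real.exp (-(2 * p.1 * ‖x - p.2‖ ^ 2)))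

lemma measurable_rieszRoot (d : ℕ) (γ : ℝ) : Measurable (Function.uncurry (rieszRoot d γ)) := by
  unfold Function.uncurry rieszRoot rieszWeight
  fun_prop

lemma lintegral_gaussian (d : ℕ) {b : ℝ} (hb : 0 < b) (m : EuclideanSpace ℝ (Fin d)) :
    ∫⁻ z, ENNReal.ofReal (Real.exp (-b * ‖z - m‖ ^ 2))
      = ENNReal.ofReal ((Real.pi / b) ^ ((d : ℝ) / 2)) := by
  rw [lintegral_sub_right_eq_self
    (fun z : EuclideanSpace ℝ (Fin d) => ENNReal.ofReal (Real.exp (-b * ‖z‖ ^ 2))) m]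
  have h := GaussianFourier.integral_rexp_neg_mul_sq_norm (V := EuclideanSpace ℝ (Fin d)) hb
  rw [finrank_euclideanSpace_fin] at h
  rw [← h, ofReal_integral_eq_lintegral_ofReal]
  · refine Integrable.of_integral_ne_zero ?_
    rw [h]
    positivity
  · exact Filter.Eventually.of_forall fun z => (Real.exp_pos _).le

lemma lintegral_gamma {γ r : ℝ} (hγ : 0 < γ) (hr : 0 < r) :
    ∫⁻ t in Set.Ioi (0 : ℝ),
        ENNReal.ofReal (t ^ (γ / 2 - 1) / Real.Gamma (γ / 2) * Real.exp (-(r ^ 2 * t)))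
      = ENNReal.ofReal (r ^ (-γ)) := by
  have hΓ : 0 < Real.Gamma (γ / 2) := Real.Gamma_pos_of_pos (by positivity)
  have h : ∫ t in Set.Ioi (0 : ℝ),
      t ^ (γ / 2 - 1) / Real.Gamma (γ / 2) * Real.exp (-(r ^ 2 * t)) = r ^ (-γ) := by
    have h0 := Real.integral_rpow_mul_exp_neg_mul_Ioi (a := γ / 2) (r := r ^ 2)
      (by positivity) (by positivity)
    simp_rw [div_mul_eq_mul_div]
    rw [integral_div, h0, mul_div_assoc, div_self hΓ.ne', mul_one, one_div,
      ← Real.rpow_natCast, ← Real.rpow_neg hr.le, ← Real.rpow_mul hr.le]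
    congr 1
    push_cast
    ring
  rw [← h, ofReal_integral_eq_lintegral_ofReal]
  · refine Integrable.of_integral_ne_zero ?_
    rw [h]
    positivity
  · filter_upwards [ae_restrict_mem measurableSet_Ioi] with t ht
    have ht : 0 < t := ht
    positivity

/-- For fixed `t`, the Gaussian semigroup identity evaluates the integral over `z`. -/
lemma lintegral_rieszRoot_slice (d : ℕ) {γ t : ℝ} (hγ : 0 < γ) (ht : 0 < t)
    (x y : EuclideanSpace ℝ (Fin d)) :
    ∫⁻ z, rieszRoot d γ x (t, z) * rieszRoot d γ y (t, z)
      = ENNReal.ofReal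
          (t ^ (γ / 2 - 1) / Real.Gamma (γ / 2) * Real.exp (-(‖x - y‖ ^ 2 * t))) := by
  have hΓ : 0 < Real.Gamma (γ / 2) := Real.Gamma_pos_of_pos (by positivity)
  have hπ : 0 < (Real.pi / (4 * t)) ^ ((d : ℝ) / 2) := by positivity
  have hw : 0 ≤ rieszWeight d γ t := by unfold rieszWeight; positivity
  have hpar : ∀ z, 2 * ‖x - z‖ ^ 2 + 2 * ‖y - z‖ ^ 2
      = ‖x - y‖ ^ 2 + 4 * ‖z - (2⁻¹ : ℝ) • (x + y)‖ ^ 2 := by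
    intro z
    have h := parallelogram_law_with_norm ℝ (x - z) (y - z)
    have e1 : x - z + (y - z) = (-2 : ℝ) • (z - (2⁻¹ : ℝ) • (x + y)) := by module
    have e2 : x - z - (y - z) = x - y := by abel
    rw [e1, e2, norm_smul, mul_pow] at h
    have e3 : ‖(-2 : ℝ)‖ ^ 2 = 4 := by norm_num
    rw [e3] at h
    linarith
  have hpt : ∀ z, rieszRoot d γ x (t, z) * rieszRoot d γ y (t, z)
      = ENNReal.ofReal (rieszWeight d γ t * Real.exp (-(‖x - y‖ ^ 2 * t))) *
        ENNReal.ofReal (Real.exp (-(4 * t) * ‖z - (2⁻¹ : ℝ) • (x + y)‖ ^ 2)) := by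
    intro z
    unfold rieszRoot
    rw [← ENNReal.ofReal_mul (by positivity), ← ENNReal.ofReal_mul (by positivity)]
    congr 1
    rw [mul_mul_mul_comm, Real.mul_self_sqrt hw, ← Real.exp_add,
      mul_assoc (rieszWeight d γ t), ← Real.exp_add]
    congr 2
    linear_combination (-t) * hpar z
  simp_rw [hpt]
  rw [lintegral_const_mul _ (by fun_prop), lintegral_gaussian d (by positivity),
    ← ENNReal.ofReal_mul (by positivity)]
  congr 1
  unfold rieszWeight
  field_simp

lemma riesz_eq_lintegral (d : ℕ) {γ : ℝ} (hγ : 0 < γ) {x y : EuclideanSpace ℝ (Fin d)}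
    (hxy : x ≠ y) :
    ENNReal.ofReal (‖x - y‖ ^ (-γ))
      = ∫⁻ p, rieszRoot d γ x p * rieszRoot d γ y p
          ∂((volume.restrict (Set.Ioi (0 : ℝ))).prod volume) := by
  have hk : ∀ x, Measurable (rieszRoot d γ x) := fun x =>
    (measurable_rieszRoot d γ).of_uncurry_left
  rw [lintegral_prod _ ((hk x).fun_mul (hk y)).aemeasurable,
    ← lintegral_gamma hγ (norm_pos_iff.2 (sub_ne_zero.2 hxy))]
  refine (setLIntegral_congr_fun measurableSet_Ioi fun t ht => ?_).symm
  exact lintegral_rieszRoot_slice d hγ ht x y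

end Riesz

/-- Cauchy–Schwarz inequality for the bilinear Riesz form with kernel `|x-y|^{-γ}`,
`0 < γ < d`, on nonnegative measurable functions, as an inequality in `[0,∞]`. -/
theorem riesz_bilinear_cauchy_schwarz (d : ℕ) (hd : 1 ≤ d) (γ : ℝ) (hγ : 0 < γ)
    (hγd : γ < d) (f g : EuclideanSpace ℝ (Fin d) → ℝ≥0∞)
    (hf : Measurable f) (hg : Measurable g) :
    (∫⁻ x, ∫⁻ y, f x * g y * ENNReal.ofReal (‖x - y‖ ^ (-γ)))
      ≤ (∫⁻ x, ∫⁻ y, f x * f y * ENNReal.ofReal (‖x - y‖ ^ (-γ))) ^ ((1 : ℝ) / 2) *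
        (∫⁻ x, ∫⁻ y, g x * g y * ENNReal.ofReal (‖x - y‖ ^ (-γ))) ^ ((1 : ℝ) / 2) := by
  -- Positive dimension makes Lebesgue measure atomless, so the diagonal `y = x`, where
  -- `0 ^ (-γ) = 0` in `ℝ` but the superposition diverges, does not matter.
  have : Nonempty (Fin d) := ⟨⟨0, hd⟩⟩
  refine lintegral_kernel_cauchy_schwarz
    (K := fun x y => ENNReal.ofReal (‖x - y‖ ^ (-γ))) (k := rieszRoot d γ)
    (ν := (volume.restrict (Set.Ioi (0 : ℝ))).prod volume)
    (measurable_rieszRoot d γ) (fun x => ?_) hf hg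
  filter_upwards [Measure.ae_ne volume x] with y hy
  exact riesz_eq_lintegral d hγ hy.symm
end

section
/- Let d ≥ 5. There exists a constant C > 0 such that for every smooth compactly supported function v : ℝ^d → ℝ, ‖v‖^d_{L^{2d/(d−2)}(ℝ^d)} ≤ C ‖∇v‖^{d−4}_{L²(ℝ^d)} ∬_{ℝ^d×ℝ^d} v(x)² v(y)² |x − y|^{-4} dx dy. In particular, for d = 5, ‖v‖^{10}_{L^{10/3}(ℝ⁵)} ≤ C ‖∇v‖²_{L²(ℝ⁵)} ( ∬_{ℝ⁵×ℝ⁵} v(x)² v(y)² |x − y|^{-4} dx dy )². -/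
/-!
The inequality follows from a pointwise one of Hedberg type. Let `G` be the Hardy-Littlewood
maximal function of `|∇v|` and put
`W(x) = ∬ v(y)² v(z)² (|x - y| + |y - z|)^{-(d+4)} dy dz`.
Integrating in `x` and scaling gives `∫ W = A ∬ v(y)² v(z)² |y - z|^{-4} dy dz` with a finite `A`
(`lintegral_localEnergy_le`; only `≤` is needed).

For every `R > 0`, `|v(x)|` is at most the mean of `|v|` over `B(x, R)` plus `R G(x)`
(`measure_ball_mul_enorm_le`). By Cauchy-Schwarz, the fourth power of that mean is at most
`(|B_R|^{-1} ∫_{B(x,R)} v²)²`, and since the kernel of `W` is at least `(3R)^{-(d+4)}` on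
`B(x, R)²` this is at most `C R^{4-d} W(x)`. Choosing `R = |v(x)| / (2 G(x))` yields
`|v|^d ≤ C W G^{d-4}` (`enorm_pow_le`).

Raising this to the power `2 / (d - 2)`, integrating and applying Hölder's inequality
(`holder_step`) gives `‖v‖^d ≤ C (∫ W) ‖G‖₂^{d-4}` for the norm of `L^{2d/(d-2)}`, and
`‖G‖₂ ≤ C ‖∇v‖₂` is the maximal theorem, proved from Vitali's covering lemma
(`maxFn_weak`, `lintegral_maxFn_sq_le`).
-/

open MeasureTheory ENNReal

namespace HartreeGNS

/-! ### The Hardy-Littlewood maximal function -/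

set_option linter.unusedSectionVars false

variable {E : Type*} [NormedAddCommGroup E] [NormedSpace ℝ E] [FiniteDimensional ℝ E]
  [MeasurableSpace E] [BorelSpace E]

/-- The uncentred Hardy-Littlewood maximal function: the supremum over all open balls containing
`x` of the mean of `f`. The supremum runs over all pairs (centre, radius); balls not containing
`x`, in particular empty ones, contribute `0` through the indicator. With open balls the function
is lower semicontinuous for arbitrary `f`, hence measurable. -/
noncomputable def maxFn (μ : Measure E) (f : E → ℝ≥0∞) (x : E) : ℝ≥0∞ :=
  ⨆ p : E × ℝ, (Metric.ball p.1 p.2).indicator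
    (fun _ => (∫⁻ y in Metric.ball p.1 p.2, f y ∂μ) / μ (Metric.ball p.1 p.2)) x

lemma measurable_maxFn (μ : Measure E) (f : E → ℝ≥0∞) : Measurable (maxFn μ f) :=
  (lowerSemicontinuous_iSup fun _ =>
    Metric.isOpen_ball.lowerSemicontinuous_indicator (zero_le)).measurable

variable (μ : Measure E) [μ.IsAddHaarMeasure]

lemma setLIntegral_ball_le_maxFn (f : E → ℝ≥0∞) (x : E) {r : ℝ} (hr : 0 < r) :
    ∫⁻ y in Metric.ball x r, f y ∂μ ≤ μ (Metric.ball x r) * maxFn μ f x := by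
  have h : (∫⁻ y in Metric.ball x r, f y ∂μ) / μ (Metric.ball x r) ≤ maxFn μ f x := by
    refine le_trans ?_ (le_iSup _ (x, r))
    simp [Set.indicator_of_mem (Metric.mem_ball_self hr)]
  rw [mul_comm]
  exact (ENNReal.div_le_iff (Metric.measure_ball_pos μ x hr).ne' measure_ball_lt_top.ne).1 h

lemma maxFn_le_of_le {f : E → ℝ≥0∞} {c : ℝ≥0∞} (hf : ∀ x, f x ≤ c) (x : E) :
    maxFn μ f x ≤ c := by
  refine iSup_le fun p => ?_
  refine Set.indicator_apply_le' (fun _ => ?_) fun _ => zero_le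
  refine ENNReal.div_le_of_le_mul ?_
  calc ∫⁻ y in Metric.ball p.1 p.2, f y ∂μ ≤ ∫⁻ _ in Metric.ball p.1 p.2, c ∂μ :=
        lintegral_mono hf
    _ = c * μ (Metric.ball p.1 p.2) := by simp

/-- Truncation at height `t` costs at most `t` in the maximal function. -/
lemma maxFn_le_add (f : E → ℝ≥0∞) (t : ℝ≥0∞) (x : E) :
    maxFn μ f x ≤ t + maxFn μ ({y | t < f y}.indicator f) x := by
  refine iSup_le fun p => ?_
  refine Set.indicator_apply_le' (fun hx => ?_) fun _ => zero_le
  have h1 : (∫⁻ y in Metric.ball p.1 p.2, ({y | t < f y}.indicator f) y ∂μ) /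
      μ (Metric.ball p.1 p.2) ≤ maxFn μ ({y | t < f y}.indicator f) x := by
    refine le_trans ?_ (le_iSup _ p)
    rw [Set.indicator_of_mem hx]
  have hpos : 0 < p.2 := lt_of_le_of_lt dist_nonneg hx
  have hle : ∀ y, f y ≤ t + ({y | t < f y}.indicator f) y := by
    intro y
    by_cases hy : t < f y
    · rw [Set.indicator_of_mem (show y ∈ {y | t < f y} from hy)]
      exact le_add_self
    · exact (not_lt.1 hy).trans le_self_add
  refine le_trans ?_ (add_le_add_right h1 t)
  refine ENNReal.div_le_of_le_mul ?_
  rw [add_mul, ENNReal.div_mul_cancel (Metric.measure_ball_pos μ p.1 hpos).ne'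
    measure_ball_lt_top.ne]
  calc ∫⁻ y in Metric.ball p.1 p.2, f y ∂μ
      ≤ ∫⁻ y in Metric.ball p.1 p.2, (t + ({y | t < f y}.indicator f) y) ∂μ :=
        lintegral_mono hle
    _ = _ := by rw [lintegral_add_left measurable_const]; simp

/-- Weak type `(1,1)` bound for the maximal function, by the Vitali covering lemma with dilation
factor `5`. -/
lemma maxFn_weak [Nontrivial E] (f : E → ℝ≥0∞) (t : ℝ≥0∞) :
    t * μ {x | t < maxFn μ f x} ≤ 5 ^ Module.finrank ℝ E * ∫⁻ x, f x ∂μ := by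
  set n := Module.finrank ℝ E with hn
  have hn1 : n ≠ 0 := (Module.finrank_pos (R := ℝ) (M := E)).ne'
  rcases eq_or_ne t 0 with rfl | ht0
  · simp
  rcases eq_or_ne t ∞ with rfl | htt
  · simp
  rcases eq_or_ne (∫⁻ x, f x ∂μ) ∞ with hI | hI
  · rw [hI, ENNReal.mul_top (by positivity)]; exact le_top
  set β := μ (Metric.ball (0 : E) 1) with hβ
  have hβ0 : β ≠ 0 := (Metric.measure_ball_pos μ _ one_pos).ne'
  have hβt : β ≠ ∞ := measure_ball_lt_top.ne
  let T : Set (E × ℝ) := {p | 0 < p.2 ∧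
    t * μ (Metric.ball p.1 p.2) < ∫⁻ y in Metric.ball p.1 p.2, f y ∂μ}
  have hvol : ∀ p ∈ T, μ (Metric.ball p.1 p.2) = ENNReal.ofReal (p.2 ^ n) * β := fun p hp =>
    Measure.addHaar_ball μ p.1 hp.1.le
  set K := (∫⁻ x, f x ∂μ) / (t * β) with hK
  have hKt : K ≠ ∞ := ENNReal.div_ne_top hI (mul_ne_zero ht0 hβ0)
  -- Vitali's lemma needs bounded radii: a ball of `T` has volume at most `(∫ f) / t`.
  have hbd : ∀ p ∈ T, p.2 ≤ max 1 K.toReal := by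
    intro p hp
    by_contra! hcon
    have h1 : 1 < p.2 := (le_max_left _ _).trans_lt hcon
    have h2 : K.toReal < p.2 := (le_max_right _ _).trans_lt hcon
    have h3 : t * (ENNReal.ofReal (p.2 ^ n) * β) ≤ ∫⁻ x, f x ∂μ := by
      rw [← hvol p hp]
      exact hp.2.le.trans (setLIntegral_le_lintegral _ _)
    have h4 : ENNReal.ofReal (p.2 ^ n) ≤ K := by
      rw [hK, ENNReal.le_div_iff_mul_le (Or.inl (mul_ne_zero ht0 hβ0))
        (Or.inl (ENNReal.mul_ne_top htt hβt))]
      calc _ = t * (ENNReal.ofReal (p.2 ^ n) * β) := by ring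
        _ ≤ _ := h3
    have h5 : p.2 ^ n ≤ K.toReal := (ENNReal.ofReal_le_iff_le_toReal hKt).1 h4
    exact absurd (h2.trans_le ((le_self_pow₀ h1.le hn1).trans h5)) (lt_irrefl _)
  obtain ⟨u, huT, hdisj, hcov⟩ :=
    Vitali.exists_disjoint_subfamily_covering_enlargement_closedBall T Prod.fst Prod.snd _ hbd 5
      (by norm_num)
  have hdisj' : u.PairwiseDisjoint fun p => Metric.ball p.1 p.2 :=
    hdisj.mono fun p => Metric.ball_subset_closedBall
  have hcount : u.Countable := hdisj'.countable_of_nonempty_interior fun p hp => by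
    rw [Metric.isOpen_ball.interior_eq]
    exact Metric.nonempty_ball.2 (huT hp).1
  have hsub : {x | t < maxFn μ f x} ⊆ ⋃ p ∈ u, Metric.closedBall p.1 (5 * p.2) := by
    intro x hx
    obtain ⟨p, hp⟩ := lt_iSup_iff.1 (show t < maxFn μ f x from hx)
    have hxp : x ∈ Metric.ball p.1 p.2 := by
      by_contra hcon
      rw [Set.indicator_of_notMem hcon] at hp
      simp at hp
    rw [Set.indicator_of_mem hxp] at hp
    have hpos : 0 < p.2 := lt_of_le_of_lt dist_nonneg hxp
    have hpT : p ∈ T := ⟨hpos, (ENNReal.lt_div_iff_mul_lt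
      (Or.inl (Metric.measure_ball_pos μ p.1 hpos).ne') (Or.inl measure_ball_lt_top.ne)).1 hp⟩
    obtain ⟨q, hq, hpq⟩ := hcov p hpT
    exact Set.mem_biUnion hq (hpq (Metric.ball_subset_closedBall hxp))
  have h5 : ENNReal.ofReal 5 = 5 := by simp
  calc t * μ {x | t < maxFn μ f x}
      ≤ t * ∑' p : u, μ (Metric.closedBall p.1.1 (5 * p.1.2)) := by
        gcongr
        exact (measure_mono hsub).trans (measure_biUnion_le μ hcount _)
    _ = 5 ^ n * ∑' p : u, t * μ (Metric.ball p.1.1 p.1.2) := by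
        rw [← ENNReal.tsum_mul_left, ← ENNReal.tsum_mul_left]
        refine tsum_congr fun p => ?_
        have hp := (huT p.2).1
        rw [Measure.addHaar_closedBall μ _ (by positivity), hvol _ (huT p.2), mul_pow,
          ENNReal.ofReal_mul (by positivity), ENNReal.ofReal_pow (by norm_num), h5]
        ring
    _ ≤ 5 ^ n * ∑' p : u, ∫⁻ y in Metric.ball p.1.1 p.1.2, f y ∂μ := by
        gcongr with p
        exact (huT p.2).2.le
    _ = 5 ^ n * ∫⁻ y in ⋃ p ∈ u, Metric.ball p.1 p.2, f y ∂μ := by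
        rw [lintegral_biUnion hcount (fun _ _ => measurableSet_ball) hdisj']
    _ ≤ _ := mul_le_mul_right (setLIntegral_le_lintegral _ _) _

/-- Strong type `(2,2)` bound for the maximal function, obtained by integrating the weak type bound
for the truncations `g 1_{g > s/2}` in the layer cake formula. Boundedness of `g` only serves to
make the maximal function real valued. -/
lemma lintegral_maxFn_sq_le [Nontrivial E] {g : E → ℝ≥0∞} (hg : Measurable g) {c : ℝ≥0∞}
    (hc : c ≠ ∞) (hgc : ∀ x, g x ≤ c) :
    ∫⁻ x, maxFn μ g x ^ 2 ∂μ ≤ 8 * 5 ^ Module.finrank ℝ E * ∫⁻ x, g x ^ 2 ∂μ := by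
  set n := Module.finrank ℝ E with hn
  have hMt : ∀ x, maxFn μ g x ≠ ∞ := fun x => ne_top_of_le_ne_top hc (maxFn_le_of_le μ hgc x)
  have hgt : ∀ x, g x ≠ ∞ := fun x => ne_top_of_le_ne_top hc (hgc x)
  have hlayer := lintegral_rpow_eq_lintegral_meas_lt_mul μ
    (f := fun x => (maxFn μ g x).toReal) (Filter.Eventually.of_forall fun x => toReal_nonneg)
    (measurable_maxFn μ g).ennreal_toReal.aemeasurable (p := 2) two_pos
  have hL : ∀ x, ENNReal.ofReal ((maxFn μ g x).toReal ^ (2 : ℝ)) = maxFn μ g x ^ 2 := by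
    intro x
    rw [Real.rpow_two, ENNReal.ofReal_pow toReal_nonneg, ENNReal.ofReal_toReal (hMt x)]
  simp_rw [hL] at hlayer
  have hkey : ∀ s ∈ Set.Ioi (0 : ℝ), μ {x | s < (maxFn μ g x).toReal} *
      ENNReal.ofReal (s ^ ((2 : ℝ) - 1)) ≤
      2 * 5 ^ n * ∫⁻ x, ({p : ℝ × E | ENNReal.ofReal p.1 < 2 * g p.2}.indicator
        fun p => g p.2) (s, x) ∂μ := by
    intro s hs
    have hs : 0 < s := hs
    have hs2 : ENNReal.ofReal s = 2 * ENNReal.ofReal (s / 2) := by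
      rw [show (2 : ℝ≥0∞) = ENNReal.ofReal 2 by simp, ← ENNReal.ofReal_mul two_pos.le]
      congr 1; ring
    set t := ENNReal.ofReal (s / 2) with ht
    have hsub : {x | s < (maxFn μ g x).toReal} ⊆
        {x | t < maxFn μ ({y | t < g y}.indicator g) x} := by
      intro x hx
      have h1 : ENNReal.ofReal s < maxFn μ g x :=
        (ENNReal.ofReal_lt_iff_lt_toReal hs.le (hMt x)).2 hx
      rw [hs2, two_mul] at h1
      exact lt_of_add_lt_add_left (h1.trans_le (maxFn_le_add μ g t x))
    calc μ {x | s < (maxFn μ g x).toReal} * ENNReal.ofReal (s ^ ((2 : ℝ) - 1))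
        ≤ μ {x | t < maxFn μ ({y | t < g y}.indicator g) x} * (2 * t) := by
          rw [show ((2 : ℝ) - 1) = 1 by norm_num, Real.rpow_one, ← hs2]
          gcongr
      _ = 2 * (t * μ {x | t < maxFn μ ({y | t < g y}.indicator g) x}) := by ring
      _ ≤ 2 * (5 ^ n * ∫⁻ x, {y | t < g y}.indicator g x ∂μ) := by
          exact mul_le_mul_right (maxFn_weak μ _ t) _
      _ = _ := by
          rw [mul_assoc]
          congr 2
          refine lintegral_congr fun x => ?_
          simp only [Set.indicator, Set.mem_ofPred_eq, hs2,
            ENNReal.mul_lt_mul_iff_right two_ne_zero ENNReal.ofNat_ne_top]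
          congr
  have hmeasset : MeasurableSet {p : ℝ × E | ENNReal.ofReal p.1 < 2 * g p.2} :=
    measurableSet_lt (by fun_prop) (by fun_prop)
  have hmeas : Measurable ({p : ℝ × E | ENNReal.ofReal p.1 < 2 * g p.2}.indicator
        fun p => g p.2) := Measurable.indicator (by fun_prop) hmeasset
  have hinner : ∀ x, ∫⁻ s in Set.Ioi (0 : ℝ),
      ({p : ℝ × E | ENNReal.ofReal p.1 < 2 * g p.2}.indicator fun p => g p.2) (s, x) ≤
        2 * g x ^ 2 := by
    intro x
    have h2 : 2 * g x ≠ ∞ := ENNReal.mul_ne_top (by simp) (hgt x)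
    calc _ ≤ ∫⁻ s in Set.Ioi (0 : ℝ), (Set.Ioo 0 (2 * g x).toReal).indicator (fun _ => g x) s := by
          refine setLIntegral_mono' measurableSet_Ioi fun s hs => ?_
          refine Set.indicator_apply_le' (fun h => ?_) fun _ => zero_le
          rw [Set.indicator_of_mem]
          exact ⟨hs, (ENNReal.ofReal_lt_iff_lt_toReal (le_of_lt hs) h2).1 h⟩
      _ ≤ ∫⁻ s, (Set.Ioo 0 (2 * g x).toReal).indicator (fun _ => g x) s :=
          setLIntegral_le_lintegral _ _
      _ = 2 * g x ^ 2 := by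
          rw [lintegral_indicator measurableSet_Ioo, setLIntegral_const, Real.volume_Ioo,
            sub_zero, ENNReal.ofReal_toReal h2]
          ring
  rw [hlayer, ENNReal.ofReal_ofNat]
  calc _ ≤ 2 * ∫⁻ s in Set.Ioi (0 : ℝ), 2 * 5 ^ n *
          ∫⁻ x, ({p : ℝ × E | ENNReal.ofReal p.1 < 2 * g p.2}.indicator
            fun p => g p.2) (s, x) ∂μ := by
        gcongr 2 * ?_
        exact setLIntegral_mono' measurableSet_Ioi hkey
    _ = 2 * (2 * 5 ^ n * ∫⁻ x, (∫⁻ s in Set.Ioi (0 : ℝ),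
          ({p : ℝ × E | ENNReal.ofReal p.1 < 2 * g p.2}.indicator
            fun p => g p.2) (s, x)) ∂μ) := by
        rw [lintegral_const_mul' _ _ (by finiteness), lintegral_lintegral_swap]
        exact hmeas.aemeasurable
    _ ≤ 2 * (2 * 5 ^ n * ∫⁻ x, 2 * g x ^ 2 ∂μ) := by
        gcongr 2 * (2 * 5 ^ n * ?_)
        exact lintegral_mono hinner
    _ = _ := by
        rw [lintegral_const_mul' _ _ (by simp)]
        ring

/-! ### Oscillation bounded by the maximal function of the gradient -/

lemma lintegral_comp_smul_of_pos (F : E → ℝ≥0∞) {t : ℝ} (ht : 0 < t) :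
    ∫⁻ y, F (t • y) ∂μ = ENNReal.ofReal (t ^ Module.finrank ℝ E)⁻¹ * ∫⁻ y, F y ∂μ := by
  have h := (measurableEmbedding_const_smul₀ (α := E) ht.ne').lintegral_map (μ := μ) F
  rw [← h, Measure.map_addHaar_smul μ ht.ne', lintegral_smul_measure, abs_of_pos (by positivity),
    smul_eq_mul]

/-- Averages of `g` over the dilated balls `x + t • ball 0 R` are bounded by the maximal function,
uniformly in `t`. -/
lemma setLIntegral_ball_comp_le (g : E → ℝ≥0∞) (x : E) {t R : ℝ} (ht : 0 < t) (hR : 0 < R) :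
    ∫⁻ y in Metric.ball 0 R, g (x + t • y) ∂μ ≤ μ (Metric.ball 0 R) * maxFn μ g x := by
  have hind : ∀ y, (Metric.ball (0 : E) R).indicator (fun y => g (x + t • y)) y =
      (Metric.ball x (t * R)).indicator g (x + t • y) := by
    intro y
    have : y ∈ Metric.ball (0 : E) R ↔ x + t • y ∈ Metric.ball x (t * R) := by
      simp [norm_smul, abs_of_pos ht, ht]
    by_cases hy : y ∈ Metric.ball (0 : E) R
    · rw [Set.indicator_of_mem hy, Set.indicator_of_mem (this.1 hy)]
    · rw [Set.indicator_of_notMem hy, Set.indicator_of_notMem (fun h => hy (this.2 h))]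
  have htn : 0 < t ^ Module.finrank ℝ E := by positivity
  rw [← lintegral_indicator measurableSet_ball]
  simp_rw [hind]
  rw [lintegral_comp_smul_of_pos μ (fun z => (Metric.ball x (t * R)).indicator g (x + z)) ht,
    lintegral_add_left_eq_self (μ := μ) ((Metric.ball x (t * R)).indicator g) x,
    lintegral_indicator measurableSet_ball]
  calc _ ≤ ENNReal.ofReal (t ^ Module.finrank ℝ E)⁻¹ *
        (μ (Metric.ball x (t * R)) * maxFn μ g x) :=
        mul_le_mul_right (setLIntegral_ball_le_maxFn μ g x (by positivity)) _
    _ = _ := by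
        rw [Measure.addHaar_ball_mul_of_pos μ x ht, ← mul_assoc, ← mul_assoc,
          ← ENNReal.ofReal_mul (by positivity), inv_mul_cancel₀ htn.ne']
        simp

/-- Up to the common factor `μ (ball 0 R)`: the value `|v x|` is at most the mean of `|v|` over
`ball x R` plus `R` times the maximal function of `|∇v|` at `x`. This follows by integrating
`|v x| ≤ |v (x + y)| + R ∫₀¹ |∇v (x + t y)| dt` over `y ∈ ball 0 R`. -/
lemma measure_ball_mul_enorm_le {v : E → ℝ} (hv : ContDiff ℝ 1 v) (x : E) {R : ℝ} (hR : 0 < R) :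
    μ (Metric.ball 0 R) * ‖v x‖ₑ ≤ ∫⁻ y in Metric.ball x R, ‖v y‖ₑ ∂μ +
      μ (Metric.ball 0 R) * (ENNReal.ofReal R * maxFn μ (fun y => ‖fderiv ℝ v y‖ₑ) x) := by
  have hcont : Continuous fun y => fderiv ℝ v y := hv.continuous_fderiv one_ne_zero
  have hpt : ∀ y ∈ Metric.ball (0 : E) R, ‖v x‖ₑ ≤ ‖v (x + y)‖ₑ +
      ENNReal.ofReal R * ∫⁻ t in Set.Icc (0 : ℝ) 1, ‖fderiv ℝ v (x + t • y)‖ₑ := by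
    intro y hy
    have hline : ∀ t : ℝ, HasDerivAt (fun t : ℝ => v (x + t • y)) (fderiv ℝ v (x + t • y) y) t := by
      intro t
      have h1 : HasDerivAt (fun t : ℝ => x + t • y) y t := by
        simpa using ((hasDerivAt_id t).smul_const y).const_add x
      exact ((hv.differentiable one_ne_zero _).hasFDerivAt).comp_hasDerivAt t h1
    have hC : ContDiff ℝ 1 (fun t : ℝ => v (x + t • y)) := by fun_prop
    have h := enorm_sub_le_lintegral_deriv_of_contDiffOn_Icc (hC.contDiffOn (s := Set.Icc 0 1))
      zero_le_one
    simp only [(hline _).deriv, one_smul, zero_smul, add_zero] at h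
    have hy' : ‖y‖ₑ ≤ ENNReal.ofReal R := by
      rw [← ofReal_norm]
      exact ENNReal.ofReal_le_ofReal (mem_ball_zero_iff.1 hy).le
    calc ‖v x‖ₑ = ‖v (x + y) - (v (x + y) - v x)‖ₑ := by congr 1; ring
      _ ≤ ‖v (x + y)‖ₑ + ‖v (x + y) - v x‖ₑ := enorm_sub_le
      _ ≤ ‖v (x + y)‖ₑ + ∫⁻ t in Set.Icc (0 : ℝ) 1,
            ENNReal.ofReal R * ‖fderiv ℝ v (x + t • y)‖ₑ := by
          refine add_le_add_right (h.trans (lintegral_mono fun t => ?_)) _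
          refine ((fderiv ℝ v (x + t • y)).le_opENorm y).trans ?_
          rw [mul_comm]
          exact mul_le_mul_left hy' _
      _ = _ := by rw [lintegral_const_mul' _ _ (by simp)]
  have hswap : ∫⁻ y in Metric.ball (0 : E) R, (∫⁻ t in Set.Icc (0 : ℝ) 1,
      ‖fderiv ℝ v (x + t • y)‖ₑ) ∂μ ≤
      μ (Metric.ball 0 R) * maxFn μ (fun y => ‖fderiv ℝ v y‖ₑ) x := by
    rw [lintegral_lintegral_swap]
    swap
    · refine Measurable.aemeasurable ?_
      refine Continuous.measurable ?_
      simp only [Function.uncurry_def]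
      fun_prop
    calc _ = ∫⁻ t in Set.Ioc (0 : ℝ) 1, (∫⁻ y in Metric.ball (0 : E) R,
          ‖fderiv ℝ v (x + t • y)‖ₑ ∂μ) := setLIntegral_congr Ioc_ae_eq_Icc.symm
      _ ≤ ∫⁻ t in Set.Ioc (0 : ℝ) 1, μ (Metric.ball 0 R) *
          maxFn μ (fun y => ‖fderiv ℝ v y‖ₑ) x := by
          refine setLIntegral_mono' measurableSet_Ioc fun t ht => ?_
          exact setLIntegral_ball_comp_le μ (fun y => ‖fderiv ℝ v y‖ₑ) x ht.1 hR
      _ = _ := by simp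
  have htrans : ∫⁻ y in Metric.ball (0 : E) R, ‖v (x + y)‖ₑ ∂μ =
      ∫⁻ y in Metric.ball x R, ‖v y‖ₑ ∂μ := by
    rw [← lintegral_indicator measurableSet_ball, ← lintegral_indicator measurableSet_ball,
      ← lintegral_add_left_eq_self (μ := μ) ((Metric.ball x R).indicator _) x]
    refine lintegral_congr fun y => ?_
    simp [Set.indicator]
  calc μ (Metric.ball 0 R) * ‖v x‖ₑ = ∫⁻ _ in Metric.ball (0 : E) R, ‖v x‖ₑ ∂μ := by
        simp [mul_comm]
    _ ≤ ∫⁻ y in Metric.ball (0 : E) R, (‖v (x + y)‖ₑ +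
          ENNReal.ofReal R * ∫⁻ t in Set.Icc (0 : ℝ) 1, ‖fderiv ℝ v (x + t • y)‖ₑ) ∂μ :=
        setLIntegral_mono' measurableSet_ball hpt
    _ = ∫⁻ y in Metric.ball x R, ‖v y‖ₑ ∂μ + ENNReal.ofReal R *
          ∫⁻ y in Metric.ball (0 : E) R, (∫⁻ t in Set.Icc (0 : ℝ) 1,
            ‖fderiv ℝ v (x + t • y)‖ₑ) ∂μ := by
        have hvm : Measurable fun y => ‖v (x + y)‖ₑ := by
          exact (hv.continuous.comp (continuous_const_add x)).enorm.measurable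
        rw [lintegral_add_left hvm, htrans, lintegral_const_mul' _ _ (by simp)]
    _ ≤ _ := by
        refine add_le_add_right ((mul_le_mul_right hswap _).trans_eq ?_) _
        ring

/-! ### The local energy -/

/-- A density whose integral is controlled by the double integral of `f y f z |y - z|^{-4}`:
`W(x) = ∬ f y f z (|x - y| + |y - z|)^{-(n+4)} dy dz` with `n = dim E`. The kernel is the
reciprocal in `ℝ≥0∞`, so it is `∞` at `x = y = z`. -/
noncomputable def localEnergy (f : E → ℝ≥0∞) (x : E) : ℝ≥0∞ :=
  ∫⁻ y, ∫⁻ z, f y * f z * (ENNReal.ofReal (‖x - y‖ + ‖y - z‖) ^ (Module.finrank ℝ E + 4))⁻¹ ∂μ ∂μ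

lemma measurable_localEnergy {f : E → ℝ≥0∞} (hf : Measurable f) :
    Measurable (localEnergy μ f) := by
  unfold localEnergy
  refine Measurable.lintegral_prod_right' (f := fun p : E × E => ∫⁻ z, f p.2 * f z *
    (ENNReal.ofReal (‖p.1 - p.2‖ + ‖p.2 - z‖) ^ (Module.finrank ℝ E + 4))⁻¹ ∂μ) ?_
  refine Measurable.lintegral_prod_right' (f := fun p : (E × E) × E => f p.1.2 * f p.2 *
    (ENNReal.ofReal (‖p.1.1 - p.1.2‖ + ‖p.1.2 - p.2‖) ^ (Module.finrank ℝ E + 4))⁻¹) ?_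
  fun_prop

/-- Integrating the kernel of `localEnergy` in `x` gives a multiple of `a ^ (-4)`, by scaling. -/
lemma lintegral_kernel {a : ℝ} (ha : 0 < a) (y : E) :
    ∫⁻ x, (ENNReal.ofReal (‖x - y‖ + a) ^ (Module.finrank ℝ E + 4))⁻¹ ∂μ =
      (∫⁻ w : E, ENNReal.ofReal ((1 + ‖w‖) ^ (-((Module.finrank ℝ E + 4 : ℕ) : ℝ))) ∂μ) *
        ENNReal.ofReal (a ^ (-4 : ℝ)) := by
  set n := Module.finrank ℝ E with hn
  have h1 : ∀ x : E, (ENNReal.ofReal (‖x - y‖ + a) ^ (n + 4))⁻¹ =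
      ENNReal.ofReal ((a ^ (n + 4))⁻¹) *
        ENNReal.ofReal ((1 + ‖a⁻¹ • (x - y)‖) ^ (-((n + 4 : ℕ) : ℝ))) := by
    intro x
    rw [← ENNReal.ofReal_pow (by positivity), ← ENNReal.ofReal_inv_of_pos (by positivity),
      ← ENNReal.ofReal_mul (by positivity), Real.rpow_neg (by positivity), Real.rpow_natCast,
      ← mul_inv, ← mul_pow, norm_smul, Real.norm_of_nonneg (by positivity)]
    congr 3
    field_simp
    ring
  simp_rw [h1]
  rw [lintegral_const_mul' _ _ (by simp),
    lintegral_sub_right_eq_self (μ := μ)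
      (fun x => ENNReal.ofReal ((1 + ‖a⁻¹ • x‖) ^ (-((n + 4 : ℕ) : ℝ)))) y,
    lintegral_comp_smul_of_pos μ (fun x => ENNReal.ofReal ((1 + ‖x‖) ^ (-((n + 4 : ℕ) : ℝ))))
      (inv_pos.2 ha), ← mul_assoc, ← ENNReal.ofReal_mul (by positivity), mul_comm]
  congr 2
  rw [show (-4 : ℝ) = -((4 : ℕ) : ℝ) by norm_num, Real.rpow_neg ha.le, Real.rpow_natCast, ← hn,
    inv_pow, inv_inv, pow_add]
  field_simp

lemma lintegral_localEnergy_le [Nontrivial E] {f : E → ℝ≥0∞} (hf : Measurable f) :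
    ∫⁻ x, localEnergy μ f x ∂μ ≤
      (∫⁻ w : E, ENNReal.ofReal ((1 + ‖w‖) ^ (-((Module.finrank ℝ E + 4 : ℕ) : ℝ))) ∂μ) *
        ∫⁻ y, ∫⁻ z, f y * f z * ENNReal.ofReal (‖y - z‖ ^ (-4 : ℝ)) ∂μ ∂μ := by
  set A := ∫⁻ w : E, ENNReal.ofReal ((1 + ‖w‖) ^ (-((Module.finrank ℝ E + 4 : ℕ) : ℝ))) ∂μ
  have hA : A ≠ ∞ := (finite_integral_one_add_norm (by push_cast; linarith)).ne
  have hm : Measurable fun p : (E × E) × E => f p.1.2 * f p.2 *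
    (ENNReal.ofReal (‖p.1.1 - p.1.2‖ + ‖p.1.2 - p.2‖) ^ (Module.finrank ℝ E + 4))⁻¹ := by
    fun_prop
  unfold localEnergy
  rw [lintegral_lintegral_swap, ← lintegral_const_mul' _ _ hA]
  swap
  · exact hm.lintegral_prod_right'.aemeasurable
  refine lintegral_mono fun y => ?_
  rw [lintegral_lintegral_swap, ← lintegral_const_mul' _ _ hA]
  swap
  · exact (hm.comp (f := fun p : E × E => ((p.1, y), p.2)) (by fun_prop)).aemeasurable
  -- On the diagonal `‖y - z‖ ^ (-4)` takes the junk value `0`, but the diagonal is negligible.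
  refine lintegral_mono_ae ?_
  have hne : ∀ᵐ z ∂μ, z ≠ y := by
    simp [ae_iff, measure_singleton]
  filter_upwards [hne] with z hz
  rw [lintegral_const_mul _ (by fun_prop), lintegral_kernel μ (norm_sub_pos_iff.2 hz.symm) y]
  exact le_of_eq (by ring)

/-- For `y, z ∈ ball x R` the kernel of `localEnergy` is at least `(3R)^{-(n+4)}`. -/
lemma sq_setLIntegral_ball_le (f : E → ℝ≥0∞) (hf : Measurable f) (x : E) {R : ℝ} (hR : 0 < R) :
    (∫⁻ y in Metric.ball x R, f y ∂μ) ^ 2 ≤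
      ENNReal.ofReal (3 * R) ^ (Module.finrank ℝ E + 4) * localEnergy μ f x := by
  set n := Module.finrank ℝ E with hn
  set P := ENNReal.ofReal (3 * R) ^ (n + 4) with hP
  have hP0 : P ≠ 0 := pow_ne_zero _ (by simpa using hR)
  have hPt : P ≠ ∞ := ENNReal.pow_ne_top ENNReal.ofReal_ne_top
  have hPi : P⁻¹ ≠ ∞ := ENNReal.inv_ne_top.2 hP0
  have h : P⁻¹ * (∫⁻ y in Metric.ball x R, f y ∂μ) ^ 2 ≤ localEnergy μ f x := by
    calc P⁻¹ * (∫⁻ y in Metric.ball x R, f y ∂μ) ^ 2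
        = ∫⁻ y in Metric.ball x R, ∫⁻ z in Metric.ball x R, f y * f z * P⁻¹ ∂μ ∂μ := by
          have : ∀ y, ∫⁻ z in Metric.ball x R, f y * f z * P⁻¹ ∂μ =
              f y * ((∫⁻ z in Metric.ball x R, f z ∂μ) * P⁻¹) := by
            intro y
            rw [lintegral_mul_const' _ _ hPi, lintegral_const_mul _ hf, mul_assoc]
          simp_rw [this]
          rw [lintegral_mul_const _ hf]
          ring
      _ ≤ ∫⁻ y in Metric.ball x R, ∫⁻ z in Metric.ball x R,
            f y * f z * (ENNReal.ofReal (‖x - y‖ + ‖y - z‖) ^ (n + 4))⁻¹ ∂μ ∂μ := by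
          refine setLIntegral_mono' measurableSet_ball fun y hy => ?_
          refine setLIntegral_mono' measurableSet_ball fun z hz => ?_
          refine mul_le_mul_right (ENNReal.inv_le_inv.2 ?_) _
          refine pow_le_pow_left' (ENNReal.ofReal_le_ofReal ?_) _
          rw [Metric.mem_ball, dist_eq_norm] at hy hz
          have h1 : ‖y - z‖ ≤ ‖y - x‖ + ‖z - x‖ := by
            simpa using norm_sub_le (y - x) (z - x)
          rw [norm_sub_rev x y]
          linarith
      _ ≤ localEnergy μ f x :=
          (setLIntegral_le_lintegral _ _).trans
            (lintegral_mono fun y => setLIntegral_le_lintegral _ _)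
  calc _ = P * (P⁻¹ * (∫⁻ y in Metric.ball x R, f y ∂μ) ^ 2) := by
        rw [← mul_assoc, ENNReal.mul_inv_cancel hP0 hPt, one_mul]
    _ ≤ _ := mul_le_mul_right h _

/-! ### The pointwise inequality and integration -/

/-- The Cauchy-Schwarz inequality on a set. -/
lemma sq_setLIntegral_le {α : Type*} [MeasurableSpace α] (ν : Measure α) (s : Set α)
    {f : α → ℝ≥0∞} (hf : Measurable f) :
    (∫⁻ x in s, f x ∂ν) ^ 2 ≤ ν s * ∫⁻ x in s, f x ^ 2 ∂ν := by
  have h := ENNReal.lintegral_mul_norm_pow_le (μ := ν.restrict s) (f := fun x => f x ^ 2)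
    (g := fun _ => 1) (by fun_prop) (by fun_prop) (p := 1 / 2) (q := 1 / 2) (by norm_num)
    (by norm_num) (by norm_num)
  have hsq : ∀ a : ℝ≥0∞, (a ^ 2) ^ (1 / 2 : ℝ) = a := fun a => by
    rw [← ENNReal.rpow_natCast, ← ENNReal.rpow_mul]; norm_num
  have hsq' : ∀ a : ℝ≥0∞, (a ^ (1 / 2 : ℝ)) ^ 2 = a := fun a => by
    rw [← ENNReal.rpow_natCast, ← ENNReal.rpow_mul]; norm_num
  simp only [hsq, ENNReal.one_rpow, mul_one, lintegral_one, Measure.restrict_apply_univ] at h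
  calc _ ≤ _ := pow_le_pow_left' h 2
    _ = _ := by rw [mul_pow, hsq', hsq', mul_comm]

/-- If the maximal function of the gradient vanishes at one point, `v` vanishes there: `|v x|` is
then at most the mean of `|v|` over arbitrarily large balls around `x`. -/
lemma enorm_eq_zero_of_maxFn_eq_zero [Nontrivial E] {v : E → ℝ} (hv : ContDiff ℝ 1 v)
    (hvi : ∫⁻ y, ‖v y‖ₑ ∂μ ≠ ∞) {x : E} (hx : maxFn μ (fun y => ‖fderiv ℝ v y‖ₑ) x = 0) :
    ‖v x‖ₑ = 0 := by
  by_contra hne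
  have hβ0 : μ (Metric.ball (0 : E) 1) ≠ 0 := (Metric.measure_ball_pos μ _ one_pos).ne'
  obtain ⟨m, hm⟩ := ENNReal.exists_nat_mul_gt (mul_ne_zero hβ0 hne) hvi
  have h := measure_ball_mul_enorm_le μ hv x (R := (m : ℝ) + 1) (by positivity)
  rw [hx, mul_zero, mul_zero, add_zero, Measure.addHaar_ball μ _ (by positivity)] at h
  refine absurd (h.trans (setLIntegral_le_lintegral _ _)) (not_le.2 (hm.trans_le ?_))
  rw [mul_assoc]
  refine mul_le_mul_left ?_ _
  rw [← ENNReal.ofReal_natCast]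
  refine ENNReal.ofReal_le_ofReal ?_
  have h1 : (1 : ℝ) ≤ m + 1 := by linarith [(Nat.cast_nonneg m : (0 : ℝ) ≤ m)]
  linarith [le_self_pow₀ h1 (Module.finrank_pos (R := ℝ) (M := E)).ne']

/-- The pointwise inequality `|v|^n ≤ C W G^{n-4}`, where `W` is the local energy of `v²` and `G`
the maximal function of `|∇v|`. -/
lemma enorm_pow_le [Nontrivial E] {v : E → ℝ} (hv : ContDiff ℝ 1 v)
    (hvi : ∫⁻ y, ‖v y‖ₑ ∂μ ≠ ∞) (hn4 : 4 ≤ Module.finrank ℝ E) {x : E}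
    (hGt : maxFn μ (fun y => ‖fderiv ℝ v y‖ₑ) x ≠ ∞) :
    μ (Metric.ball 0 1) ^ 2 * ‖v x‖ₑ ^ Module.finrank ℝ E ≤
      2 ^ Module.finrank ℝ E * 3 ^ (Module.finrank ℝ E + 4) *
        (localEnergy μ (fun y => ‖v y‖ₑ ^ 2) x *
          maxFn μ (fun y => ‖fderiv ℝ v y‖ₑ) x ^ (Module.finrank ℝ E - 4)) := by
  set n := Module.finrank ℝ E with hn
  set G := maxFn μ (fun y => ‖fderiv ℝ v y‖ₑ) x with hG
  set W := localEnergy μ (fun y => ‖v y‖ₑ ^ 2) x with hW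
  rcases eq_or_ne ‖v x‖ₑ 0 with hV | hV
  · rw [hV, zero_pow (by omega), mul_zero]
    exact zero_le
  have hG0 : G ≠ 0 := fun h => hV (enorm_eq_zero_of_maxFn_eq_zero μ hv hvi h)
  set β := μ (Metric.ball (0 : E) 1) with hβ
  have hβ0 : β ≠ 0 := (Metric.measure_ball_pos μ _ one_pos).ne'
  have hβt : β ≠ ∞ := measure_ball_lt_top.ne
  have hvm : Measurable fun y => ‖v y‖ₑ := hv.continuous.enorm.measurable
  -- At the radius `ρ = |v x| / (2 G)` the gradient term `ρ G` is exactly half of `|v x|`.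
  set ρ := ‖v x‖ₑ / (2 * G) with hρ
  have h2G0 : 2 * G ≠ 0 := mul_ne_zero two_ne_zero hG0
  have h2Gt : 2 * G ≠ ∞ := ENNReal.mul_ne_top (by simp) hGt
  have hρ0 : ρ ≠ 0 := (ENNReal.div_pos hV h2Gt).ne'
  have hρt : ρ ≠ ∞ := ENNReal.div_ne_top enorm_ne_top h2G0
  have hρV : ‖v x‖ₑ = 2 * (ρ * G) := by
    rw [hρ, ← mul_assoc, mul_comm 2, mul_assoc, ENNReal.div_mul_cancel h2G0 h2Gt]
  have hR : 0 < ρ.toReal := ENNReal.toReal_pos hρ0 hρt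
  have hRρ : ENNReal.ofReal ρ.toReal = ρ := ENNReal.ofReal_toReal hρt
  have hB : μ (Metric.ball (0 : E) ρ.toReal) = ρ ^ n * β := by
    rw [Measure.addHaar_ball μ _ hR.le, ENNReal.ofReal_pow hR.le, hRρ]
  have hBx : μ (Metric.ball x ρ.toReal) = ρ ^ n * β := by
    rw [Measure.addHaar_ball μ _ hR.le, ENNReal.ofReal_pow hR.le, hRρ]
  have hpn0 : ρ ^ n ≠ 0 := pow_ne_zero _ hρ0
  have hpnt : ρ ^ n ≠ ∞ := ENNReal.pow_ne_top hρt
  have h1 : ρ ^ n * β * (ρ * G) ≤ ∫⁻ y in Metric.ball x ρ.toReal, ‖v y‖ₑ ∂μ := by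
    have h := measure_ball_mul_enorm_le μ hv x hR
    rw [hB, hRρ, ← hG, hρV, two_mul, mul_add] at h
    refine (ENNReal.add_le_add_iff_right ?_).1 h
    exact ENNReal.mul_ne_top (ENNReal.mul_ne_top hpnt hβt) (ENNReal.mul_ne_top hρt hGt)
  have h2 := sq_setLIntegral_le μ (Metric.ball x ρ.toReal) hvm
  have h3 := sq_setLIntegral_ball_le μ (fun y => ‖v y‖ₑ ^ 2) (hvm.pow_const 2) x hR
  rw [← hn, ← hW, ENNReal.ofReal_mul (by norm_num), hRρ, ENNReal.ofReal_ofNat] at h3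
  rw [hBx] at h2
  have h4 : (ρ ^ n * β * (ρ * G)) ^ 4 ≤ (ρ ^ n * β) ^ 2 * ((3 * ρ) ^ (n + 4) * W) := by
    calc _ ≤ (∫⁻ y in Metric.ball x ρ.toReal, ‖v y‖ₑ ∂μ) ^ 4 := pow_le_pow_left' h1 4
      _ = ((∫⁻ y in Metric.ball x ρ.toReal, ‖v y‖ₑ ∂μ) ^ 2) ^ 2 := by ring
      _ ≤ (ρ ^ n * β * ∫⁻ y in Metric.ball x ρ.toReal, ‖v y‖ₑ ^ 2 ∂μ) ^ 2 :=
          pow_le_pow_left' h2 2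
      _ = (ρ ^ n * β) ^ 2 * (∫⁻ y in Metric.ball x ρ.toReal, ‖v y‖ₑ ^ 2 ∂μ) ^ 2 := by ring
      _ ≤ _ := mul_le_mul_right h3 _
  have h5 : β ^ 2 * (ρ ^ n * G ^ 4) ≤ 3 ^ (n + 4) * W := by
    set Q := (ρ ^ n * β) ^ 2 * ρ ^ (n + 4) with hQ
    have hQ0 : Q ≠ 0 := mul_ne_zero (pow_ne_zero _ (mul_ne_zero hpn0 hβ0)) (pow_ne_zero _ hρ0)
    have hQt : Q ≠ ∞ := ENNReal.mul_ne_top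
      (ENNReal.pow_ne_top (ENNReal.mul_ne_top hpnt hβt)) (ENNReal.pow_ne_top hρt)
    refine (ENNReal.mul_le_mul_iff_right hQ0 hQt).1 ?_
    calc Q * (β ^ 2 * (ρ ^ n * G ^ 4)) = (ρ ^ n * β * (ρ * G)) ^ 4 := by rw [hQ]; ring
      _ ≤ _ := h4
      _ = _ := by rw [hQ]; ring
  have hGn : G ^ n = G ^ 4 * G ^ (n - 4) := by rw [← pow_add]; congr 1; omega
  calc β ^ 2 * ‖v x‖ₑ ^ n = 2 ^ n * G ^ (n - 4) * (β ^ 2 * (ρ ^ n * G ^ 4)) := by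
        rw [hρV, mul_pow, mul_pow, hGn]; ring
    _ ≤ 2 ^ n * G ^ (n - 4) * (3 ^ (n + 4) * W) := mul_le_mul_right h5 _
    _ = _ := by ring

/-- Integration of the pointwise inequality, by Hölder's inequality with weights `2 / (d - 2)` and
`(d - 4) / (d - 2)`. -/
lemma holder_step {α : Type*} [MeasurableSpace α] (ν : Measure α) {d : ℕ} (hd : 5 ≤ d)
    {V W G : α → ℝ≥0∞} (hW : Measurable W) (hG : Measurable G) {K : ℝ≥0∞} (hK : K ≠ ∞)
    (h : ∀ x, V x ^ d ≤ K * (W x * G x ^ (d - 4))) :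
    (∫⁻ x, V x ^ (2 * d / (d - 2) : ℝ) ∂ν) ^ (((d : ℝ) - 2) / 2) ≤
      K * ((∫⁻ x, W x ∂ν) * (∫⁻ x, G x ^ 2 ∂ν) ^ (((d : ℝ) - 4) / 2)) := by
  have hd' : (5 : ℝ) ≤ d := by exact_mod_cast hd
  have hd2 : (0 : ℝ) < d - 2 := by linarith
  have hd4 : (0 : ℝ) < d - 4 := by linarith
  set e : ℝ := 2 / (d - 2) with he
  set q : ℝ := (d - 4) / (d - 2) with hq
  have he0 : 0 < e := by positivity
  have hq0 : 0 < q := by positivity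
  have hcast : ((d - 4 : ℕ) : ℝ) = (d : ℝ) - 4 := by
    rw [Nat.cast_sub (by omega)]; norm_num
  have hpt : ∀ x, V x ^ (2 * d / (d - 2) : ℝ) ≤ K ^ e * (W x ^ e * (G x ^ 2) ^ q) := by
    intro x
    have h1 := ENNReal.rpow_le_rpow (h x) he0.le
    rw [ENNReal.mul_rpow_of_nonneg _ _ he0.le, ENNReal.mul_rpow_of_nonneg _ _ he0.le,
      ← ENNReal.rpow_natCast, ← ENNReal.rpow_mul, ← ENNReal.rpow_natCast, ← ENNReal.rpow_mul,
      hcast] at h1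
    rw [← ENNReal.rpow_natCast (G x) 2, ← ENNReal.rpow_mul]
    have e1 : (2 * d / (d - 2) : ℝ) = d * e := by rw [he]; ring
    have e2 : ((2 : ℕ) : ℝ) * q = (d - 4) * e := by rw [he, hq]; push_cast; ring
    rw [e1, e2]
    exact h1
  have hint : ∫⁻ x, V x ^ (2 * d / (d - 2) : ℝ) ∂ν ≤
      K ^ e * ((∫⁻ x, W x ∂ν) ^ e * (∫⁻ x, G x ^ 2 ∂ν) ^ q) := by
    calc _ ≤ ∫⁻ x, K ^ e * (W x ^ e * (G x ^ 2) ^ q) ∂ν := lintegral_mono hpt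
      _ = K ^ e * ∫⁻ x, W x ^ e * (G x ^ 2) ^ q ∂ν :=
          lintegral_const_mul' _ _ (ENNReal.rpow_ne_top_of_nonneg he0.le hK)
      _ ≤ _ := by
          refine mul_le_mul_right ?_ _
          refine ENNReal.lintegral_mul_norm_pow_le hW.aemeasurable
            (hG.pow_const 2).aemeasurable he0.le hq0.le ?_
          rw [he, hq]; field_simp; ring
  have hs0 : (0 : ℝ) ≤ (d - 2) / 2 := by positivity
  have e3 : e * (((d : ℝ) - 2) / 2) = 1 := by rw [he]; field_simp
  have e4 : q * (((d : ℝ) - 2) / 2) = (d - 4) / 2 := by rw [hq]; field_simp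
  calc _ ≤ _ := ENNReal.rpow_le_rpow hint hs0
    _ = _ := by
      rw [ENNReal.mul_rpow_of_nonneg _ _ hs0, ENNReal.mul_rpow_of_nonneg _ _ hs0,
        ← ENNReal.rpow_mul, ← ENNReal.rpow_mul, ← ENNReal.rpow_mul, e3, e4, ENNReal.rpow_one,
        ENNReal.rpow_one]

end HartreeGNS

open HartreeGNS in
/-- For `d ≥ 5`, there is `C > 0` such that every smooth compactly supported
`v : ℝ^d → ℝ` satisfies
`‖v‖^d_{L^{2d/(d-2)}} ≤ C ‖∇v‖^{d-4}_{L²} ∬ v(x)² v(y)² |x-y|^{-4} dx dy`. -/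
theorem Lp_norm_pow_le_gradient_hartree (d : ℕ) (hd : 5 ≤ d) :
    ∃ C : ℝ, 0 < C ∧
      ∀ v : EuclideanSpace ℝ (Fin d) → ℝ, ContDiff ℝ (⊤ : ℕ∞) v → HasCompactSupport v →
        eLpNorm v (ENNReal.ofReal (2 * d / (d - 2))) volume ^ d
          ≤ ENNReal.ofReal C *
              eLpNorm (fun x => ‖fderiv ℝ v x‖) 2 volume ^ (d - 4) *
              ∫⁻ x, ∫⁻ y, ENNReal.ofReal ((v x) ^ 2) * ENNReal.ofReal ((v y) ^ 2) *
                ENNReal.ofReal (‖x - y‖ ^ (-4 : ℝ)) := by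
  have : Nonempty (Fin d) := ⟨⟨0, by omega⟩⟩
  have hd' : (5 : ℝ) ≤ d := by exact_mod_cast hd
  have hd2 : (0 : ℝ) < d - 2 := by linarith
  have hd4 : (0 : ℝ) < d - 4 := by linarith
  have hcast : ((d - 4 : ℕ) : ℝ) = (d : ℝ) - 4 := by
    rw [Nat.cast_sub (by omega)]; norm_num
  have hfin : Module.finrank ℝ (EuclideanSpace ℝ (Fin d)) = d := by simp
  set β := volume (Metric.ball (0 : EuclideanSpace ℝ (Fin d)) 1) with hβ
  have hβ0 : β ≠ 0 := (Metric.measure_ball_pos volume _ one_pos).ne'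
  have hβt : β ≠ ∞ := measure_ball_lt_top.ne
  set K : ℝ≥0∞ := 2 ^ d * 3 ^ (d + 4) / β ^ 2 with hK
  have hKt : K ≠ ∞ := ENNReal.div_ne_top (by finiteness) (pow_ne_zero _ hβ0)
  set A := ∫⁻ w : EuclideanSpace ℝ (Fin d),
    ENNReal.ofReal ((1 + ‖w‖) ^ (-((Module.finrank ℝ (EuclideanSpace ℝ (Fin d)) + 4 : ℕ) : ℝ)))
    with hA
  have hAt : A ≠ ∞ := (finite_integral_one_add_norm (by push_cast; linarith)).ne
  set D : ℝ≥0∞ := (8 * 5 ^ d) ^ (((d : ℝ) - 4) / 2) with hD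
  have hDt : D ≠ ∞ := ENNReal.rpow_ne_top_of_nonneg (by positivity) (by finiteness)
  have hKAD : K * A * D ≠ ∞ := ENNReal.mul_ne_top (ENNReal.mul_ne_top hKt hAt) hDt
  refine ⟨(K * A * D).toReal + 1, by positivity, fun v hv hcs => ?_⟩
  have hv1 : ContDiff ℝ 1 v := hv.of_le (by exact_mod_cast le_top)
  have hgc : Continuous fun y => fderiv ℝ v y := hv1.continuous_fderiv one_ne_zero
  set g : EuclideanSpace ℝ (Fin d) → ℝ≥0∞ := fun y => ‖fderiv ℝ v y‖ₑ with hg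
  have hgm : Measurable g := hgc.enorm.measurable
  obtain ⟨c, hc⟩ := hgc.bounded_above_of_compact_support (hcs.fderiv ℝ)
  have hgb : ∀ y, g y ≤ ENNReal.ofReal c := fun y => by
    simp only [hg, ← ofReal_norm]
    exact ENNReal.ofReal_le_ofReal (hc y)
  have hvi : ∫⁻ y, ‖v y‖ₑ ≠ ∞ :=
    (hv1.continuous.integrable_of_hasCompactSupport hcs).hasFiniteIntegral.ne
  have hfm : Measurable fun y => ‖v y‖ₑ ^ 2 := hv1.continuous.enorm.measurable.pow_const 2
  have hf : ∀ y, ENNReal.ofReal (v y ^ 2) = ‖v y‖ₑ ^ 2 := fun y => by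
    rw [← ofReal_norm, ← ENNReal.ofReal_pow (norm_nonneg _), Real.norm_eq_abs, sq_abs]
  simp_rw [hf]
  set H := ∫⁻ x, ∫⁻ y, ‖v x‖ₑ ^ 2 * ‖v y‖ₑ ^ 2 * ENNReal.ofReal (‖x - y‖ ^ (-4 : ℝ)) with hH
  have hpt : ∀ x, ‖v x‖ₑ ^ d ≤
      K * (localEnergy volume (fun y => ‖v y‖ₑ ^ 2) x * maxFn volume g x ^ (d - 4)) := by
    intro x
    have h := enorm_pow_le volume hv1 hvi (by omega)
      (ne_top_of_le_ne_top ofReal_ne_top (maxFn_le_of_le volume hgb x))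
    rw [hfin] at h
    rw [hK, ENNReal.mul_comm_div, ← mul_div_assoc]
    rw [ENNReal.le_div_iff_mul_le (Or.inl (pow_ne_zero _ hβ0)) (Or.inl (ENNReal.pow_ne_top hβt))]
    rw [mul_comm]
    exact h
  have hhol := holder_step volume hd (measurable_localEnergy volume hfm)
    (measurable_maxFn volume g) hKt hpt
  have hW := lintegral_localEnergy_le volume hfm
  have hM := lintegral_maxFn_sq_le volume hgm ofReal_ne_top hgb
  rw [hfin] at hM
  have hp0 : (0 : ℝ) < 2 * d / (d - 2) := by positivity
  have hLHS : eLpNorm v (ENNReal.ofReal (2 * d / (d - 2))) volume ^ d =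
      (∫⁻ x, ‖v x‖ₑ ^ (2 * d / (d - 2) : ℝ)) ^ (((d : ℝ) - 2) / 2) := by
    rw [eLpNorm_eq_lintegral_rpow_enorm_toReal (by simpa using hp0) ofReal_ne_top,
      ENNReal.toReal_ofReal hp0.le, ← ENNReal.rpow_natCast, ← ENNReal.rpow_mul]
    congr 1
    field_simp
  have hgrad : eLpNorm (fun x => ‖fderiv ℝ v x‖) 2 volume ^ (d - 4) =
      (∫⁻ x, g x ^ 2) ^ (((d : ℝ) - 4) / 2) := by
    rw [eLpNorm_norm, eLpNorm_eq_lintegral_rpow_enorm_toReal two_ne_zero (by simp),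
      ← ENNReal.rpow_natCast, ← ENNReal.rpow_mul, hcast]
    simp only [ENNReal.toReal_ofNat, ENNReal.rpow_ofNat, hg]
    congr 1
    ring
  rw [hLHS, hgrad]
  have h4 : (0 : ℝ) ≤ (d - 4) / 2 := by positivity
  calc _ ≤ _ := hhol
    _ ≤ K * ((A * H) * (8 * 5 ^ d * ∫⁻ x, g x ^ 2) ^ (((d : ℝ) - 4) / 2)) :=
        mul_le_mul_right (mul_le_mul' hW (ENNReal.rpow_le_rpow hM h4)) _
    _ = K * A * D * (∫⁻ x, g x ^ 2) ^ (((d : ℝ) - 4) / 2) * H := by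
        rw [ENNReal.mul_rpow_of_nonneg _ _ h4, ← hD]; ring
    _ ≤ _ := by
        refine mul_le_mul_left (mul_le_mul_left ?_ _) _
        exact (ENNReal.le_ofReal_iff_toReal_le hKAD (by positivity)).2 (by linarith)
end

section
/- Let d ≥ 5. There exists a constant C > 0 such that for every smooth compactly supported function v : ℝ^d → ℝ, ‖v‖_{L^{2d/(d−2)}(ℝ^d)} ≤ C ( ‖∇v‖²_{L²(ℝ^d)} + ∬_{ℝ^d×ℝ^d} v(x)² v(y)² |x − y|^{-4} dx dy )^{(d−2)/(2d)}; that is, the L^{2d/(d−2)} norm of v is controlled by the energy functional (kinetic gradient part plus Hartree potential part) raised to the power (d−2)/(2d). -/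
open MeasureTheory ENNReal

/-!
Put `α = 2/(d-2)` and `p = 2d/(d-2) = 2 + 2α = αd`. It suffices to show
`∫ |v|^p ≤ K (‖∇v‖² + H(v))`, where `H(v)` is the Hartree energy (`lintegral_rpow_le`).

To a point `x` with `a = |v x| > 0` attach the length `r = a^(-α)`. The ball of radius `r` has
volume `ω a^(-p)`, hence `ω ∫ |v|^p = ∫ ∫_{‖h‖ < r(x)} |v x|^(2p) dh dx`. The pairs `(x, h)` are of
two kinds (`pointwise_bound`).

* If `|v (x + h)| ≥ a/2`, then `v(x)² v(x+h)² ‖h‖^(-4) ≥ a^4 r^(-4) / 4 = a^(2p) / 4`, so these pairs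
  contribute at most `4 H(v)`.
* If `|v (x + h)| < a/2`, then a truncation of `v` between the levels `a/2` and `a` gives
  `a² ≤ L ‖h‖² ∫₀¹ 1_{a/2 ≤ |v(x+th)| ≤ a} ‖∇v(x+th)‖² dt` (`segment_bound`). On the set of
  integration `a` is comparable to `b = |v(x+th)|` and `‖h‖ < b^(-α)`, so `a^(2p)` is at most a
  constant times the `t`-integral of `b^p ‖∇v(x+th)‖²`. Substituting `z = x + th` and integrating
  over `‖h‖ < |v z|^(-α)` turns this into a multiple of `‖∇v‖²` (`lintegral_gradDensity_le`).
-/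

/-- A fixed `C¹` profile `ψ`, vanishing on `|s| < 1/2`, equal to `1` at `s = ±1`, whose derivative
is bounded and lives on `1/2 ≤ |s| ≤ 1`. -/
lemma exists_cutoff : ∃ (ψ : ℝ → ℝ) (L : ℝ), ContDiff ℝ 1 ψ ∧ 0 < L ∧
    (∀ s, |deriv ψ s| ≤ L) ∧ (∀ s, |s| < 1 / 2 → ψ s = 0) ∧ (∀ s, |s| = 1 → ψ s = 1) ∧
    ∀ s, deriv ψ s ≠ 0 → 1 / 2 ≤ |s| ∧ |s| ≤ 1 := by
  set ψ : ℝ → ℝ := fun s => Real.smoothTransition ((4 * s ^ 2 - 1) / 3) with hψ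
  have hc : ContDiff ℝ 1 ψ := by
    refine (Real.smoothTransition.contDiff (n := 1)).comp ?_
    fun_prop
  have h0 : ∀ s, |s| < 1 / 2 → ψ s = 0 := by
    intro s hs
    apply Real.smoothTransition.zero_of_nonpos
    have := abs_lt.1 hs
    nlinarith
  have h1 : ∀ s, 1 ≤ |s| → ψ s = 1 := by
    intro s hs
    apply Real.smoothTransition.one_of_one_le
    have : 1 ≤ s ^ 2 := by rw [← sq_abs]; nlinarith
    linarith
  have hsupp : ∀ s, deriv ψ s ≠ 0 → 1 / 2 ≤ |s| ∧ |s| ≤ 1 := by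
    intro s hs
    constructor
    · by_contra! h
      apply hs
      have : ψ =ᶠ[nhds s] fun _ => 0 := by
        filter_upwards [(isOpen_lt continuous_abs continuous_const).mem_nhds h] with t ht
        exact h0 t ht
      rw [this.deriv_eq]; simp
    · by_contra! h
      apply hs
      have : ψ =ᶠ[nhds s] fun _ => 1 := by
        filter_upwards [(isOpen_lt continuous_const continuous_abs).mem_nhds h] with t ht
        exact h1 t (le_of_lt ht)
      rw [this.deriv_eq]; simp
  obtain ⟨L, hL⟩ := (isCompact_Icc (a := (-1 : ℝ)) (b := 1)).exists_bound_of_continuousOn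
    (hc.continuous_deriv le_rfl).continuousOn
  refine ⟨ψ, max L 1, hc, by positivity, fun s => ?_, h0, fun s hs => h1 s hs.ge, hsupp⟩
  by_cases hs : deriv ψ s = 0
  · simp [hs]
  · exact (hL s (abs_le.1 (hsupp s hs).2)).trans (le_max_left _ _)

variable {E : Type*} [NormedAddCommGroup E] [NormedSpace ℝ E]

/-- If `|v|` drops from `|v x|` to less than half of it between `x` and `x + h`, then the part of
the segment where `|v|` is comparable to `|v x|` already carries gradient energy at least
`v(x)² / (L ‖h‖²)`. Truncating by `ψ (v / |v x|)` is what localizes the integral to that part. -/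
lemma segment_bound : ∃ L : ℝ, 0 < L ∧ ∀ v : E → ℝ, ContDiff ℝ 1 v → ∀ x h : E,
    v x ≠ 0 → |v (x + h)| < |v x| / 2 →
    1 ≤ ∫⁻ t in Set.Ioc (0 : ℝ) 1, {t : ℝ | |v x| / 2 ≤ |v (x + t • h)| ∧
        |v (x + t • h)| ≤ |v x|}.indicator
        (fun t => ENNReal.ofReal (L * ‖h‖ ^ 2 * ‖fderiv ℝ v (x + t • h)‖ ^ 2 / v x ^ 2)) t := by
  obtain ⟨ψ, L, hc, hL, hb, h0, h1, hs⟩ := exists_cutoff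
  refine ⟨L ^ 2, by positivity, fun v hv x h ha hlt => ?_⟩
  set a := |v x| with hadef
  have hapos : 0 < a := abs_pos.2 ha
  set g : ℝ → ℝ := fun t => v (x + t • h) / a with hg
  set f' : ℝ → ℝ := fun t => deriv ψ (g t) * (fderiv ℝ v (x + t • h) h / a) with hf'
  have hgd : ∀ t, HasDerivAt g (fderiv ℝ v (x + t • h) h / a) t := by
    intro t
    have h1 : HasDerivAt (fun t : ℝ => x + t • h) h t := by
      simpa using ((hasDerivAt_id t).smul_const h).const_add x
    exact (((hv.differentiable one_ne_zero (x + t • h)).hasFDerivAt).comp_hasDerivAt t h1).div_const a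
  have hfd : ∀ t, HasDerivAt (fun t => ψ (g t)) (f' t) t := fun t =>
    ((hc.differentiable one_ne_zero (g t)).hasDerivAt).comp t (hgd t)
  have hgc : Continuous g := continuous_iff_continuousAt.2 fun t => (hgd t).continuousAt
  have hfc : Continuous f' := by
    have h2 := hc.continuous_deriv le_rfl
    have h3 := hv.continuous_fderiv one_ne_zero
    fun_prop
  have hint : ∫ t in (0 : ℝ)..1, f' t = -1 := by
    rw [intervalIntegral.integral_eq_sub_of_hasDerivAt (fun t _ => hfd t)
      (hfc.intervalIntegrable _ _)]
    have e1 : ψ (g 1) = 0 := h0 _ (by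
      simp only [hg, one_smul, abs_div, abs_of_pos hapos]
      rw [div_lt_iff₀ hapos]; linarith)
    have e0 : ψ (g 0) = 1 := h1 _ (by
      simp only [hg, zero_smul, add_zero, abs_div, abs_of_pos hapos]
      exact div_self hapos.ne')
    rw [e1, e0]; norm_num
  -- Cauchy–Schwarz for `∫ f' = -1`, through the pointwise inequality `f'² ≥ -2 f' - 1`.
  have hsq : (1 : ℝ) ≤ ∫ t in (0 : ℝ)..1, f' t ^ 2 := by
    have : ∫ t in (0 : ℝ)..1, (-2 * f' t - 1) ≤ ∫ t in (0 : ℝ)..1, f' t ^ 2 := by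
      apply intervalIntegral.integral_mono_on zero_le_one
      · exact (by fun_prop : Continuous fun t => -2 * f' t - 1).intervalIntegrable _ _
      · exact (by fun_prop : Continuous fun t => f' t ^ 2).intervalIntegrable _ _
      · intro t _
        nlinarith [sq_nonneg (f' t + 1)]
    rw [intervalIntegral.integral_sub ((hfc.const_mul _).intervalIntegrable _ _)
      (by simp), intervalIntegral.integral_const_mul, hint] at this
    norm_num at this
    exact this
  rw [intervalIntegral.integral_of_le zero_le_one] at hsq
  calc (1 : ℝ≥0∞) = ENNReal.ofReal 1 := by simp
    _ ≤ ENNReal.ofReal (∫ t in Set.Ioc (0 : ℝ) 1, f' t ^ 2) := ENNReal.ofReal_le_ofReal hsq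
    _ = ∫⁻ t in Set.Ioc (0 : ℝ) 1, ENNReal.ofReal (f' t ^ 2) := by
      apply ofReal_integral_eq_lintegral_ofReal
      · exact (by fun_prop : Continuous fun t => f' t ^ 2).integrableOn_Ioc
      · exact Filter.Eventually.of_forall fun t => sq_nonneg _
    _ ≤ _ := by
      refine lintegral_mono fun t => ?_
      by_cases hz : deriv ψ (g t) = 0
      · simp [hf', hz]
      · have hmem := hs _ hz
        simp only [hg, abs_div, abs_of_pos hapos] at hmem
        rw [le_div_iff₀ hapos, div_le_iff₀ hapos] at hmem
        have hm : t ∈ {t : ℝ | a / 2 ≤ |v (x + t • h)| ∧ |v (x + t • h)| ≤ a} :=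
          ⟨by linarith, by linarith⟩
        rw [Set.indicator_of_mem hm]
        apply ENNReal.ofReal_le_ofReal
        have hb' : |f' t| ≤ L * (‖fderiv ℝ v (x + t • h)‖ * ‖h‖ / a) := by
          simp only [hf', abs_mul, abs_div, abs_of_pos hapos]
          gcongr
          · exact hb _
          · exact (fderiv ℝ v (x + t • h)).le_opNorm h
        calc f' t ^ 2 = |f' t| ^ 2 := (sq_abs _).symm
          _ ≤ (L * (‖fderiv ℝ v (x + t • h)‖ * ‖h‖ / a)) ^ 2 := by gcongr
          _ = _ := by rw [← sq_abs (v x), ← hadef]; ring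

/-- The density `|v(z)|^(2+2α) ‖∇v(z)‖²`, as a function of `q = (z, h)`, restricted to
`‖h‖ < |v(z)|^(-α)`. Where `v z = 0` the real power `0 ^ (-α)` is `0` for `α ≠ 0`, so
the restriction excludes such points. -/
noncomputable def gradDensity (α : ℝ) (v : E → ℝ) (q : E × E) : ℝ≥0∞ :=
  {q : E × E | ‖q.2‖ < |v q.1| ^ (-α)}.indicator
    (fun q => ENNReal.ofReal (|v q.1| ^ (2 + 2 * α) * ‖fderiv ℝ v q.1‖ ^ 2)) q

lemma measurable_gradDensity [MeasurableSpace E] [BorelSpace E] [SecondCountableTopology E]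
    (α : ℝ) {v : E → ℝ}
    (hv : ContDiff ℝ 1 v) : Measurable (gradDensity α v) := by
  have h3 := (hv.continuous_fderiv one_ne_zero).norm.measurable
  have h4 := hv.continuous.measurable
  have h5 : Measurable fun q : E × E => |v q.1| := (h4.comp measurable_fst).abs
  unfold gradDensity
  refine Measurable.indicator ?_ (measurableSet_lt measurable_snd.norm (h5.pow_const _))
  exact ((h5.pow_const _).mul ((h3.comp measurable_fst).pow_const 2)).ennreal_ofReal

/-- At a displacement `h` shorter than the natural length `|v x|^(-α)`, either `|v (x + h)|` is at
least `|v x| / 2` and the Hartree integrand is large, or `|v|` drops along the segment and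
`segment_bound` makes the gradient term large. -/
lemma pointwise_bound {α : ℝ} (hα : 0 < α) : ∃ K : ℝ, 0 < K ∧ ∀ v : E → ℝ, ContDiff ℝ 1 v →
    ∀ x h : E, h ≠ 0 → v x ≠ 0 → ‖h‖ < |v x| ^ (-α) →
    ENNReal.ofReal (|v x| ^ (4 + 4 * α)) ≤
      ENNReal.ofReal 4 * (ENNReal.ofReal (v x ^ 2) * ENNReal.ofReal (v (x + h) ^ 2) *
        ENNReal.ofReal (‖h‖ ^ (-4 : ℝ))) +
      ENNReal.ofReal K * ∫⁻ t in Set.Ioc (0 : ℝ) 1, gradDensity α v (x + t • h, h) := by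
  obtain ⟨L, hL, hseg⟩ := segment_bound (E := E)
  refine ⟨L * 2 ^ (2 + 4 * α), by positivity, fun v hv x h hh hx hr => ?_⟩
  have ha : 0 < |v x| := abs_pos.2 hx
  have hh' : 0 < ‖h‖ := norm_pos_iff.2 hh
  rcases lt_or_ge |v (x + h)| (|v x| / 2) with hlt | hge
  · refine le_trans ?_ le_add_self
    rw [← lintegral_const_mul' _ _ ENNReal.ofReal_ne_top]
    calc ENNReal.ofReal (|v x| ^ (4 + 4 * α))
        ≤ ENNReal.ofReal (|v x| ^ (4 + 4 * α)) * _ := le_mul_of_one_le_right' (hseg v hv x h hx hlt)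
      _ ≤ _ := by
        rw [← lintegral_const_mul' _ _ ENNReal.ofReal_ne_top]
        refine lintegral_mono fun t => ?_
        by_cases ht : |v x| / 2 ≤ |v (x + t • h)| ∧ |v (x + t • h)| ≤ |v x|
        · rw [Set.indicator_of_mem (by exact ht)]
          obtain ⟨ht1, ht2⟩ := ht
          set b := |v (x + t • h)| with hb
          have hbpos : 0 < b := by linarith
          have hhb : ‖h‖ < b ^ (-α) :=
            hr.trans_le (Real.rpow_le_rpow_of_nonpos hbpos ht2 (by linarith))
          rw [gradDensity, Set.indicator_of_mem (by exact hhb),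
            ← ENNReal.ofReal_mul (by positivity), ← ENNReal.ofReal_mul (by positivity)]
          apply ENNReal.ofReal_le_ofReal
          simp only [← hb]
          have e1 : |v x| ^ (4 + 4 * α) = |v x| ^ (2 + 4 * α) * v x ^ 2 := by
            rw [← sq_abs (v x), ← Real.rpow_natCast, ← Real.rpow_add ha]
            congr 1; push_cast; ring
          have e2 : |v x| ^ (2 + 4 * α) ≤ 2 ^ (2 + 4 * α) * b ^ (2 + 4 * α) := by
            rw [← Real.mul_rpow (by norm_num) hbpos.le]
            exact Real.rpow_le_rpow ha.le (by linarith) (by linarith)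
          have e3 : b ^ (2 + 4 * α) * (b ^ (-α)) ^ 2 = b ^ (2 + 2 * α) := by
            rw [← Real.rpow_natCast, ← Real.rpow_mul hbpos.le, ← Real.rpow_add hbpos]
            congr 1; push_cast; ring
          have hx2 : v x ^ 2 ≠ 0 := pow_ne_zero _ hx
          calc |v x| ^ (4 + 4 * α) * (L * ‖h‖ ^ 2 * ‖fderiv ℝ v (x + t • h)‖ ^ 2 / v x ^ 2)
              = L * (|v x| ^ (2 + 4 * α) * ‖h‖ ^ 2) * ‖fderiv ℝ v (x + t • h)‖ ^ 2 := by
                rw [e1]; field_simp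
            _ ≤ L * ((2 ^ (2 + 4 * α) * b ^ (2 + 4 * α)) * (b ^ (-α)) ^ 2) *
                  ‖fderiv ℝ v (x + t • h)‖ ^ 2 := by gcongr
            _ = _ := by rw [mul_assoc (2 ^ (2 + 4 * α)), e3]; ring
        · rw [Set.indicator_of_notMem (by exact ht)]
          simp
  · refine le_trans ?_ le_self_add
    rw [← ENNReal.ofReal_mul (by positivity), ← ENNReal.ofReal_mul (by positivity),
      ← ENNReal.ofReal_mul (by positivity)]
    apply ENNReal.ofReal_le_ofReal
    have e1 : (|v x| ^ (-α)) ^ (-4 : ℝ) ≤ ‖h‖ ^ (-4 : ℝ) :=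
      Real.rpow_le_rpow_of_nonpos hh' hr.le (by norm_num)
    have e2 : v x ^ 2 ≤ 4 * v (x + h) ^ 2 := by
      rw [← sq_abs (v x), ← sq_abs (v (x + h))]
      nlinarith
    have e3 : |v x| ^ (4 + 4 * α) = (v x ^ 2 * v x ^ 2) * (|v x| ^ (-α)) ^ (-4 : ℝ) := by
      rw [← sq_abs (v x), ← pow_add, ← Real.rpow_natCast, ← Real.rpow_mul ha.le,
        ← Real.rpow_add ha]
      congr 1; push_cast; ring
    rw [e3]
    calc _ ≤ (v x ^ 2 * (4 * v (x + h) ^ 2)) * ‖h‖ ^ (-4 : ℝ) := by gcongr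
      _ = _ := by ring

lemma volume_ball_rpow {d : ℕ} {α : ℝ} (hd : α * d = 2 + 2 * α) {a : ℝ} (ha : 0 < a) :
    volume (Metric.ball (0 : EuclideanSpace ℝ (Fin d)) (a ^ (-α))) =
      ENNReal.ofReal (a ^ (-(2 + 2 * α))) *
        volume (Metric.ball (0 : EuclideanSpace ℝ (Fin d)) 1) := by
  rw [Measure.addHaar_ball_of_pos _ _ (by positivity), finrank_euclideanSpace_fin,
    ← Real.rpow_natCast, ← Real.rpow_mul ha.le, ← hd, neg_mul]

/-- After Tonelli, translating `x` by `t • h` removes `t`, and the integral over `‖h‖ < |v z|^(-α)`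
produces a ball volume proportional to `|v z|^(-(2+2α))`, which cancels the weight. -/
lemma lintegral_gradDensity_le {d : ℕ} {α : ℝ} (hα : 0 < α) (hd : α * d = 2 + 2 * α)
    {v : EuclideanSpace ℝ (Fin d) → ℝ} (hv : ContDiff ℝ 1 v) :
    ∫⁻ x, ∫⁻ h, ∫⁻ t in Set.Ioc (0 : ℝ) 1, gradDensity α v (x + t • h, h) ≤
      volume (Metric.ball (0 : EuclideanSpace ℝ (Fin d)) 1) *
        ∫⁻ x, ENNReal.ofReal (‖fderiv ℝ v x‖ ^ 2) := by
  have hm := measurable_gradDensity α hv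
  calc ∫⁻ x, ∫⁻ h, ∫⁻ t in Set.Ioc (0 : ℝ) 1, gradDensity α v (x + t • h, h)
      = ∫⁻ h, ∫⁻ x, ∫⁻ t in Set.Ioc (0 : ℝ) 1, gradDensity α v (x + t • h, h) := by
        apply lintegral_lintegral_swap
        refine Measurable.aemeasurable ?_
        apply Measurable.lintegral_prod_right'
          (f := fun q : (EuclideanSpace ℝ (Fin d) × EuclideanSpace ℝ (Fin d)) × ℝ =>
            gradDensity α v (q.1.1 + q.2 • q.1.2, q.1.2))
        exact hm.comp (by fun_prop)
    _ = ∫⁻ h, ∫⁻ t in Set.Ioc (0 : ℝ) 1, ∫⁻ x, gradDensity α v (x + t • h, h) := by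
        refine lintegral_congr fun h => ?_
        apply lintegral_lintegral_swap
        exact (hm.comp (by fun_prop :
          Measurable fun q : EuclideanSpace ℝ (Fin d) × ℝ => (q.1 + q.2 • h, h))).aemeasurable
    _ = ∫⁻ h, ∫⁻ x, gradDensity α v (x, h) := by
        refine lintegral_congr fun h => ?_
        have : ∀ t : ℝ, ∫⁻ x, gradDensity α v (x + t • h, h) = ∫⁻ x, gradDensity α v (x, h) :=
          fun t => lintegral_add_right_eq_self (fun x => gradDensity α v (x, h)) (t • h)
        simp [this]
    _ = ∫⁻ x, ∫⁻ h, gradDensity α v (x, h) := by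
        apply lintegral_lintegral_swap
        exact (hm.comp measurable_swap).aemeasurable
    _ ≤ ∫⁻ x, volume (Metric.ball (0 : EuclideanSpace ℝ (Fin d)) 1) *
          ENNReal.ofReal (‖fderiv ℝ v x‖ ^ 2) := by
        refine lintegral_mono fun x => ?_
        have e : ∀ h, gradDensity α v (x, h) =
            (Metric.ball (0 : EuclideanSpace ℝ (Fin d)) (|v x| ^ (-α))).indicator
              (fun _ => ENNReal.ofReal (|v x| ^ (2 + 2 * α) * ‖fderiv ℝ v x‖ ^ 2)) h := by
          intro h
          unfold gradDensity
          by_cases hh : ‖h‖ < |v x| ^ (-α)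
          · rw [Set.indicator_of_mem (by exact hh),
              Set.indicator_of_mem (mem_ball_zero_iff.2 hh)]
          · rw [Set.indicator_of_notMem (by exact hh),
              Set.indicator_of_notMem (mt mem_ball_zero_iff.1 hh)]
        simp only [e]
        rw [lintegral_indicator measurableSet_ball, setLIntegral_const]
        rcases eq_or_ne (v x) 0 with h0 | h0
        · rw [h0, abs_zero, Real.zero_rpow (by linarith : 2 + 2 * α ≠ 0)]
          simp
        · have ha := abs_pos.2 h0
          rw [volume_ball_rpow hd ha, ← mul_assoc, ← ENNReal.ofReal_mul (by positivity),
            mul_comm]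
          apply le_of_eq
          congr 2
          rw [mul_right_comm, ← Real.rpow_add ha]
          simp
    _ = _ := lintegral_const_mul' _ _ measure_ball_lt_top.ne

/-- The additive form of the estimate, `∫ |v|^(2+2α) ≤ K (‖∇v‖² + H(v))`. With `α = 2/(d-2)` the
exponent `2 + 2α` is `2d/(d-2)`. -/
lemma lintegral_rpow_le {d : ℕ} (hd0 : 0 < d) {α : ℝ} (hα : 0 < α) (hd : α * d = 2 + 2 * α) :
    ∃ K : ℝ, 0 < K ∧ ∀ v : EuclideanSpace ℝ (Fin d) → ℝ, ContDiff ℝ 1 v →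
      ∫⁻ x, ENNReal.ofReal (|v x| ^ (2 + 2 * α)) ≤ ENNReal.ofReal K *
        ((∫⁻ x, ENNReal.ofReal (‖fderiv ℝ v x‖ ^ 2)) +
          ∫⁻ x, ∫⁻ y, ENNReal.ofReal ((v x) ^ 2) * ENNReal.ofReal ((v y) ^ 2) *
                    ENNReal.ofReal (‖x - y‖ ^ (-4 : ℝ))) := by
  obtain ⟨K, hK, hpt⟩ := pointwise_bound (E := EuclideanSpace ℝ (Fin d)) hα
  set ω := volume (Metric.ball (0 : EuclideanSpace ℝ (Fin d)) 1) with hω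
  have hω0 : ω ≠ 0 := (Metric.measure_ball_pos _ _ one_pos).ne'
  have hωt : ω ≠ ∞ := measure_ball_lt_top.ne
  have hωr : 0 < ω.toReal := ENNReal.toReal_pos hω0 hωt
  refine ⟨4 / ω.toReal + K, by positivity, fun v hv => ?_⟩
  set G := ∫⁻ x, ENNReal.ofReal (‖fderiv ℝ v x‖ ^ 2)
  set H := ∫⁻ x, ∫⁻ y, ENNReal.ofReal ((v x) ^ 2) * ENNReal.ofReal ((v y) ^ 2) *
                    ENNReal.ofReal (‖x - y‖ ^ (-4 : ℝ)) with hH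
  have : Nonempty (Fin d) := ⟨⟨0, hd0⟩⟩
  have hvm := hv.continuous.measurable
  have hm := measurable_gradDensity α hv
  have hF : Measurable fun q : EuclideanSpace ℝ (Fin d) × EuclideanSpace ℝ (Fin d) =>
      ENNReal.ofReal 4 * (ENNReal.ofReal (v q.1 ^ 2) * ENNReal.ofReal (v (q.1 + q.2) ^ 2) *
        ENNReal.ofReal (‖q.2‖ ^ (-4 : ℝ))) := by fun_prop
  have key : ω * ∫⁻ x, ENNReal.ofReal (|v x| ^ (2 + 2 * α)) ≤
      ENNReal.ofReal 4 * H + ENNReal.ofReal K * (ω * G) := by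
    calc ω * ∫⁻ x, ENNReal.ofReal (|v x| ^ (2 + 2 * α))
        = ∫⁻ x, ω * ENNReal.ofReal (|v x| ^ (2 + 2 * α)) := (lintegral_const_mul' _ _ hωt).symm
      _ ≤ ∫⁻ x, ((∫⁻ h, ENNReal.ofReal 4 *
            (ENNReal.ofReal (v x ^ 2) * ENNReal.ofReal (v (x + h) ^ 2) *
              ENNReal.ofReal (‖h‖ ^ (-4 : ℝ)))) +
            ∫⁻ h, ENNReal.ofReal K * ∫⁻ t in Set.Ioc (0 : ℝ) 1,
              gradDensity α v (x + t • h, h)) := by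
        refine lintegral_mono fun x => ?_
        rcases eq_or_ne (v x) 0 with h0 | h0
        · simp [h0, Real.zero_rpow (by linarith : 2 + 2 * α ≠ 0)]
        have ha := abs_pos.2 h0
        rw [← lintegral_add_left (by fun_prop)]
        calc ω * ENNReal.ofReal (|v x| ^ (2 + 2 * α))
            = ENNReal.ofReal (|v x| ^ (4 + 4 * α)) *
                volume (Metric.ball (0 : EuclideanSpace ℝ (Fin d)) (|v x| ^ (-α))) := by
              rw [volume_ball_rpow hd ha, ← mul_assoc, ← ENNReal.ofReal_mul (by positivity),
                ← Real.rpow_add ha, mul_comm]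
              congr 3; ring
          _ = ∫⁻ h in Metric.ball (0 : EuclideanSpace ℝ (Fin d)) (|v x| ^ (-α)),
                ENNReal.ofReal (|v x| ^ (4 + 4 * α)) := by rw [setLIntegral_const]
          _ ≤ _ := by
            refine le_trans ?_ (setLIntegral_le_lintegral
              (Metric.ball (0 : EuclideanSpace ℝ (Fin d)) (|v x| ^ (-α))) _)
            refine lintegral_mono_ae ?_
            -- The origin is removed because `0 ^ (-4) = 0` in `ℝ`.
            have hne : ∀ᵐ h : EuclideanSpace ℝ (Fin d) ∂volume, h ≠ 0 := by
              simp [ae_iff]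
            filter_upwards [ae_restrict_mem measurableSet_ball, ae_restrict_of_ae hne] with h hb hh
            exact hpt v hv x h hh h0 (by simpa using hb)
      _ = (∫⁻ x, ∫⁻ h, ENNReal.ofReal 4 *
            (ENNReal.ofReal (v x ^ 2) * ENNReal.ofReal (v (x + h) ^ 2) *
              ENNReal.ofReal (‖h‖ ^ (-4 : ℝ)))) +
            ∫⁻ x, ∫⁻ h, ENNReal.ofReal K * ∫⁻ t in Set.Ioc (0 : ℝ) 1,
              gradDensity α v (x + t • h, h) :=
          lintegral_add_left hF.lintegral_prod_right' _
      _ ≤ _ := by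
        simp_rw [lintegral_const_mul' _ _ (ENNReal.ofReal_ne_top (r := 4)),
          lintegral_const_mul' _ _ (ENNReal.ofReal_ne_top (r := K))]
        gcongr
        · refine lintegral_mono fun x => ?_
          refine le_of_eq (Eq.trans ?_ (lintegral_add_left_eq_self _ x))
          simp
        · exact lintegral_gradDensity_le hα hd hv
  have hωe : ω = ENNReal.ofReal ω.toReal := (ENNReal.ofReal_toReal hωt).symm
  rw [← ENNReal.mul_le_mul_iff_right hω0 hωt]
  refine key.trans ?_
  have e : ω * (ENNReal.ofReal (4 / ω.toReal + K) * (G + H)) =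
      (ENNReal.ofReal 4 + ENNReal.ofReal K * ω) * (G + H) := by
    rw [← mul_assoc]
    congr 1
    nth_rewrite 1 [hωe]
    nth_rewrite 3 [hωe]
    rw [← ENNReal.ofReal_mul hωr.le, ← ENNReal.ofReal_mul hK.le,
      ← ENNReal.ofReal_add (by norm_num) (by positivity)]
    congr 1
    field_simp
  rw [e, add_mul, ← mul_assoc]
  gcongr
  · exact le_add_self
  · exact le_self_add

/-- For `d ≥ 5`, there is `C > 0` such that every smooth compactly supported
`v : ℝ^d → ℝ` satisfies
`‖v‖_{L^{2d/(d-2)}} ≤ C (‖∇v‖²_{L²} + ∬ v(x)² v(y)² |x-y|^{-4} dx dy)^{(d-2)/(2d)}`. -/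
theorem Lp_norm_le_energy_pow (d : ℕ) (hd : 5 ≤ d) :
    ∃ C : ℝ, 0 < C ∧
      ∀ v : EuclideanSpace ℝ (Fin d) → ℝ, ContDiff ℝ (⊤ : ℕ∞) v → HasCompactSupport v →
        eLpNorm v (ENNReal.ofReal (2 * d / (d - 2))) volume
          ≤ ENNReal.ofReal C *
              (eLpNorm (fun x => ‖fderiv ℝ v x‖) 2 volume ^ 2
                + ∫⁻ x, ∫⁻ y, ENNReal.ofReal ((v x) ^ 2) * ENNReal.ofReal ((v y) ^ 2) *
                    ENNReal.ofReal (‖x - y‖ ^ (-4 : ℝ)))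
                ^ (((d : ℝ) - 2) / (2 * d)) := by
  have hd' : (5 : ℝ) ≤ d := by exact_mod_cast hd
  have hd2 : (0 : ℝ) < d - 2 := by linarith
  have hα : (0 : ℝ) < 2 / (d - 2) := by positivity
  have hp : (2 * d / (d - 2) : ℝ) = 2 + 2 * (2 / (d - 2)) := by field_simp; ring
  have hppos : (0 : ℝ) < 2 * d / (d - 2) := by positivity
  obtain ⟨K, hK, hmain⟩ := lintegral_rpow_le (d := d) (by omega) hα
    (by rw [← hp]; ring)
  refine ⟨K ^ (((d : ℝ) - 2) / (2 * d)), by positivity, fun v hv _ => ?_⟩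
  have hG : eLpNorm (fun x => ‖fderiv ℝ v x‖) 2 volume ^ 2 =
      ∫⁻ x, ENNReal.ofReal (‖fderiv ℝ v x‖ ^ 2) := by
    rw [eLpNorm_eq_lintegral_rpow_enorm_toReal (by norm_num) (by norm_num), ← ENNReal.rpow_natCast,
      ← ENNReal.rpow_mul]
    norm_num [ENNReal.ofReal_pow (norm_nonneg _), ofReal_norm]
  rw [hG, ← ENNReal.ofReal_rpow_of_pos hK, ← ENNReal.mul_rpow_of_nonneg _ _ (by positivity),
    eLpNorm_eq_lintegral_rpow_enorm_toReal (by simpa using hppos) ENNReal.ofReal_ne_top,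
    ENNReal.toReal_ofReal hppos.le, one_div_div]
  gcongr
  refine le_trans (le_of_eq ?_) (hmain v (hv.of_le (by simp)))
  refine lintegral_congr fun x => ?_
  rw [← hp, ← ENNReal.ofReal_rpow_of_nonneg (abs_nonneg _) hppos.le, ← Real.norm_eq_abs, ofReal_norm]
end
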